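/- Let k be a field of characteristic p > 0 with at least 3 elements, K* = k(x,y), u = x^p(1+y), v = y^p + x, K = k(u,v), B = k[x,y]_{(x,y)}, A = k[u,v]_{(u,v)}. Then there exists an additive valuation ν* : (K*)^× → ℝ, trivial on k^× (ν*(c) = 0 for all nonzero c ∈ k), with ν*(x) = 1, whose value group ν*((K*)^×) equals ℤ[1/p] = { m/p^j : m ∈ ℤ, j ∈ ℕ }, whose valuation ring V* = {0} ∪ {f ∈ K* : ν*(f) ≥ 0} dominates B and has residue field V*/m_{V*} = k, such that the restriction of ν* to K satisfies ν*(u) = p and ν*(K^×) = ℤ[1/p], and such that there do NOT exist regular algebraic local rings A' of K over k and B' of K* over k with V* dominating B', B' dominating A', A' dominating A, B' dominating B, and A' → B' a monomial extension. -/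

import Mathlib

/-! Counterexample to local and weak local monomialization in positive
characteristic (Cutkosky).  Statement 2: the valuation `ν*` of the
counterexample, with value group `ℤ[1/p]` and residue field `k`. -/

open MvPolynomial

section Defs

variable {F : Type} [Field F]

/-- `V` is a valuation ring of the field `F`: a proper subring such that for
every nonzero `f ∈ F`, either `f ∈ V` or `f⁻¹ ∈ V`. -/
def IsValuationSubring (V : Subring F) : Prop :=
  V ≠ ⊤ ∧ ∀ z : F, z ≠ 0 → z ∈ V ∨ z⁻¹ ∈ V

/-- `S` dominates `R`: `R ⊆ S` and `m_S ∩ R = m_R`, i.e. an element of `R` is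
a non-unit of `S` if and only if it is a non-unit of `R`. -/
def Dominates (S R : Subring F) : Prop :=
  ∃ _ : R ≤ S, ∀ (z : F) (hR : z ∈ R) (hS : z ∈ S),
    (¬ IsUnit (⟨z, hS⟩ : S) ↔ ¬ IsUnit (⟨z, hR⟩ : R))

/-- `A` is a regular local ring of Krull dimension `n`: a Noetherian local
ring whose maximal ideal (= the ideal of non-units) is generated by
`n = dim A` elements (a regular system of parameters). -/
def IsRegularLocalOfDim (A : Subring F) (n : ℕ) : Prop :=
  IsNoetherianRing A ∧ IsLocalRing A ∧ ringKrullDim A = n ∧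
  ∃ s : Fin n → A, ∀ z : A, z ∈ Ideal.span (Set.range s) ↔ ¬ IsUnit z

/-- `A → B` is a monomial extension: `A` and `B` are regular local rings of a
common dimension `n` and there are regular systems of parameters
`x₁, …, xₙ` of `A` and `y₁, …, yₙ` of `B`, units `δ₁, …, δₙ` of `B` and an
`n × n` matrix `(a_{ij})` of natural numbers with nonzero determinant such
that `xᵢ = δᵢ ∏_j y_j^(a_{ij})` for all `i`. -/
def IsMonomialExtension (A B : Subring F) : Prop :=
  ∃ (n : ℕ) (hAB : A ≤ B),
    IsRegularLocalOfDim A n ∧ IsRegularLocalOfDim B n ∧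
    ∃ (xs : Fin n → A) (ys : Fin n → B) (δ : Fin n → B)
      (M : Matrix (Fin n) (Fin n) ℕ),
      (∀ z : A, z ∈ Ideal.span (Set.range xs) ↔ ¬ IsUnit z) ∧
      (∀ z : B, z ∈ Ideal.span (Set.range ys) ↔ ¬ IsUnit z) ∧
      (∀ i, IsUnit (δ i)) ∧
      (M.map ((↑·) : ℕ → ℚ)).det ≠ 0 ∧
      (∀ i, Subring.inclusion hAB (xs i) = δ i * ∏ j, (ys j) ^ (M i j))

variable (k : Type) [Field k] [Algebra k F]

/-- `A` is an algebraic local ring of `L` over `k`: a local domain with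
quotient field `L` which is essentially of finite type over `k`, i.e. a
localization of a finitely generated `k`-subalgebra `C` of `L` at a prime
ideal (necessarily `C ∩ m_A`): every element of `A` can be written as `a/b`
with `a, b ∈ C` and `b` a unit of `A`. -/
def IsAlgebraicLocalRingOf (L : IntermediateField k F) (A : Subring F) : Prop :=
  (A : Set F) ⊆ L ∧
  IsLocalRing A ∧
  (∀ z ∈ L, ∃ a ∈ A, ∃ b ∈ A, b ≠ 0 ∧ z * b = a) ∧
  ∃ C : Subalgebra k F, C.FG ∧ (C : Set F) ⊆ A ∧
    ∀ z ∈ A, ∃ a ∈ C, ∃ b ∈ C, (∃ b' ∈ A, b * b' = 1) ∧ z * b = a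

/-- The image in `F` of the localization of `k[x,y]` at the maximal ideal
`(x,y)` under a ring homomorphism `φ : k[x,y] →+* F`: the set of all
`z ∈ F` of the form `φ(f)/φ(g)` with `f, g ∈ k[x,y]` and `g(0,0) ≠ 0`.
For `φ` the canonical map into `F = k(x,y)` this is `k[x,y]_(x,y)`, and for
`φ = evaluation at (u,v)` (with `u, v` algebraically independent) it is
`k[u,v]_(u,v)`. -/
def localSubring {k : Type} [Field k] (φ : MvPolynomial (Fin 2) k →+* F) :
    Subring F where
  carrier := {z | ∃ f g : MvPolynomial (Fin 2) k,
    constantCoeff g ≠ 0 ∧ z * φ g = φ f}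
  zero_mem' := ⟨0, 1, by simp⟩
  one_mem' := ⟨1, 1, by simp⟩
  add_mem' := by
    rintro z₁ z₂ ⟨f₁, g₁, hg₁, h₁⟩ ⟨f₂, g₂, hg₂, h₂⟩
    refine ⟨f₁ * g₂ + f₂ * g₁, g₁ * g₂, by simp [mul_ne_zero hg₁ hg₂], ?_⟩
    rw [map_mul, map_add, map_mul, map_mul, ← h₁, ← h₂]
    ring
  mul_mem' := by
    rintro z₁ z₂ ⟨f₁, g₁, hg₁, h₁⟩ ⟨f₂, g₂, hg₂, h₂⟩
    refine ⟨f₁ * f₂, g₁ * g₂, by simp [mul_ne_zero hg₁ hg₂], ?_⟩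
    rw [map_mul, map_mul, ← h₁, ← h₂]
    ring
  neg_mem' := by
    rintro z ⟨f, g, hg, h⟩
    exact ⟨-f, g, hg, by rw [map_neg, ← h]; ring⟩

end Defs

section RegularLocalDimTwo

variable {S : Type*} [CommRing S] [IsLocalRing S] [IsNoetherianRing S]

open IsLocalRing

theorem not_dvd_pow_of_maximalIdeal_eq_span_pair (hdim : ringKrullDim S = 2) {c d : S}
    (hcd : maximalIdeal S = Ideal.span {c, d}) (N : ℕ) : ¬ c ∣ d ^ N := by
  intro h
  have hc : c ∈ maximalIdeal S := hcd ▸ Ideal.subset_span (by simp)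
  have hmin : maximalIdeal S ∈ (Ideal.span {c}).minimalPrimes := by
    refine ⟨⟨inferInstance, by simpa [Ideal.span_le] using hc⟩, ?_⟩
    rintro q ⟨hq, hcq⟩ -
    rw [hcd, Ideal.span_le]
    have hc' : c ∈ q := hcq (Ideal.mem_span_singleton_self c)
    have hd : d ∈ q := hq.mem_of_pow_mem N (Ideal.mem_of_dvd q h hc')
    rintro z (rfl | rfl) <;> assumption
  have h1 := Ideal.height_le_one_of_isPrincipal_of_mem_minimalPrimes _ _ hmin
  have h2 := IsLocalRing.maximalIdeal_height_eq_ringKrullDim (R := S)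
  rw [hdim] at h2
  have h3 : ((maximalIdeal S).height : WithBot ℕ∞) ≤ (1 : ℕ∞) := by exact_mod_cast h1
  rw [h2] at h3
  exact absurd h3 (by decide)

theorem exists_eq_unit_mul_pow_add {c d : S} (hcd : maximalIdeal S = Ideal.span {c, d}) :
    ∀ z : S, ¬ c ∣ z → ∃ (ε h : S) (n : ℕ), IsUnit ε ∧ z = ε * d ^ n + c * h := by
  intro z
  induction hI : Ideal.span {c, z} using WellFoundedGT.induction generalizing z with
  | ind I ih =>
    subst hI
    intro hz
    by_cases hu : IsUnit z
    · exact ⟨z, 0, 0, hu, by simp⟩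
    have hzm : z ∈ Ideal.span {c, d} := hcd ▸ (mem_maximalIdeal z).2 hu
    obtain ⟨a, b, hab⟩ := Ideal.mem_span_pair.1 hzm
    have hd : ¬ IsUnit d := (mem_maximalIdeal d).1 (hcd ▸ Ideal.subset_span (by simp))
    have hb : ¬ c ∣ b := fun hb => hz (hab ▸ dvd_add (dvd_mul_left c a) (hb.mul_right d))
    have hlt : Ideal.span {c, z} < Ideal.span {c, b} := by
      refine lt_of_le_of_ne ?_ ?_
      · rw [Ideal.span_le]
        rintro t (rfl | rfl)
        · exact Ideal.subset_span (by simp)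
        · exact Ideal.mem_span_pair.2 ⟨a, d, by rw [← hab]; ring⟩
      · intro heq
        have : b ∈ Ideal.span {c, z} := heq ▸ Ideal.subset_span (by simp)
        obtain ⟨s, t, hst⟩ := Ideal.mem_span_pair.1 this
        have h1 : IsUnit (1 - d * t) := by
          by_contra hn
          have h2 : (1 : S) ∈ maximalIdeal S := by
            have := (maximalIdeal S).add_mem ((mem_maximalIdeal _).2 hn)
              ((maximalIdeal S).mul_mem_right t ((mem_maximalIdeal d).2 hd))
            simp at this
          exact (mem_maximalIdeal (1 : S)).1 h2 isUnit_one
        apply hz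
        rw [← h1.dvd_mul_left]
        exact ⟨a + s * d, by linear_combination -hab - d * hst⟩
    obtain ⟨ε, h, n, hε, hb'⟩ := ih _ hlt b rfl hb
    exact ⟨ε, a + h * d, n + 1, hε, by rw [← hab, hb']; ring⟩

theorem prime_of_maximalIdeal_eq_span_pair (hdim : ringKrullDim S = 2) {c d : S}
    (hcd : maximalIdeal S = Ideal.span {c, d}) : Prime c := by
  refine ⟨?_, ?_, ?_⟩
  · rintro rfl
    have hdc : maximalIdeal S = Ideal.span {d, 0} := by rw [hcd, Set.pair_comm]
    exact not_dvd_pow_of_maximalIdeal_eq_span_pair hdim hdc 1 (by simp)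
  · exact (mem_maximalIdeal c).1 (hcd ▸ Ideal.subset_span (by simp))
  · intro a b hab
    by_contra! hn
    obtain ⟨ε, h, n, hε, rfl⟩ := exists_eq_unit_mul_pow_add hcd a hn.1
    obtain ⟨ε', h', n', hε', rfl⟩ := exists_eq_unit_mul_pow_add hcd b hn.2
    apply not_dvd_pow_of_maximalIdeal_eq_span_pair hdim hcd (n + n')
    rw [← (hε.mul hε').dvd_mul_left]
    obtain ⟨t, ht⟩ := hab
    exact ⟨t - h * (ε' * d ^ n' + c * h') - ε * d ^ n * h', by
      linear_combination ht⟩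

variable [IsDomain S]

theorem uniqueFactorizationMonoid_of_maximalIdeal_eq_span_pair (hdim : ringKrullDim S = 2)
    {c d : S} (hcd : maximalIdeal S = Ideal.span {c, d}) : UniqueFactorizationMonoid S := by
  have hc := prime_of_maximalIdeal_eq_span_pair hdim hcd
  refine UniqueFactorizationMonoid.iff_exists_prime_mem_of_isPrime.2 fun P hP hPp => ?_
  by_cases hcP : c ∈ P
  · exact ⟨c, hcP, hc⟩
  -- a nonzero element of `P` whose order modulo `c` is minimal generates `P`
  have hex : ∃ n, ∃ g ∈ P, ∃ ε h : S, IsUnit ε ∧ g = ε * d ^ n + c * h := by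
    have : ∃ g ∈ P, ¬ c ∣ g := by
      by_contra! hn
      apply hP
      have hle : P ≤ maximalIdeal S • P := by
        intro g hg
        obtain ⟨t, rfl⟩ := hn g hg
        exact Ideal.mul_mem_mul (hcd ▸ Ideal.subset_span (by simp))
          ((hPp.mem_or_mem hg).resolve_left hcP)
      exact Submodule.eq_bot_of_le_smul_of_le_jacobson_bot _ P (IsNoetherian.noetherian P) hle
        (maximalIdeal_le_jacobson _)
    obtain ⟨g, hg, hcg⟩ := this
    obtain ⟨ε, h, n, hε, hz⟩ := exists_eq_unit_mul_pow_add hcd g hcg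
    exact ⟨n, g, hg, ε, h, hε, hz⟩
  classical
  obtain ⟨g, hg, ε, h, hε, hgeq⟩ := Nat.find_spec hex
  have hle : P ≤ Ideal.span {g} ⊔ maximalIdeal S • P := by
    intro f hf
    have key : ∃ s, c ∣ f - s * g := by
      by_cases hcf : c ∣ f
      · exact ⟨0, by simpa using hcf⟩
      obtain ⟨ε', h', n', hε', hz⟩ := exists_eq_unit_mul_pow_add hcd f hcf
      have hle : Nat.find hex ≤ n' := Nat.find_min' hex ⟨f, hf, ε', h', hε', hz⟩
      obtain ⟨j, hj⟩ := Nat.exists_eq_add_of_le hle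
      obtain ⟨η, hη⟩ := hε.exists_right_inv
      refine ⟨η * ε' * d ^ j, h' - η * ε' * d ^ j * h, ?_⟩
      rw [hz, hj, hgeq]
      generalize Nat.find hex = m
      rw [pow_add]
      linear_combination - ε' * d ^ j * d ^ m * hη
    obtain ⟨s, t, hst⟩ := key
    have hct : c * t ∈ P := hst ▸ P.sub_mem hf (P.mul_mem_left s hg)
    have ht : t ∈ P := (hPp.mem_or_mem hct).resolve_left hcP
    have : f = s * g + c * t := by linear_combination hst
    rw [this]
    exact Submodule.add_mem_sup (Ideal.mem_span_singleton'.2 ⟨s, rfl⟩)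
      (Ideal.mul_mem_mul (hcd ▸ Ideal.subset_span (by simp)) ht)
  have hPg : P = Ideal.span {g} := by
    refine le_antisymm ?_ (by simpa [Ideal.span_le] using hg)
    exact Submodule.le_of_le_smul_of_le_jacobson_bot (IsNoetherian.noetherian P)
      (maximalIdeal_le_jacobson _) hle
  have hg0 : g ≠ 0 := by
    rintro rfl
    exact hP (by simpa using hPg)
  exact ⟨g, hg, (Ideal.span_singleton_prime hg0).1 (hPg ▸ hPp)⟩

end RegularLocalDimTwo

section BirationalFactorization

theorem Ideal.mem_span_pair_pow {R : Type*} [CommRing R] {a b : R} {e : ℕ} {z : R}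
    (hz : z ∈ Ideal.span {a, b} ^ e) :
    ∃ q : ℕ → R, z = ∑ i ∈ Finset.range (e + 1), q i * (a ^ i * b ^ (e - i)) := by
  induction e generalizing z with
  | zero => exact ⟨fun _ => z, by simp⟩
  | succ e ih =>
    rw [pow_succ'] at hz
    refine Submodule.mul_induction_on hz ?_ ?_
    · intro m hm n hn
      obtain ⟨x, y, rfl⟩ := Ideal.mem_span_pair.1 hm
      obtain ⟨q, rfl⟩ := ih hn
      refine ⟨fun i => (if i = 0 then 0 else x * q (i - 1)) + (if i = e + 1 then 0 else y * q i), ?_⟩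
      simp only [add_mul, Finset.sum_add_distrib]
      congr 1
      · rw [Finset.sum_range_succ' _ (e + 1)]
        simp only [Nat.add_eq_zero_iff, one_ne_zero, and_false, if_false, Nat.add_sub_cancel,
          if_true, zero_mul, add_zero, Finset.mul_sum]
        refine Finset.sum_congr rfl fun i hi => ?_
        rw [Nat.add_sub_add_right]
        ring
      · rw [Finset.sum_range_succ _ (e + 1)]
        simp only [if_true, zero_mul, add_zero, Finset.mul_sum]
        refine Finset.sum_congr rfl fun i hi => ?_
        have : i < e + 1 := Finset.mem_range.1 hi
        rw [if_neg this.ne, Nat.succ_sub (Nat.lt_succ_iff.1 this), pow_succ]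
        ring
    · rintro x y ⟨q, rfl⟩ ⟨q', rfl⟩
      exact ⟨q + q', by simp [add_mul, Finset.sum_add_distrib]⟩

variable {S : Type*} [CommRing S] [IsLocalRing S] [IsDomain S]

open IsLocalRing

theorem mem_maximalIdeal_of_sum_eq_zero [UniqueFactorizationMonoid S] {r s : S}
    (hr : r ∈ maximalIdeal S) (hs : s ∈ maximalIdeal S) (hs0 : s ≠ 0) (hrs : IsRelPrime r s)
    {d : ℕ} {c : ℕ → S}
    (h : ∑ i ∈ Finset.range (d + 1), c i * (r ^ i * s ^ (d - i)) = 0) :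
    ∀ i ≤ d, c i ∈ maximalIdeal S := by
  induction d generalizing c with
  | zero =>
    intro i hi
    obtain rfl : i = 0 := by omega
    simp at h
    simp [h]
  | succ d ih =>
    rw [Finset.sum_range_succ] at h
    have h1 : ∑ i ∈ Finset.range (d + 1), c i * (r ^ i * s ^ (d + 1 - i)) =
        s * ∑ i ∈ Finset.range (d + 1), c i * (r ^ i * s ^ (d - i)) := by
      rw [Finset.mul_sum]
      refine Finset.sum_congr rfl fun i hi => ?_
      rw [Nat.succ_sub (Nat.lt_succ_iff.1 (Finset.mem_range.1 hi)), pow_succ]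
      ring
    have h2 : s ∣ c (d + 1) := by
      have : s ∣ c (d + 1) * r ^ (d + 1) := by
        rw [h1] at h
        refine ⟨-∑ i ∈ Finset.range (d + 1), c i * (r ^ i * s ^ (d - i)), ?_⟩
        simp only [Nat.sub_self, pow_zero, mul_one] at h
        linear_combination h
      exact (hrs.symm.pow_right).dvd_of_dvd_mul_right this
    obtain ⟨t, ht⟩ := h2
    have h3 : ∑ i ∈ Finset.range (d + 1),
        (Function.update c d (c d + t * r)) i * (r ^ i * s ^ (d - i)) = 0 := by
      rw [Finset.sum_range_succ] at h1 ⊢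
      have h4 : ∑ i ∈ Finset.range d, (Function.update c d (c d + t * r)) i * (r ^ i * s ^ (d - i))
          = ∑ i ∈ Finset.range d, c i * (r ^ i * s ^ (d - i)) := by
        refine Finset.sum_congr rfl fun i hi => ?_
        rw [Function.update_of_ne (Finset.mem_range.1 hi).ne]
      rw [h4, Function.update_self]
      refine mul_left_cancel₀ hs0 ?_
      rw [Finset.sum_range_succ, h1, ht] at h
      rw [Finset.sum_range_succ] at h
      simp only [Nat.sub_self, pow_zero, mul_one, mul_zero] at h ⊢
      linear_combination h
    have h5 := ih h3
    intro i hi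
    rcases Nat.lt_or_ge i d with hid | hid
    · simpa [Function.update_of_ne hid.ne] using h5 i hid.le
    · rcases hid.eq_or_lt with rfl | hid
      · have := h5 d le_rfl
        rw [Function.update_self] at this
        simpa using (maximalIdeal S).sub_mem this ((maximalIdeal S).mul_mem_left t hr)
      · obtain rfl : i = d + 1 := by omega
        rw [ht]
        exact (maximalIdeal S).mul_mem_right t hs

end BirationalFactorization

section BirationalFactorization
open IsLocalRing

theorem mem_idealOfVars_iff_constantCoeff {k : Type*} [Field k] {σ : Type*}
    (P : MvPolynomial σ k) : P ∈ idealOfVars σ k ↔ constantCoeff P = 0 := by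
  have := mem_pow_idealOfVars_iff' 1 P
  rw [pow_one] at this
  rw [this]
  constructor
  · intro h
    exact h 0 (by simp)
  · intro h m hm
    have : m = 0 := by
      rw [← Finsupp.degree_eq_zero_iff]
      omega
    subst this
    exact h

theorem idealOfVars_fin_two_eq (k : Type*) [Field k] :
    idealOfVars (Fin 2) k = Ideal.span {X 0, X 1} := by
  rw [idealOfVars]
  congr 1
  ext z
  simp [Fin.exists_fin_two, eq_comm]

variable {k : Type*} [Field k] {S : Type*} [CommRing S] [IsLocalRing S]

theorem mem_maximalIdeal_iff_constantCoeff {φ : MvPolynomial (Fin 2) k →+* S}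
    (h0 : φ (X 0) ∈ maximalIdeal S) (h1 : φ (X 1) ∈ maximalIdeal S) (P : MvPolynomial (Fin 2) k) :
    φ P ∈ maximalIdeal S ↔ constantCoeff P = 0 := by
  have key : ∀ P ∈ idealOfVars (Fin 2) k, φ P ∈ maximalIdeal S := by
    have : idealOfVars (Fin 2) k ≤ (maximalIdeal S).comap φ := by
      rw [idealOfVars_fin_two_eq, Ideal.span_le]
      rintro _ (rfl | rfl) <;> assumption
    exact this
  constructor
  · intro h
    by_contra hne
    have h2 : φ (P - C (constantCoeff P)) ∈ maximalIdeal S :=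
      key _ ((mem_idealOfVars_iff_constantCoeff _).2 (by simp))
    rw [map_sub] at h2
    have h3 : φ (C (constantCoeff P)) ∈ maximalIdeal S := by
      simpa using (maximalIdeal S).sub_mem h h2
    exact (mem_maximalIdeal _).1 h3
      (((isUnit_iff_ne_zero.2 hne).map (C : k →+* MvPolynomial (Fin 2) k)).map φ)
  · intro h
    exact key P ((mem_idealOfVars_iff_constantCoeff _).2 h)

variable [IsDomain S] [UniqueFactorizationMonoid S]

theorem mem_pow_idealOfVars_of_map_eq_mul {φ : MvPolynomial (Fin 2) k →+* S} {g r s : S}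
    (hg : g ≠ 0) (hr : r ∈ maximalIdeal S) (hs : s ∈ maximalIdeal S) (hs0 : s ≠ 0)
    (hrs : IsRelPrime r s) (h0 : φ (X 0) = g * r) (h1 : φ (X 1) = g * s)
    {P Q : MvPolynomial (Fin 2) k} {d : ℕ} (hQ : Q ∈ idealOfVars (Fin 2) k ^ d) {z : S}
    (hz : z ∈ maximalIdeal S) (h : φ P = φ Q * z) : P ∈ idealOfVars (Fin 2) k ^ (d + 1) := by
  have h0' : φ (X 0) ∈ maximalIdeal S := h0 ▸ (maximalIdeal S).mul_mem_left g hr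
  have h1' : φ (X 1) ∈ maximalIdeal S := h1 ▸ (maximalIdeal S).mul_mem_left g hs
  have key : ∀ e ≤ d + 1, P ∈ idealOfVars (Fin 2) k ^ e := by
    intro e
    induction e with
    | zero => simp
    | succ e ih =>
      intro he
      have hP := ih (by omega)
      have hQ' := Ideal.pow_le_pow_right (show e ≤ d by omega) hQ
      rw [idealOfVars_fin_two_eq] at hP hQ'
      obtain ⟨a, rfl⟩ := Ideal.mem_span_pair_pow hP
      obtain ⟨b, rfl⟩ := Ideal.mem_span_pair_pow hQ'
      have hsum : ∑ i ∈ Finset.range (e + 1), (φ (a i) - φ (b i) * z) * (r ^ i * s ^ (e - i)) = 0 := by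
        refine mul_left_cancel₀ (pow_ne_zero e hg) ?_
        rw [mul_zero]
        rw [map_sum, map_sum, Finset.sum_mul, ← sub_eq_zero, ← Finset.sum_sub_distrib] at h
        rw [Finset.mul_sum, ← h]
        refine Finset.sum_congr rfl fun i hi => ?_
        have hge : g ^ e = g ^ i * g ^ (e - i) := by
          rw [← pow_add, Nat.add_sub_cancel' (Nat.lt_succ_iff.1 (Finset.mem_range.1 hi))]
        simp only [map_mul, map_pow, h0, h1, mul_pow, hge]
        ring
      have hmem := mem_maximalIdeal_of_sum_eq_zero hr hs hs0 hrs hsum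
      refine Ideal.sum_mem _ fun i hi => ?_
      have hie : i ≤ e := Nat.lt_succ_iff.1 (Finset.mem_range.1 hi)
      have hai : a i ∈ idealOfVars (Fin 2) k := by
        rw [mem_idealOfVars_iff_constantCoeff, ← mem_maximalIdeal_iff_constantCoeff h0' h1']
        simpa using (maximalIdeal S).add_mem (hmem i hie)
          ((maximalIdeal S).mul_mem_left (φ (b i)) hz)
      rw [pow_succ']
      refine Ideal.mul_mem_mul hai ?_
      have : e = i + (e - i) := by omega
      rw [this, pow_add, ← this]
      exact Ideal.mul_mem_mul (Ideal.pow_mem_pow (show X 0 ∈ idealOfVars (Fin 2) k from Ideal.subset_span ⟨0, rfl⟩) _)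
        (Ideal.pow_mem_pow (show X 1 ∈ idealOfVars (Fin 2) k from Ideal.subset_span ⟨1, rfl⟩) _)
  exact key _ le_rfl

theorem exists_mem_pow_idealOfVars {Q : MvPolynomial (Fin 2) k} (hQ : Q ≠ 0) :
    ∃ e, Q ∈ idealOfVars (Fin 2) k ^ e ∧ Q ∉ idealOfVars (Fin 2) k ^ (e + 1) := by
  by_contra! hn
  have hall : ∀ e, Q ∈ idealOfVars (Fin 2) k ^ e := by
    intro e
    induction e with
    | zero => simp
    | succ e ih => exact hn e ih
  have htop : idealOfVars (Fin 2) k ≠ ⊤ := by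
    rw [Ne, Ideal.eq_top_iff_one, mem_idealOfVars_iff_constantCoeff]
    simp
  have := Ideal.iInf_pow_eq_bot_of_isDomain _ htop
  exact hQ (by simpa [this] using (Ideal.mem_iInf.2 hall))

theorem eq_idealOfVars_of_isRelPrime {𝔭 : Ideal (MvPolynomial (Fin 2) k)} [h𝔭 : 𝔭.IsPrime]
    (hle : 𝔭 ≤ idealOfVars (Fin 2) k) {P Q : MvPolynomial (Fin 2) k} (hPQ : IsRelPrime P Q)
    (hQ0 : Q ≠ 0) (hP : P ∈ 𝔭) (hQ : Q ∈ 𝔭) : 𝔭 = idealOfVars (Fin 2) k := by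
  by_contra hne
  obtain ⟨f, hf, hfQ, hf𝔭⟩ : ∃ f, Prime f ∧ f ∣ Q ∧ f ∈ 𝔭 := by
    obtain ⟨l, hl, u, hu⟩ := UniqueFactorizationMonoid.exists_prime_factors Q hQ0
    have hl𝔭 : l.prod ∈ 𝔭 := by
      rw [← hu] at hQ
      exact (h𝔭.mem_or_mem hQ).resolve_right
        fun hu' => h𝔭.ne_top (Ideal.eq_top_of_isUnit_mem _ hu' u.isUnit)
    obtain ⟨f, hfl, hf⟩ := (h𝔭.multiset_prod_mem_iff_exists_mem l).1 hl𝔭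
    exact ⟨f, hl f hfl, (Multiset.dvd_prod hfl).trans ⟨u, hu.symm⟩, hf⟩
  have : (Ideal.span {f}).IsPrime := (Ideal.span_singleton_prime hf.ne_zero).2 hf
  have hker : idealOfVars (Fin 2) k = RingHom.ker (constantCoeff (R := k) (σ := Fin 2)) :=
    Ideal.ext mem_idealOfVars_iff_constantCoeff
  have : (idealOfVars (Fin 2) k).IsPrime := hker ▸ RingHom.ker_isPrime _
  have c1 : (⊥ : Ideal (MvPolynomial (Fin 2) k)) < Ideal.span {f} := by
    rw [bot_lt_iff_ne_bot, Ne, Ideal.span_singleton_eq_bot]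
    exact hf.ne_zero
  have c2 : Ideal.span {f} < 𝔭 := by
    refine lt_of_le_of_ne (by simpa [Ideal.span_le] using hf𝔭) ?_
    rintro rfl
    exact hf.not_isUnit (hPQ (Ideal.mem_span_singleton.1 hP) hfQ)
  have c3 : 𝔭 < idealOfVars (Fin 2) k := lt_of_le_of_ne hle hne
  have i1 := Ideal.height_add_one_le_of_lt_of_isPrime c1
  have i2 := Ideal.height_add_one_le_of_lt_of_isPrime c2
  have i3 := Ideal.height_add_one_le_of_lt_of_isPrime c3
  have i4 := Ideal.height_le_ringKrullDim_of_ne_top (I := idealOfVars (Fin 2) k)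
    Ideal.IsPrime.ne_top'
  rw [MvPolynomial.ringKrullDim_of_isNoetherianRing, ringKrullDim_eq_zero_of_field] at i4
  have i5 : (idealOfVars (Fin 2) k).height ≤ 2 := by
    have : ((idealOfVars (Fin 2) k).height : WithBot ℕ∞) ≤ (2 : ℕ∞) := by simpa using i4
    exact_mod_cast this
  have i6 : (0 + 1 + 1 + 1 : ℕ∞) ≤ 2 :=
    ((add_le_add_left ((add_le_add_left ((add_le_add_left zero_le 1).trans i1) 1).trans i2) 1).trans
      i3).trans i5
  exact absurd i6 (by decide)

theorem dvd_or_dvd_or_exists_constantCoeff_ne_zero {φ : MvPolynomial (Fin 2) k →+* S}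
    (h0 : φ (X 0) ∈ maximalIdeal S) (h1 : φ (X 1) ∈ maximalIdeal S)
    (hφ : ∀ z : S, ∃ P Q, φ Q ≠ 0 ∧ z * φ Q = φ P) :
    φ (X 0) ∣ φ (X 1) ∨ φ (X 1) ∣ φ (X 0) ∨
      ∀ z : S, ∃ P Q, constantCoeff Q ≠ 0 ∧ z * φ Q = φ P := by
  by_contra! hn
  obtain ⟨hn1, hn2, z, hz⟩ := hn
  have hX0 : φ (X 0) ≠ 0 := fun h => hn2 (h ▸ dvd_zero _)
  obtain ⟨r, s, g, hrs, hr, hs⟩ := UniqueFactorizationMonoid.exists_reduced_factors _ hX0 (φ (X 1))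
  have hg : g ≠ 0 := by rintro rfl; simp [← hr] at hX0
  have hrm : r ∈ maximalIdeal S := by
    rw [mem_maximalIdeal]
    intro hu
    exact hn1 (hs ▸ hr ▸ mul_dvd_mul_left g hu.dvd)
  have hsm : s ∈ maximalIdeal S := by
    rw [mem_maximalIdeal]
    intro hu
    exact hn2 (hs ▸ hr ▸ mul_dvd_mul_left g hu.dvd)
  have hs0 : s ≠ 0 := by
    rintro rfl
    exact hn1 (hs ▸ by simp)
  have L := fun {P Q} {d : ℕ} (hQ) {z} hz h => mem_pow_idealOfVars_of_map_eq_mul (φ := φ) (P := P)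
    (Q := Q) (d := d) hg hrm hsm hs0 hrs hr.symm hs.symm hQ (z := z) hz h
  by_cases hgu : IsUnit g
  · obtain ⟨P, Q, hQ, hPQ⟩ := hφ z
    obtain ⟨Q', P', c, hrel, rfl, rfl⟩ := UniqueFactorizationMonoid.exists_reduced_factors Q
      (by rintro rfl; simp at hQ) P
    rw [map_mul] at hQ
    have hQ' : φ Q' ≠ 0 := right_ne_zero_of_mul hQ
    have hPQ' : z * φ Q' = φ P' := by
      refine mul_left_cancel₀ (left_ne_zero_of_mul hQ) ?_
      simp only [map_mul] at hPQ
      linear_combination hPQ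
    have hQc : constantCoeff Q' = 0 := by
      by_contra hne
      exact hz P' Q' hne hPQ'
    have hnu : ¬ IsUnit (φ Q') := by
      rwa [← mem_maximalIdeal_iff_constantCoeff h0 h1, mem_maximalIdeal] at hQc
    obtain ⟨π, hπ, hπQ⟩ := WfDvdMonoid.exists_irreducible_factor hnu hQ'
    have hπ' := UniqueFactorizationMonoid.irreducible_iff_prime.1 hπ
    have : (Ideal.span {π}).IsPrime := (Ideal.span_singleton_prime hπ'.ne_zero).2 hπ'
    have heq := eq_idealOfVars_of_isRelPrime (𝔭 := (Ideal.span {π}).comap φ) ?_ hrel.symm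
      (by rintro rfl; simp at hQ') ?_ ?_
    · have d0 : π ∣ φ (X 0) := by
        rw [← Ideal.mem_span_singleton, ← Ideal.mem_comap, heq]
        exact Ideal.subset_span ⟨0, rfl⟩
      have d1 : π ∣ φ (X 1) := by
        rw [← Ideal.mem_span_singleton, ← Ideal.mem_comap, heq]
        exact Ideal.subset_span ⟨1, rfl⟩
      rw [← hr, hgu.dvd_mul_left] at d0
      rw [← hs, hgu.dvd_mul_left] at d1
      exact hπ.not_isUnit (hrs d0 d1)
    · intro T hT
      rw [mem_idealOfVars_iff_constantCoeff, ← mem_maximalIdeal_iff_constantCoeff h0 h1]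
      obtain ⟨t, ht⟩ := Ideal.mem_span_singleton.1 (Ideal.mem_comap.1 hT)
      rw [ht]
      exact (maximalIdeal S).mul_mem_right _ ((mem_maximalIdeal π).2 hπ.not_isUnit)
    · rw [Ideal.mem_comap, Ideal.mem_span_singleton, ← hPQ']
      exact hπQ.mul_left z
    · rwa [Ideal.mem_comap, Ideal.mem_span_singleton]
  · obtain ⟨P, Q, hQ, hPQ⟩ := hφ g
    obtain ⟨e, he, he'⟩ := exists_mem_pow_idealOfVars (Q := Q) (by rintro rfl; simp at hQ)
    have hP := L he ((mem_maximalIdeal g).2 hgu) (by rw [← hPQ, mul_comm])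
    have h3 : X 1 * Q ∈ idealOfVars (Fin 2) k ^ (e + 1 + 1) :=
      L hP hsm (by rw [map_mul, ← hs, ← hPQ]; ring)
    apply he'
    rw [mem_pow_idealOfVars_iff'] at h3 ⊢
    intro m hm
    have := h3 (Finsupp.single 1 1 + m) (by rw [map_add, Finsupp.degree_single]; omega)
    rwa [coeff_X_mul] at this

end BirationalFactorization

section Dimension

variable {k F : Type} [Field k] [Field F] [Algebra k F]

theorem ringKrullDim_le_of_finiteType {R : Type} [CommRing R] [Nontrivial R] [Algebra k R]
    [Algebra.FiniteType k R] (f : R →ₐ[k] F) (hf : Function.Injective f) {d : ℕ}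
    (hd : Algebra.trdeg k F ≤ d) : ringKrullDim R ≤ d := by
  obtain ⟨s, g, hg, hinteg⟩ := exists_integral_inj_algHom_of_fg k R
  have hs : s ≤ d := by
    have hai : AlgebraicIndependent k (fun i => f (g (X i))) := by
      have h : Function.Injective (f.comp g) := hf.comp hg
      rw [AlgebraicIndependent]
      convert h using 2
      ext i
      simp
    have h := hai.cardinalMk_le_trdeg.trans hd
    simpa using h
  let := g.toRingHom.toAlgebra
  have : Algebra.IsIntegral (MvPolynomial (Fin s) k) R := ⟨hinteg⟩
  have hle : ringKrullDim R ≤ ringKrullDim (MvPolynomial (Fin s) k) :=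
    Order.krullDim_le_of_strictMono
      (PrimeSpectrum.comap (algebraMap (MvPolynomial (Fin s) k) R))
      fun I J hIJ => Ideal.IsIntegral.comap_lt_comap (R := MvPolynomial (Fin s) k)
        (I := I.asIdeal) (J := J.asIdeal) hIJ
  rw [MvPolynomial.ringKrullDim_of_isNoetherianRing, ringKrullDim_eq_zero_of_field] at hle
  refine hle.trans ?_
  simp only [Nat.card_eq_fintype_card, Fintype.card_fin, zero_add]
  exact_mod_cast hs

theorem ringKrullDim_le_of_essFiniteType (T : Subring F) (C : Subalgebra k F) (hC : C.FG)
    (hCT : (C : Set F) ⊆ T)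
    (h : ∀ z ∈ T, ∃ a ∈ C, ∃ b ∈ C, (∃ b' ∈ T, b * b' = 1) ∧ z * b = a) {d : ℕ}
    (hd : Algebra.trdeg k F ≤ d) : ringKrullDim T ≤ d := by
  have : Algebra.FiniteType k C := C.fg_iff_finiteType.1 hC
  have hC' := ringKrullDim_le_of_finiteType C.val Subtype.val_injective hd
  refine le_trans ?_ hC'
  let ι : C →+* T := (algebraMap C F).codRestrict T fun c => hCT c.2
  refine Order.krullDim_le_of_strictMono (PrimeSpectrum.comap ι) ?_
  refine Monotone.strictMono_of_injective (fun I J hIJ => Ideal.comap_mono hIJ) ?_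
  have key : ∀ I J : PrimeSpectrum T, PrimeSpectrum.comap ι I = PrimeSpectrum.comap ι J →
      I.asIdeal ≤ J.asIdeal := by
    intro I J hIJ z hz
    obtain ⟨a, ha, b, hb, ⟨b', hb', hbb⟩, hab⟩ := h z z.2
    have e1 : ι ⟨a, ha⟩ = z * ι ⟨b, hb⟩ := Subtype.ext hab.symm
    have e2 : z = ι ⟨a, ha⟩ * ⟨b', hb'⟩ := by
      rw [e1]
      refine Subtype.ext ?_
      change (z : F) = z * b * b'
      rw [mul_assoc, hbb, mul_one]
    have h1 : (⟨a, ha⟩ : C) ∈ (PrimeSpectrum.comap ι I).asIdeal := by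
      change ι ⟨a, ha⟩ ∈ I.asIdeal
      rw [e1]
      exact I.asIdeal.mul_mem_right _ hz
    rw [hIJ] at h1
    rw [e2]
    exact J.asIdeal.mul_mem_right _ h1
  intro I J hIJ
  exact PrimeSpectrum.ext (le_antisymm (key I J hIJ) (key J I hIJ.symm))

theorem algebraicIndependent_pair_of_adjoin_eq_top {r s : F} (htr : 2 ≤ Algebra.trdeg k F)
    (h : IntermediateField.adjoin k {r, s} = ⊤) : AlgebraicIndependent k ![r, s] := by
  have hr : Set.range ![r, s] = {r, s} := by simp [Matrix.range_cons, Set.pair_comm]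
  have : Algebra.IsAlgebraic (Algebra.adjoin k (Set.range ![r, s])) F := by
    rw [hr]
    constructor
    intro z
    have hz : z ∈ IntermediateField.adjoin k {r, s} := h ▸ IntermediateField.mem_top
    rw [IntermediateField.mem_adjoin_iff_div] at hz
    obtain ⟨a, ha, b, hb, rfl⟩ := hz
    rw [div_eq_mul_inv]
    exact (isAlgebraic_algebraMap (A := F) (⟨a, ha⟩ : Algebra.adjoin k {r, s})).mul
      (isAlgebraic_algebraMap (A := F) (⟨b, hb⟩ : Algebra.adjoin k {r, s})).inv
  exact (Algebra.IsAlgebraic.isTranscendenceBasis_of_le_trdeg_of_finite k _ (by simpa using htr)).1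

theorem trdeg_fractionRing_mvPolynomial_fin_two :
    Algebra.trdeg k (FractionRing (MvPolynomial (Fin 2) k)) = 2 := by
  have h1 := trdeg_add_eq k (MvPolynomial (Fin 2) k)
    (A := FractionRing (MvPolynomial (Fin 2) k))
  have h2 : Algebra.IsAlgebraic (MvPolynomial (Fin 2) k)
      (FractionRing (MvPolynomial (Fin 2) k)) :=
    IsLocalization.isAlgebraic _ (nonZeroDivisors (MvPolynomial (Fin 2) k))
  rw [← h1, MvPolynomial.trdeg_of_isDomain, trdeg_eq_zero_iff.2 h2]
  simp

end Dimension

section PairLocal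

variable {k F : Type} [Field k] [Field F] [Algebra k F]

variable (k) in
/-- The image in `F` of the localization of `k[X, Y]` at the origin under `X ↦ r`, `Y ↦ s`. -/
abbrev pairLocal (r s : F) : Subring F :=
  localSubring (aeval ![r, s] : MvPolynomial (Fin 2) k →ₐ[k] F).toRingHom

theorem aeval_mem_pairLocal (r s : F) (f : MvPolynomial (Fin 2) k) :
    aeval ![r, s] f ∈ pairLocal k r s := ⟨f, 1, by simp⟩

theorem algebraMap_mem_pairLocal (r s : F) (c : k) : algebraMap k F c ∈ pairLocal k r s := by
  simpa using aeval_mem_pairLocal r s (C c)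

theorem left_mem_pairLocal (r s : F) : r ∈ pairLocal k r s := by
  simpa using aeval_mem_pairLocal (k := k) r s (X 0)

theorem right_mem_pairLocal (r s : F) : s ∈ pairLocal k r s := by
  simpa using aeval_mem_pairLocal (k := k) r s (X 1)

theorem pairLocal_comm (r s : F) : pairLocal k r s = pairLocal k s r := by
  have key : ∀ r s : F, pairLocal k r s ≤ pairLocal k s r := by
    rintro r s z ⟨f, g, hg, h⟩
    have hr : ∀ f : MvPolynomial (Fin 2) k,
        aeval ![s, r] (rename ![1, 0] f) = aeval ![r, s] f := by
      intro f
      rw [aeval_rename]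
      congr 2
      ext i
      fin_cases i <;> rfl
    refine ⟨rename ![1, 0] f, rename ![1, 0] g, by simpa using hg, ?_⟩
    simpa [hr] using h
  exact le_antisymm (key r s) (key s r)

theorem pairLocal_le_pairLocal {r s r' s' : F} {f g : MvPolynomial (Fin 2) k}
    (hf : constantCoeff f = 0) (hg : constantCoeff g = 0) (hr : r = aeval ![r', s'] f)
    (hs : s = aeval ![r', s'] g) : pairLocal k r s ≤ pairLocal k r' s' := by
  rintro z ⟨P, Q, hQ, h⟩
  have key : ∀ P : MvPolynomial (Fin 2) k,
      aeval ![r', s'] (bind₁ ![f, g] P) = aeval ![r, s] P := by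
    intro P
    rw [aeval_bind₁]
    congr 2
    ext i
    fin_cases i <;> simp [hr, hs]
  refine ⟨bind₁ ![f, g] P, bind₁ ![f, g] Q, ?_, ?_⟩
  · have : (constantCoeff.comp (bind₁ ![f, g]).toRingHom :
        MvPolynomial (Fin 2) k →+* k) = constantCoeff := by
      ext i
      · simp
      · fin_cases i <;> simp [hf, hg]
    rwa [← this] at hQ
  · simpa [key] using h

theorem inv_aeval_mem_pairLocal {r s : F} {f : MvPolynomial (Fin 2) k}
    (hf : constantCoeff f ≠ 0) (h0 : aeval ![r, s] f ≠ 0) :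
    (aeval ![r, s] f)⁻¹ ∈ pairLocal k r s :=
  ⟨1, f, hf, by simp [h0]⟩

theorem inv_left_notMem_pairLocal {r s : F} (h : AlgebraicIndependent k ![r, s]) :
    r⁻¹ ∉ pairLocal k r s := by
  rintro ⟨f, g, hg, hfg⟩
  have hr : r ≠ 0 := h.ne_zero 0
  have : aeval ![r, s] g = aeval ![r, s] (X 0 * f) := by
    change r⁻¹ * aeval ![r, s] g = aeval ![r, s] f at hfg
    rw [map_mul, ← hfg]
    simp [hr]
  rw [show g = X 0 * f from h this] at hg
  simp at hg

end PairLocal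

namespace Polynomial

/-- The bivariate polynomials in which the coefficient of `X ^ m` has degree at most `m / p`. -/
def weightedSubring (k : Type*) [Field k] (p : ℕ) : Subring k[X][X] where
  carrier := {Q | ∀ m, p * (Q.coeff m).natDegree ≤ m}
  zero_mem' := by simp
  one_mem' := by
    intro m
    rw [Polynomial.coeff_one]
    split_ifs <;> simp
  add_mem' := by
    intro P Q hP hQ m
    rw [Polynomial.coeff_add]
    rcases le_total (P.coeff m).natDegree (Q.coeff m).natDegree with h | h
    · exact (Nat.mul_le_mul_left p ((natDegree_add_le _ _).trans (max_le h le_rfl))).trans (hQ m)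
    · exact (Nat.mul_le_mul_left p ((natDegree_add_le _ _).trans (max_le le_rfl h))).trans (hP m)
  mul_mem' := by
    intro P Q hP hQ m
    rw [Polynomial.coeff_mul]
    obtain rfl | hp := p.eq_zero_or_pos
    · simp
    rw [mul_comm, ← Nat.le_div_iff_mul_le hp]
    refine natDegree_sum_le_of_forall_le _ _ fun ij hij => ?_
    rw [Nat.le_div_iff_mul_le hp, mul_comm]
    refine (Nat.mul_le_mul_left p natDegree_mul_le).trans ?_
    rw [mul_add, ← Finset.HasAntidiagonal.mem_antidiagonal.1 hij]
    exact add_le_add (hP _) (hQ _)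
  neg_mem' := by
    intro P hP m
    simpa using hP m

variable {k : Type*} [Field k]

/-- The substitution `X ↦ X ^ p * (α + Y)`, `Y ↦ X` on `k[Y][X]`. -/
noncomputable def quadraticSubst (p : ℕ) (α : k) : k[X][X] →+* k[X][X] :=
  eval₂RingHom (mapRingHom C) (X ^ p * C (C α + X))

theorem quadraticSubst_mem_weightedSubring (p : ℕ) (α : k) (P : k[X][X]) :
    quadraticSubst p α P ∈ weightedSubring k p := by
  have hmap : ∀ g : k[X], g.map C ∈ weightedSubring k p := by
    intro g m
    simp
  have hlin : (X ^ p * C (C α + X) : k[X][X]) ∈ weightedSubring k p := by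
    intro m
    rw [coeff_X_pow_mul', coeff_C]
    split_ifs with h1 h2
    · have : natDegree (C α + X) = 1 := by
        rw [add_comm]; exact natDegree_X_add_C α
      rw [this]
      omega
    · simp
    · simp
  rw [quadraticSubst, coe_eval₂RingHom, eval₂_eq_sum, Polynomial.sum]
  exact Subring.sum_mem _ fun i _ => Subring.mul_mem _ (hmap _) (Subring.pow_mem _ hlin i)

theorem map_quadraticSubst {p : ℕ} (α : k) (P : k[X][X]) :
    (quadraticSubst p α P).map (evalRingHom (-α)) = P.coeff 0 := by
  have : ((mapRingHom (evalRingHom (-α))).comp (quadraticSubst p α)) = constantCoeff := by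
    refine ringHom_ext' (ringHom_ext' ?_ ?_) ?_
    · ext c; simp [quadraticSubst]
    · simp [quadraticSubst]
    · simp [quadraticSubst]
  exact DFunLike.congr_fun this P

theorem exists_quadraticSubst_eq {p : ℕ} (α : k) {P : k[X][X]} (hP : P.coeff 0 ≠ 0) :
    ∃ (m : ℕ) (Q : k[X][X]), quadraticSubst p α P = X ^ m * Q ∧ Q.coeff 0 ≠ 0 ∧
      p * (Q.coeff 0).natDegree ≤ (P.coeff 0).natDegree := by
  have h1 : (quadraticSubst p α P).coeff (P.coeff 0).natDegree ≠ 0 := by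
    intro h
    have h2 : ((quadraticSubst p α P).map (evalRingHom (-α))).coeff (P.coeff 0).natDegree = 0 := by
      rw [coeff_map, h, map_zero]
    rw [map_quadraticSubst, coeff_natDegree, leadingCoeff_eq_zero] at h2
    exact hP h2
  have h0 : quadraticSubst p α P ≠ 0 := by
    intro h
    simp [h] at h1
  obtain ⟨Q, hQ⟩ := X_pow_dvd_iff.2 (fun d (hd : d < natTrailingDegree (quadraticSubst p α P)) =>
    coeff_eq_zero_of_lt_natTrailingDegree hd)
  have hQ0 : Q.coeff 0 = (quadraticSubst p α P).coeff (quadraticSubst p α P).natTrailingDegree := by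
    conv_rhs => rw [hQ]
    rw [← coeff_X_pow_mul Q (quadraticSubst p α P).natTrailingDegree 0, zero_add, ← hQ]
  refine ⟨_, Q, hQ, ?_, ?_⟩
  · rw [hQ0, ← trailingCoeff]
    exact trailingCoeff_nonzero_iff_nonzero.2 h0
  · rw [hQ0]
    exact (quadraticSubst_mem_weightedSubring p α P _).trans (natTrailingDegree_le_of_ne_zero h1)

end Polynomial

section Chain

variable {k F : Type} [Field k] [Field F] [Algebra k F]

/-- `Z n = Z (n + 1) ^ p * (α n + Z (n + 2))` with `α n ≠ 0` and all `Z n` nonzero: the successive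
regular parameters along a sequence of quadratic transforms. -/
structure IsQuadraticChain (p : ℕ) (α : ℕ → k) (Z : ℕ → F) : Prop where
  one_lt : 1 < p
  coeff_ne_zero : ∀ n, α n ≠ 0
  ne_zero : ∀ n, Z n ≠ 0
  eq_mul : ∀ n, Z n = Z (n + 1) ^ p * (algebraMap k F (α n) + Z (n + 2))

variable (k) in
/-- `f` is the `m`-th power of `Z N` times a unit of `k[Z N, Z (N + 1)]` localized at the origin. -/
def IsPowMulUnit (Z : ℕ → F) (f : F) (N : ℕ) (m : ℤ) : Prop :=
  ∃ ε ∈ pairLocal k (Z N) (Z (N + 1)), ε ≠ 0 ∧ ε⁻¹ ∈ pairLocal k (Z N) (Z (N + 1)) ∧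
    f = Z N ^ m * ε

namespace IsQuadraticChain

variable {p : ℕ} {α : ℕ → k} {Z : ℕ → F}

theorem pairLocal_le_succ (hZ : IsQuadraticChain p α Z) (n : ℕ) :
    pairLocal k (Z n) (Z (n + 1)) ≤ pairLocal k (Z (n + 1)) (Z (n + 2)) := by
  refine pairLocal_le_pairLocal (f := X 0 ^ p * (C (α n) + X 1)) (g := X 0) ?_ (by simp) ?_
    (by simp)
  · have := hZ.one_lt
    simp [show p ≠ 0 by omega]
  · simpa using hZ.eq_mul n

theorem add_ne_zero (hZ : IsQuadraticChain p α Z) (n : ℕ) :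
    algebraMap k F (α n) + Z (n + 2) ≠ 0 := by
  intro h
  have := hZ.eq_mul n
  rw [h, mul_zero] at this
  exact hZ.ne_zero n this

theorem isPowMulUnit_succ (hZ : IsQuadraticChain p α Z) {f : F} {N : ℕ} {m : ℤ}
    (h : IsPowMulUnit k Z f N m) : IsPowMulUnit k Z f (N + 1) (p * m) := by
  obtain ⟨ε, hε, hε0, hε', rfl⟩ := h
  have h1 : algebraMap k F (α N) + Z (N + 2) =
      aeval ![Z (N + 1), Z (N + 2)] (C (α N) + X 1 : MvPolynomial (Fin 2) k) := by simp
  have h2 : algebraMap k F (α N) + Z (N + 2) ∈ pairLocal k (Z (N + 1)) (Z (N + 2)) := by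
    rw [h1]
    exact aeval_mem_pairLocal _ _ _
  have h3 : (algebraMap k F (α N) + Z (N + 2))⁻¹ ∈ pairLocal k (Z (N + 1)) (Z (N + 2)) := by
    have := hZ.add_ne_zero N
    rw [h1] at this ⊢
    exact inv_aeval_mem_pairLocal (by simpa using hZ.coeff_ne_zero N) this
  have h4 : ∀ m : ℤ, (algebraMap k F (α N) + Z (N + 2)) ^ m ∈
      pairLocal k (Z (N + 1)) (Z (N + 2)) := by
    intro m
    rcases Int.eq_nat_or_neg m with ⟨m, rfl | rfl⟩
    · rw [zpow_natCast]
      exact Subring.pow_mem _ h2 m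
    · rw [zpow_neg, zpow_natCast, ← inv_pow]
      exact Subring.pow_mem _ h3 m
  refine ⟨(algebraMap k F (α N) + Z (N + 2)) ^ m * ε,
    Subring.mul_mem _ (h4 m) (hZ.pairLocal_le_succ N hε),
    mul_ne_zero (zpow_ne_zero _ (hZ.add_ne_zero N)) hε0, ?_, ?_⟩
  · rw [mul_inv, ← zpow_neg]
    exact Subring.mul_mem _ (h4 _) (hZ.pairLocal_le_succ N hε')
  · conv_lhs => rw [hZ.eq_mul N]
    rw [mul_zpow, zpow_mul, zpow_natCast, mul_assoc]

theorem isPowMulUnit_add (hZ : IsQuadraticChain p α Z) {f : F} {N : ℕ} {m : ℤ}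
    (h : IsPowMulUnit k Z f N m) (j : ℕ) : IsPowMulUnit k Z f (N + j) (p ^ j * m) := by
  induction j with
  | zero => simpa using h
  | succ j ih =>
    have := hZ.isPowMulUnit_succ ih
    rwa [← mul_assoc, ← pow_succ'] at this

theorem isPowMulUnit_mul (hZ : IsQuadraticChain p α Z) {f g : F} {N : ℕ} {m n : ℤ}
    (hf : IsPowMulUnit k Z f N m) (hg : IsPowMulUnit k Z g N n) :
    IsPowMulUnit k Z (f * g) N (m + n) := by
  obtain ⟨ε, hε, hε0, hε', rfl⟩ := hf
  obtain ⟨η, hη, hη0, hη', rfl⟩ := hg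
  refine ⟨ε * η, Subring.mul_mem _ hε hη, mul_ne_zero hε0 hη0, ?_, ?_⟩
  · rw [mul_inv]
    exact Subring.mul_mem _ hε' hη'
  · rw [zpow_add₀ (hZ.ne_zero N)]
    ring

theorem isPowMulUnit_inv {f : F} {N : ℕ} {m : ℤ}
    (hf : IsPowMulUnit k Z f N m) : IsPowMulUnit k Z f⁻¹ N (-m) := by
  obtain ⟨ε, hε, hε0, hε', rfl⟩ := hf
  exact ⟨ε⁻¹, hε', inv_ne_zero hε0, by simpa using hε, by rw [mul_inv, zpow_neg]⟩

theorem isPowMulUnit_pow (n m : ℕ) : IsPowMulUnit k Z (Z n ^ m) n m :=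
  ⟨1, Subring.one_mem _, one_ne_zero, by simp, by simp⟩

theorem le_of_isPowMulUnit (hZ : IsQuadraticChain p α Z)
    (hind : ∀ n, AlgebraicIndependent k ![Z n, Z (n + 1)]) {f : F} {N : ℕ}
    {m n : ℤ} (hm : IsPowMulUnit k Z f N m) (hn : IsPowMulUnit k Z f N n) : m ≤ n := by
  by_contra! hlt
  obtain ⟨ε, hε, hε0, hε', rfl⟩ := hm
  obtain ⟨η, hη, hη0, hη', h⟩ := hn
  obtain ⟨j, hj⟩ : ∃ j : ℕ, m = n + (j + 1) := ⟨(m - n - 1).toNat, by omega⟩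
  apply inv_left_notMem_pairLocal (hind N)
  have h0 := hZ.ne_zero N
  have : (Z N)⁻¹ = Z N ^ j * (ε * η⁻¹) := by
    rw [hj, zpow_add₀ h0, mul_assoc] at h
    have h' := mul_left_cancel₀ (zpow_ne_zero n h0) h
    have e : (Z N : F) ^ ((j : ℤ) + 1) = Z N ^ j * Z N := by
      rw [zpow_add₀ h0, zpow_natCast, zpow_one]
    rw [e] at h'
    field_simp
    rw [← h']
    ring
  rw [this]
  exact Subring.mul_mem _ (Subring.pow_mem _ (left_mem_pairLocal _ _) _) (Subring.mul_mem _ hε hη')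

open Polynomial in
/-- Evaluation of a bivariate polynomial in `k[Y][X]` at `X = Z n`, `Y = Z (n + 1)`. -/
noncomputable def evalPair (k : Type) {F : Type} [Field k] [Field F] [Algebra k F] (Z : ℕ → F)
    (n : ℕ) : k[X][X] →+* F :=
  Polynomial.eval₂RingHom (Polynomial.aeval (Z (n + 1)) : k[X] →ₐ[k] F).toRingHom (Z n)

open Polynomial in
theorem evalPair_quadraticSubst (hZ : IsQuadraticChain p α Z) (n : ℕ) (P : k[X][X]) :
    evalPair k Z (n + 1) (Polynomial.quadraticSubst p (α n) P) = evalPair k Z n P := by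
  have : (evalPair k Z (n + 1)).comp (Polynomial.quadraticSubst p (α n)) = evalPair k Z n := by
    refine Polynomial.ringHom_ext' (Polynomial.ringHom_ext' ?_ ?_) ?_
    · ext c; simp [evalPair, Polynomial.quadraticSubst]
    · simp [evalPair, Polynomial.quadraticSubst]
    · simpa [evalPair, Polynomial.quadraticSubst] using (hZ.eq_mul n).symm
  exact DFunLike.congr_fun this P

open Polynomial in
theorem exists_aeval_eq_evalPair (n : ℕ) (P : k[X][X]) : ∃ Q : MvPolynomial (Fin 2) k,
    MvPolynomial.constantCoeff Q = (P.coeff 0).coeff 0 ∧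
      MvPolynomial.aeval ![Z n, Z (n + 1)] Q = evalPair k Z n P := by
  refine ⟨Polynomial.eval₂RingHom (Polynomial.aeval (MvPolynomial.X 1) :
    k[X] →ₐ[k] MvPolynomial (Fin 2) k).toRingHom (MvPolynomial.X 0) P, ?_, ?_⟩
  · have : (MvPolynomial.constantCoeff).comp (Polynomial.eval₂RingHom (Polynomial.aeval
        (MvPolynomial.X 1) : k[X] →ₐ[k] MvPolynomial (Fin 2) k).toRingHom (MvPolynomial.X 0)) =
        Polynomial.constantCoeff.comp Polynomial.constantCoeff := by
      refine Polynomial.ringHom_ext' (Polynomial.ringHom_ext' ?_ ?_) ?_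
      · ext c; simp
      · simp
      · simp
    exact DFunLike.congr_fun this P
  · have : (MvPolynomial.aeval ![Z n, Z (n + 1)] : MvPolynomial (Fin 2) k →ₐ[k] F).toRingHom.comp
        (Polynomial.eval₂RingHom (Polynomial.aeval
        (MvPolynomial.X 1) : k[X] →ₐ[k] MvPolynomial (Fin 2) k).toRingHom (MvPolynomial.X 0)) =
        evalPair k Z n := by
      refine Polynomial.ringHom_ext' (Polynomial.ringHom_ext' ?_ ?_) ?_
      · ext c; simp [evalPair]
      · simp [evalPair]
      · simp [evalPair]
    exact DFunLike.congr_fun this P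

open Polynomial in
theorem exists_evalPair_eq_aeval (n : ℕ) (Q : MvPolynomial (Fin 2) k) : ∃ P : k[X][X],
    evalPair k Z n P = MvPolynomial.aeval ![Z n, Z (n + 1)] Q := by
  refine ⟨MvPolynomial.aeval ![Polynomial.X, Polynomial.C Polynomial.X] Q, ?_⟩
  have : (evalPair k Z n).comp (MvPolynomial.aeval ![Polynomial.X, Polynomial.C Polynomial.X] :
      MvPolynomial (Fin 2) k →ₐ[k] k[X][X]).toRingHom =
      (MvPolynomial.aeval ![Z n, Z (n + 1)] : MvPolynomial (Fin 2) k →ₐ[k] F).toRingHom := by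
    refine MvPolynomial.ringHom_ext ?_ ?_
    · intro c
      simp [evalPair]
    · intro i
      fin_cases i <;> simp [evalPair]
  exact congr($this Q)

open Polynomial in
theorem exists_isPowMulUnit_evalPair_of_coeff (hZ : IsQuadraticChain p α Z)
    (hind : ∀ n, AlgebraicIndependent k ![Z n, Z (n + 1)]) (d n : ℕ) (P : k[X][X])
    (hP : P.coeff 0 ≠ 0) (hd : (P.coeff 0).natDegree ≤ d) :
    ∃ N m, IsPowMulUnit k Z (evalPair k Z n P) N m := by
  induction d using Nat.strong_induction_on generalizing n P with
  | _ d ih =>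
    obtain hd0 | hd0 := (P.coeff 0).natDegree.eq_zero_or_pos
    · obtain ⟨Q, hQ, hQ'⟩ := exists_aeval_eq_evalPair (Z := Z) n P
      have hc : MvPolynomial.constantCoeff Q ≠ 0 := by
        rw [hQ]
        intro h
        rw [Polynomial.eq_C_of_natDegree_eq_zero hd0, h] at hP
        simp at hP
      have h0 : MvPolynomial.aeval ![Z n, Z (n + 1)] Q ≠ 0 := by
        intro h
        rw [(map_eq_zero_iff _ (hind n)).1 h] at hc
        simp at hc
      exact ⟨n, 0, _, aeval_mem_pairLocal _ _ Q, h0, inv_aeval_mem_pairLocal hc h0,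
        by simp [hQ']⟩
    · obtain ⟨m, Q, hQ, hQ0, hdeg⟩ := Polynomial.exists_quadraticSubst_eq (p := p) (α n) hP
      have hlt : (Q.coeff 0).natDegree < d := by
        have := hZ.one_lt
        nlinarith
      obtain ⟨N, m', h⟩ := ih _ hlt (n + 1) Q hQ0 le_rfl
      have e : evalPair k Z n P = Z (n + 1) ^ m * evalPair k Z (n + 1) Q := by
        rw [← hZ.evalPair_quadraticSubst, hQ, map_mul, map_pow]
        simp [evalPair]
      have h1 := hZ.isPowMulUnit_add h (n + 1)
      have h2 := hZ.isPowMulUnit_add (isPowMulUnit_pow (k := k) (Z := Z) (n + 1) m) N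
      rw [add_comm (n + 1) N] at h2
      exact ⟨_, _, e ▸ hZ.isPowMulUnit_mul h2 h1⟩

theorem exists_isPowMulUnit_aeval (hZ : IsQuadraticChain p α Z)
    (hind : ∀ n, AlgebraicIndependent k ![Z n, Z (n + 1)]) (Q : MvPolynomial (Fin 2) k)
    (hQ : aeval ![Z 0, Z 1] Q ≠ 0) : ∃ N m, IsPowMulUnit k Z (aeval ![Z 0, Z 1] Q) N m := by
  obtain ⟨P, hP⟩ := exists_evalPair_eq_aeval (Z := Z) 0 Q
  have hP0 : P ≠ 0 := by
    rintro rfl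
    exact hQ (by rw [← hP, map_zero])
  obtain ⟨R, hR⟩ := Polynomial.X_pow_dvd_iff.2
    (fun d (hd : d < P.natTrailingDegree) => Polynomial.coeff_eq_zero_of_lt_natTrailingDegree hd)
  have hR0 : R.coeff 0 ≠ 0 := by
    have : P.coeff P.natTrailingDegree ≠ 0 := Polynomial.trailingCoeff_nonzero_iff_nonzero.2 hP0
    have e := Polynomial.coeff_X_pow_mul R P.natTrailingDegree 0
    rw [zero_add, ← hR] at e
    rwa [← e]
  obtain ⟨N, m, h⟩ := hZ.exists_isPowMulUnit_evalPair_of_coeff hind _ 0 R hR0 le_rfl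
  have e : aeval ![Z 0, Z 1] Q = Z 0 ^ P.natTrailingDegree * evalPair k Z 0 R := by
    rw [← hP]
    conv_lhs => rw [hR]
    simp [evalPair]
  have h2 := hZ.isPowMulUnit_add (isPowMulUnit_pow (k := k) (Z := Z) 0 P.natTrailingDegree) N
  rw [zero_add] at h2
  exact ⟨N, _, e ▸ hZ.isPowMulUnit_mul h2 h⟩

theorem exists_isPowMulUnit (hZ : IsQuadraticChain p α Z)
    (hind : ∀ n, AlgebraicIndependent k ![Z n, Z (n + 1)])
    (hgen : ∀ f : F, ∃ P Q : MvPolynomial (Fin 2) k, aeval ![Z 0, Z 1] Q ≠ 0 ∧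
      f * aeval ![Z 0, Z 1] Q = aeval ![Z 0, Z 1] P) (f : F) (hf : f ≠ 0) :
    ∃ N m, IsPowMulUnit k Z f N m := by
  obtain ⟨P, Q, hQ, h⟩ := hgen f
  obtain ⟨N, m, h1⟩ := hZ.exists_isPowMulUnit_aeval hind P (h ▸ mul_ne_zero hf hQ)
  obtain ⟨M, n, h2⟩ := hZ.exists_isPowMulUnit_aeval hind Q hQ
  have e : f = aeval ![Z 0, Z 1] P * (aeval ![Z 0, Z 1] Q)⁻¹ := by
    rw [← h, mul_inv_cancel_right₀ hQ]
  have h3 := hZ.isPowMulUnit_add (isPowMulUnit_inv h2) N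
  rw [add_comm] at h3
  exact ⟨_, _, e ▸ hZ.isPowMulUnit_mul (hZ.isPowMulUnit_add h1 M) h3⟩

end IsQuadraticChain

end Chain

namespace IsQuadraticChain

variable {k F : Type} [Field k] [Field F] [Algebra k F] {p : ℕ} {α : ℕ → k} {Z : ℕ → F}

theorem exists_additive_valuation (hZ : IsQuadraticChain p α Z)
    (hind : ∀ n, AlgebraicIndependent k ![Z n, Z (n + 1)])
    (hgen : ∀ f : F, ∃ P Q : MvPolynomial (Fin 2) k, aeval ![Z 0, Z 1] Q ≠ 0 ∧
      f * aeval ![Z 0, Z 1] Q = aeval ![Z 0, Z 1] P) :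
    ∃ ν : F → ℝ, (∀ a b, a ≠ 0 → b ≠ 0 → ν (a * b) = ν a + ν b) ∧
      (∀ a b, a ≠ 0 → b ≠ 0 → a + b ≠ 0 → min (ν a) (ν b) ≤ ν (a + b)) ∧
      (∀ f N m, IsPowMulUnit k Z f N m → ν f = m / p ^ N) := by
  classical
  have hp : (0 : ℝ) < p := by exact_mod_cast hZ.one_lt.trans' zero_lt_one
  have hex := hZ.exists_isPowMulUnit hind hgen
  choose! N m hNm using hex
  have hne : ∀ f N m, IsPowMulUnit k Z f N m → f ≠ 0 := by
    rintro _ N m ⟨ε, -, hε, -, rfl⟩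
    exact mul_ne_zero (zpow_ne_zero _ (hZ.ne_zero N)) hε
  have hν : ∀ f N' m', IsPowMulUnit k Z f N' m' → (m f / p ^ N f : ℝ) = m' / p ^ N' := by
    intro f N' m' h
    have h1 := hZ.isPowMulUnit_add (hNm f (hne _ _ _ h)) N'
    have h2 := hZ.isPowMulUnit_add h (N f)
    rw [add_comm] at h2
    have h3 : (p : ℤ) ^ N' * m f = p ^ N f * m' :=
      le_antisymm (hZ.le_of_isPowMulUnit hind h1 h2) (hZ.le_of_isPowMulUnit hind h2 h1)
    rw [div_eq_div_iff (pow_pos hp _).ne' (pow_pos hp _).ne']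
    have h4 : (p : ℝ) ^ N' * m f = p ^ N f * m' := by exact_mod_cast h3
    linarith
  have hcommon : ∀ a b, a ≠ 0 → b ≠ 0 → ∃ M i j, IsPowMulUnit k Z a M i ∧
      IsPowMulUnit k Z b M j := by
    intro a b ha hb
    refine ⟨N a + N b, p ^ N b * m a, p ^ N a * m b, hZ.isPowMulUnit_add (hNm a ha) (N b), ?_⟩
    have := hZ.isPowMulUnit_add (hNm b hb) (N a)
    rwa [add_comm] at this
  have hmul : ∀ a b, a ≠ 0 → b ≠ 0 →
      (m (a * b) / p ^ N (a * b) : ℝ) = m a / p ^ N a + m b / p ^ N b := by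
    intro a b ha hb
    obtain ⟨M, i, j, h1, h2⟩ := hcommon a b ha hb
    rw [hν _ _ _ h1, hν _ _ _ h2, hν _ _ _ (hZ.isPowMulUnit_mul h1 h2)]
    push_cast
    ring
  have hmono : ∀ i j, pairLocal k (Z i) (Z (i + 1)) ≤ pairLocal k (Z (i + j)) (Z (i + j + 1)) := by
    intro i j
    induction j with
    | zero => exact le_rfl
    | succ j ih => exact ih.trans (hZ.pairLocal_le_succ (i + j))
  have hnonneg : ∀ M, ∀ w ∈ pairLocal k (Z M) (Z (M + 1)), w ≠ 0 → (0 : ℝ) ≤ m w / p ^ N w := by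
    intro M w hw hw0
    have h1 := hZ.isPowMulUnit_add (hNm w hw0) M
    have h2 := hmono M (N w) hw
    rw [add_comm] at h2
    by_contra! hlt
    obtain ⟨ε, hε, hε0, hε', h⟩ := h1
    have hneg : (p : ℤ) ^ M * m w < 0 := by
      have : (m w : ℝ) < 0 := by
        by_contra! hge
        exact absurd (div_nonneg hge (pow_pos hp (N w)).le) (not_le.2 hlt)
      have : m w < 0 := by exact_mod_cast this
      have hp' : (0 : ℤ) < p := by exact_mod_cast hp
      exact mul_neg_of_pos_of_neg (pow_pos hp' _) this
    obtain ⟨j, hj⟩ : ∃ j : ℕ, (p : ℤ) ^ M * m w = -((j : ℤ) + 1) :=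
      ⟨(-((p : ℤ) ^ M * m w) - 1).toNat, by omega⟩
    apply inv_left_notMem_pairLocal (hind (N w + M))
    have h0 := hZ.ne_zero (N w + M)
    have e : (Z (N w + M))⁻¹ = Z (N w + M) ^ j * (w * ε⁻¹) := by
      have h' : w * ε⁻¹ = Z (N w + M) ^ ((p : ℤ) ^ M * m w) := (mul_inv_eq_iff_eq_mul₀ hε0).2 h
      rw [h', hj, zpow_neg, zpow_add₀ h0, zpow_natCast, zpow_one]
      field_simp
    rw [e]
    exact Subring.mul_mem _ (Subring.pow_mem _ (left_mem_pairLocal _ _) _)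
      (Subring.mul_mem _ h2 hε')
  refine ⟨fun f => m f / p ^ N f, hmul, ?_, hν⟩
  have key : ∀ M a b i j, i ≤ j → IsPowMulUnit k Z a M i → IsPowMulUnit k Z b M j →
      a + b ≠ 0 → (m a / p ^ N a : ℝ) ≤ m (a + b) / p ^ N (a + b) := by
    intro M a b i j hij ha hb hab
    rw [hν _ _ _ ha]
    obtain ⟨ε, hε, -, -, rfl⟩ := ha
    obtain ⟨η, hη, -, -, rfl⟩ := hb
    obtain ⟨t, rfl⟩ := Int.le.dest hij
    have h0 := hZ.ne_zero M
    have e : Z M ^ i * ε + Z M ^ (i + t) * η = Z M ^ i * (ε + Z M ^ t * η) := by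
      rw [zpow_add₀ h0, zpow_natCast]
      ring
    rw [e] at hab ⊢
    have h1 : IsPowMulUnit k Z (Z M ^ i) M i :=
      ⟨1, Subring.one_mem _, one_ne_zero, by simp, by simp⟩
    rw [hmul _ _ (left_ne_zero_of_mul hab) (right_ne_zero_of_mul hab), hν _ _ _ h1]
    have := hnonneg M (ε + Z M ^ t * η) (Subring.add_mem _ hε (Subring.mul_mem _
      (Subring.pow_mem _ (left_mem_pairLocal _ _) _) hη)) (right_ne_zero_of_mul hab)
    linarith
  intro a b ha hb hab
  obtain ⟨M, i, j, h1, h2⟩ := hcommon a b ha hb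
  rcases le_total i j with hij | hij
  · exact (min_le_left _ _).trans (key M a b i j hij h1 h2 hab)
  · rw [add_comm] at hab ⊢
    exact (min_le_right _ _).trans (key M b a j i hij h2 h1 hab)

end IsQuadraticChain

/-- The valuation ring of a real-valued additive valuation. -/
def valuationSubringOfAdditive {F : Type} [Field F] (ν : F → ℝ)
    (hmul : ∀ a b, a ≠ 0 → b ≠ 0 → ν (a * b) = ν a + ν b)
    (hadd : ∀ a b, a ≠ 0 → b ≠ 0 → a + b ≠ 0 → min (ν a) (ν b) ≤ ν (a + b)) :
    ValuationSubring F where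
  carrier := {z | z = 0 ∨ (z ≠ 0 ∧ 0 ≤ ν z)}
  zero_mem' := Or.inl rfl
  one_mem' := by
    have := hmul 1 1 one_ne_zero one_ne_zero
    rw [mul_one] at this
    exact Or.inr ⟨one_ne_zero, by linarith⟩
  mul_mem' := by
    rintro a b (rfl | ⟨ha, ha'⟩) (rfl | ⟨hb, hb'⟩)
    · simp
    · simp
    · simp
    · exact Or.inr ⟨mul_ne_zero ha hb, by rw [hmul a b ha hb]; positivity⟩
  add_mem' := by
    rintro a b (rfl | ⟨ha, ha'⟩) (rfl | ⟨hb, hb'⟩)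
    · simp
    · simpa using Or.inr ⟨hb, hb'⟩
    · simpa using Or.inr ⟨ha, ha'⟩
    · by_cases hab : a + b = 0
      · exact Or.inl hab
      · exact Or.inr ⟨hab, (le_min ha' hb').trans (hadd a b ha hb hab)⟩
  neg_mem' := by
    have h1 := hmul 1 1 one_ne_zero one_ne_zero
    have h2 := hmul (-1) (-1) (by simp) (by simp)
    rw [mul_one] at h1
    rw [neg_mul_neg, mul_one] at h2
    rintro a (rfl | ⟨ha, ha'⟩)
    · simp
    · have h3 := hmul (-1) a (by simp) ha
      rw [neg_one_mul] at h3
      exact Or.inr ⟨neg_ne_zero.2 ha, by linarith⟩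
  mem_or_inv_mem' := by
    intro a
    by_cases ha : a = 0
    · exact Or.inl (Or.inl ha)
    have h1 := hmul 1 1 one_ne_zero one_ne_zero
    have h2 := hmul a a⁻¹ ha (inv_ne_zero ha)
    rw [mul_one] at h1
    rw [mul_inv_cancel₀ ha] at h2
    rcases le_total 0 (ν a) with h | h
    · exact Or.inl (Or.inr ⟨ha, h⟩)
    · exact Or.inr (Or.inr ⟨inv_ne_zero ha, by linarith⟩)

theorem valuation_valuationSubringOfAdditive_lt_one_iff {F : Type} [Field F] (ν : F → ℝ)
    (hmul : ∀ a b, a ≠ 0 → b ≠ 0 → ν (a * b) = ν a + ν b)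
    (hadd : ∀ a b, a ≠ 0 → b ≠ 0 → a + b ≠ 0 → min (ν a) (ν b) ≤ ν (a + b)) (z : F) :
    (valuationSubringOfAdditive ν hmul hadd).valuation z < 1 ↔ z = 0 ∨ (z ≠ 0 ∧ 0 < ν z) := by
  by_cases hz : z = 0
  · simp [hz]
  have h1 := hmul 1 1 one_ne_zero one_ne_zero
  have h2 := hmul z z⁻¹ hz (inv_ne_zero hz)
  rw [mul_one] at h1
  rw [mul_inv_cancel₀ hz] at h2
  have h3 : z⁻¹ ∈ valuationSubringOfAdditive ν hmul hadd ↔ 0 ≤ ν z⁻¹ := by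
    change z⁻¹ = 0 ∨ (z⁻¹ ≠ 0 ∧ 0 ≤ ν z⁻¹) ↔ _
    simp [hz]
  rw [← ValuationSubring.valuation_le_one_iff, map_inv₀,
    inv_le_one₀ (by simpa [zero_lt_iff] using hz)] at h3
  rw [← not_le, h3]
  simp only [hz, ne_eq, not_false_eq_true, true_and, false_or, not_le]
  constructor <;> intro <;> linarith

theorem associated_of_prime_of_dvd_unit_mul {S : Type*} [CommRing S] [IsDomain S] {q c d ε : S} (hq : Prime q) (hc : Prime c)
    (hd : Prime d) (hε : IsUnit ε) {m n : ℕ} (h : q ∣ ε * c ^ m * d ^ n) :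
    Associated q c ∨ Associated q d := by
  rcases hq.dvd_or_dvd h with h | h
  · rcases hq.dvd_or_dvd h with h | h
    · exact absurd (isUnit_of_dvd_unit h hε) hq.not_isUnit
    · exact Or.inl (hq.associated_of_dvd hc (hq.dvd_of_dvd_pow h))
  · exact Or.inr (hq.associated_of_dvd hd (hq.dvd_of_dvd_pow h))

section MonomialsInRegularLocalRing

variable {S : Type*} [CommRing S] [IsLocalRing S] [IsNoetherianRing S]

open IsLocalRing

theorem maximalIdeal_eq_span_pair_comm {S : Type*} [CommRing S]
    [IsLocalRing S] {c d : S} (hcd : maximalIdeal S = Ideal.span {c, d}) :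
    maximalIdeal S = Ideal.span {d, c} := by
  rw [hcd, Set.pair_comm]

theorem not_dvd_of_maximalIdeal_eq_span_pair (hdim : ringKrullDim S = 2) {c d : S}
    (hcd : maximalIdeal S = Ideal.span {c, d}) : ¬ c ∣ d := by
  simpa using not_dvd_pow_of_maximalIdeal_eq_span_pair hdim hcd 1

theorem exponent_le_of_unit_mul_pow_eq [IsDomain S] (hdim : ringKrullDim S = 2) {c d : S}
    (hcd : maximalIdeal S = Ideal.span {c, d}) {ε q : S} (hε : IsUnit ε) {a b a' b' : ℕ}
    (h : ε * c ^ a * d ^ b = q * (c ^ a' * d ^ b')) : a' ≤ a := by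
  have hc := prime_of_maximalIdeal_eq_span_pair hdim hcd
  have h1 : c ^ a' ∣ c ^ a * d ^ b := by
    rw [← hε.dvd_mul_left (u := ε), ← mul_assoc, h]
    exact ⟨q * d ^ b', by ring⟩
  have h2 : c ^ a' ∣ c ^ a := (hc.pow_dvd_of_dvd_mul_right _
    (not_dvd_pow_of_maximalIdeal_eq_span_pair hdim hcd b) h1)
  exact (pow_dvd_pow_iff hc.ne_zero hc.not_isUnit).1 h2

section Curve

variable {z w e₁ e₂ : S} {n : ℕ}

theorem maximalIdeal_eq_span_curve {S : Type*} [CommRing S] [IsLocalRing S] {z w e₁ e₂ : S}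
    {n : ℕ} (hzw : maximalIdeal S = Ideal.span {z, w}) (he₂ : IsUnit e₂)
    (hn : n ≠ 0) : maximalIdeal S = Ideal.span {w ^ n * e₁ + z * e₂, w} := by
  obtain ⟨n, rfl⟩ := Nat.exists_eq_add_one_of_ne_zero hn
  obtain ⟨f, hf⟩ := he₂.exists_right_inv
  rw [hzw]
  apply le_antisymm <;> rw [Ideal.span_le, Set.pair_subset_iff] <;>
    simp only [SetLike.mem_coe, Ideal.mem_span_pair]
  · exact ⟨⟨f, -w ^ n * e₁ * f, by linear_combination z * hf⟩, ⟨0, 1, by ring⟩⟩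
  · exact ⟨⟨e₂, w ^ n * e₁, by ring⟩, ⟨0, 1, by ring⟩⟩

theorem curve_not_dvd (hdim : ringKrullDim S = 2) (hzw : maximalIdeal S = Ideal.span {z, w})
    (he₁ : IsUnit e₁) (he₂ : IsUnit e₂) (hn : n ≠ 0) (i j : ℕ) :
    ¬ w ^ n * e₁ + z * e₂ ∣ z ^ i * w ^ j := by
  have hq := maximalIdeal_eq_span_curve (e₁ := e₁) hzw he₂ hn
  have hprime := prime_of_maximalIdeal_eq_span_pair hdim hq
  have hw := not_dvd_pow_of_maximalIdeal_eq_span_pair hdim hq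
  intro h
  rcases hprime.dvd_or_dvd h with h | h
  · have h1 := hprime.dvd_of_dvd_pow h
    have h2 : w ^ n * e₁ + z * e₂ ∣ w ^ n * e₁ := by
      have := dvd_sub (dvd_refl _) (h1.mul_right e₂)
      rwa [add_sub_cancel_right] at this
    exact hw n (he₁.dvd_mul_right.1 h2)
  · exact hw j h

end Curve

theorem eq_of_dvd_unit_mul_pow_sub (hdim : ringKrullDim S = 2) {q w : S}
    (hq : maximalIdeal S = Ideal.span {q, w}) {ε η : S} (hε : IsUnit ε) (hη : IsUnit η) {m n : ℕ}
    (h : q ∣ ε * w ^ m - η * w ^ n) : m = n := by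
  have hprime := prime_of_maximalIdeal_eq_span_pair hdim hq
  have hw := not_dvd_pow_of_maximalIdeal_eq_span_pair hdim hq
  have hwm : w ∈ maximalIdeal S := hq ▸ Ideal.subset_span (by simp)
  have key : ∀ {ε η : S} {m n : ℕ}, IsUnit ε → m < n → ¬ q ∣ ε * w ^ m - η * w ^ n := by
    intro ε η m n hε hmn h
    obtain ⟨t, rfl⟩ := Nat.exists_eq_add_of_lt hmn
    have e : ε * w ^ m - η * w ^ (m + t + 1) = w ^ m * (ε - η * w ^ t * w) := by ring
    rw [e] at h
    rcases hprime.dvd_or_dvd h with h | h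
    · exact hw m h
    · have h1 : ε - η * w ^ t * w ∈ maximalIdeal S :=
        Ideal.mem_of_dvd _ h (hq ▸ Ideal.subset_span (by simp))
      have h2 := (maximalIdeal S).add_mem h1 ((maximalIdeal S).mul_mem_left (η * w ^ t) hwm)
      rw [sub_add_cancel] at h2
      exact (mem_maximalIdeal _).1 h2 hε
  rcases lt_trichotomy m n with hmn | hmn | hmn
  · exact absurd h (key hε hmn)
  · exact hmn
  · exact absurd (by rwa [← dvd_neg, neg_sub] at h) (key (η := ε) hη hmn)

theorem exists_unit_dvd_sub_mul (hdim : ringKrullDim S = 2) {q w d : S}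
    (hqw : maximalIdeal S = Ideal.span {q, w}) (hqd : maximalIdeal S = Ideal.span {q, d}) :
    ∃ μ, IsUnit μ ∧ q ∣ d - μ * w := by
  have hd : d ∈ Ideal.span {q, w} := by
    rw [← hqw, hqd]
    exact Ideal.subset_span (by simp)
  have hw : w ∈ Ideal.span {q, d} := by
    rw [← hqd, hqw]
    exact Ideal.subset_span (by simp)
  rw [Ideal.mem_span_pair] at hd hw
  obtain ⟨h, μ, hμ⟩ := hd
  obtain ⟨h', ν, hν⟩ := hw
  refine ⟨μ, ?_, ⟨h, by rw [← hμ]; ring⟩⟩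
  by_contra hu
  have h1 : q ∣ (1 - ν * μ) * w := ⟨h' + ν * h, by
    linear_combination -hν - ν * hμ⟩
  rcases (prime_of_maximalIdeal_eq_span_pair hdim hqw).dvd_or_dvd h1 with h1 | h1
  · have h2 : 1 - ν * μ ∈ maximalIdeal S :=
      Ideal.mem_of_dvd _ h1 (hqw ▸ Ideal.subset_span (by simp))
    have h3 := (maximalIdeal S).add_mem h2 ((maximalIdeal S).mul_mem_left ν
      ((mem_maximalIdeal μ).2 hu))
    rw [sub_add_cancel] at h3
    exact (mem_maximalIdeal _).1 h3 isUnit_one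
  · exact not_dvd_of_maximalIdeal_eq_span_pair hdim hqw h1

theorem not_pow_dvd_mul_pow [IsDomain S] (hdim : ringKrullDim S = 2) {z w d : S}
    (hzw : maximalIdeal S = Ideal.span {z, w}) (hd : Prime d) {i j N : ℕ} (hi : i < N)
    (hj : j < N) : ¬ d ^ N ∣ z ^ i * w ^ j := by
  have hz := prime_of_maximalIdeal_eq_span_pair hdim hzw
  have hw := prime_of_maximalIdeal_eq_span_pair hdim (maximalIdeal_eq_span_pair_comm hzw)
  have key : ∀ {t : S} {i : ℕ}, Prime t → i < N → d ∣ t → ¬ d ^ N ∣ t ^ i := by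
    intro t i ht hi hdt h
    have h1 := (hd.associated_of_dvd ht hdt)
    rw [(h1.pow_pow (n := N)).dvd_iff_dvd_left, pow_dvd_pow_iff ht.ne_zero ht.not_isUnit] at h
    omega
  intro h
  have hN : N ≠ 0 := by omega
  by_cases hdz : d ∣ z
  · have hdw : ¬ d ∣ w := fun hdw => not_dvd_of_maximalIdeal_eq_span_pair hdim hzw
      ((hd.associated_of_dvd hz hdz).symm.dvd.trans hdw)
    exact key hz hi hdz (hd.pow_dvd_of_dvd_mul_right _ (fun h' => hdw (hd.dvd_of_dvd_pow h')) h)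
  · have h1 := hd.pow_dvd_of_dvd_mul_left _ (fun h' => hdz (hd.dvd_of_dvd_pow h')) h
    exact key hw hj (hd.dvd_of_dvd_pow ((dvd_pow_self d hN).trans h1)) h1

theorem exists_eq_unit_mul_pow_sq_of_monomial_curve [IsDomain S] (hdim : ringKrullDim S = 2) {z w c d : S}
    (hzw : maximalIdeal S = Ideal.span {z, w}) (hcd : maximalIdeal S = Ideal.span {c, d})
    {p j : ℕ} (hp : 1 < p) (hj : j < p) {e₁ e₂ h η ε₁ ε₂ a b : S} (he₁ : IsUnit e₁)
    (he₂ : IsUnit e₂) (hη : IsUnit η) (hε₁ : IsUnit ε₁) (hε₂ : IsUnit ε₂)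
    (ha : a = w ^ j * (w ^ (p - j) * e₁ + z * e₂)) (hb : b = h * a + η * (z ^ p * w ^ (j * p)))
    {m₁₁ m₁₂ m₂₁ m₂₂ : ℕ} (ha' : a = ε₁ * c ^ m₁₁ * d ^ m₁₂) (hb' : b = ε₂ * c ^ m₂₁ * d ^ m₂₂) :
    ∃ d' : S, b = ε₂ * d' ^ (p ^ 2) ∧ ¬ d' ^ (p ^ 2) ∣ z ^ p * w ^ (j * p + j) := by
  have hn : p - j ≠ 0 := by omega
  have hqw := maximalIdeal_eq_span_curve (e₁ := e₁) hzw he₂ hn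
  have hndvd := curve_not_dvd hdim hzw he₁ he₂ hn
  set q := w ^ (p - j) * e₁ + z * e₂ with hqdef
  have hq := prime_of_maximalIdeal_eq_span_pair hdim hqw
  have hqb : ¬ q ∣ b := by
    intro hqb
    have h1 : q ∣ η * (z ^ p * w ^ (j * p)) := by
      have := dvd_sub hqb (show q ∣ h * a from ha ▸ ⟨h * w ^ j, by ring⟩)
      rwa [hb, add_sub_cancel_left] at this
    exact hndvd _ _ (hη.dvd_mul_left.1 h1)
  -- the case where `c` is the parameter defining the curve `q = 0`
  have main : ∀ {c d : S} {m n : ℕ}, maximalIdeal S = Ideal.span {c, d} → Associated q c →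
      b = ε₂ * c ^ m * d ^ n →
      ∃ d' : S, b = ε₂ * d' ^ (p ^ 2) ∧ ¬ d' ^ (p ^ 2) ∣ z ^ p * w ^ (j * p + j) := by
    intro c d m n hcd hqc hb'
    have hm : m = 0 := by
      by_contra hm
      rw [hb'] at hqb
      exact hqb (((hqc.dvd.trans (dvd_pow_self c hm)).mul_left _).mul_right _)
    subst hm
    rw [pow_zero, mul_one] at hb'
    have hqd : maximalIdeal S = Ideal.span {q, d} := by
      rw [hcd, Ideal.span_insert, Ideal.span_insert,
        Ideal.span_singleton_eq_span_singleton.2 hqc]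
    obtain ⟨μ, hμ, hdμ⟩ := exists_unit_dvd_sub_mul hdim hqw hqd
    obtain ⟨f, hf⟩ := he₂.exists_right_inv
    have hfu : IsUnit f := IsUnit.of_mul_eq_one e₂ (by rw [mul_comm]; exact hf)
    have h1 : q ∣ z - (-(e₁ * f) * w ^ (p - j)) := ⟨f, by
      rw [hqdef]; linear_combination -z * hf⟩
    have h2 := h1.trans (sub_dvd_pow_sub_pow z (-(e₁ * f) * w ^ (p - j)) p)
    have h3 := hdμ.trans (sub_dvd_pow_sub_pow d (μ * w) n)
    have hpow : (w ^ (p - j)) ^ p * w ^ (j * p) = w ^ (p ^ 2) := by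
      rw [← pow_mul, ← pow_add, ← add_mul, Nat.sub_add_cancel hj.le, sq]
    have h4 : q ∣ ε₂ * μ ^ n * w ^ n - η * (-(e₁ * f)) ^ p * w ^ (p ^ 2) := by
      have e : ε₂ * μ ^ n * w ^ n - η * (-(e₁ * f)) ^ p * w ^ (p ^ 2) =
          h * a + η * w ^ (j * p) * (z ^ p - (-(e₁ * f) * w ^ (p - j)) ^ p) -
            ε₂ * (d ^ n - (μ * w) ^ n) := by
        rw [mul_pow, mul_pow]
        linear_combination hb - hb' + η * (-(e₁ * f)) ^ p * hpow
      rw [e]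
      exact dvd_sub (dvd_add (ha ▸ ⟨h * w ^ j, by ring⟩) (h2.mul_left _)) (h3.mul_left _)
    have hn2 := eq_of_dvd_unit_mul_pow_sub hdim hqw (hε₂.mul (hμ.pow n))
      (hη.mul ((he₁.mul hfu).neg.pow p)) h4
    subst hn2
    refine ⟨d, hb', not_pow_dvd_mul_pow hdim hzw (prime_of_maximalIdeal_eq_span_pair hdim
      (maximalIdeal_eq_span_pair_comm hcd)) (by nlinarith) ?_⟩
    have : (j + 1) * (p + 1) ≤ p * (p + 1) := Nat.mul_le_mul_right _ hj
    nlinarith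
  have hc := prime_of_maximalIdeal_eq_span_pair hdim hcd
  have hd := prime_of_maximalIdeal_eq_span_pair hdim (maximalIdeal_eq_span_pair_comm hcd)
  have hqa : q ∣ ε₁ * c ^ m₁₁ * d ^ m₁₂ := ha' ▸ ha ▸ ⟨w ^ j, by ring⟩
  rcases associated_of_prime_of_dvd_unit_mul hq hc hd hε₁ hqa with hqc | hqd
  · exact main hcd hqc hb'
  · exact main (maximalIdeal_eq_span_pair_comm hcd) hqd (m := m₂₂) (n := m₂₁) (by rw [hb']; ring)

end MonomialsInRegularLocalRing

section CenteredSubring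

variable {k F : Type} [Field k] [Field F] [Algebra k F]
variable {Γ₀ : Type*} [LinearOrderedCommGroupWithZero Γ₀] {v : Valuation F Γ₀} {T : Subring F}

theorem MvPolynomial.exists_eq_C_add_X_mul_add_X_mul (f : MvPolynomial (Fin 2) k) :
    ∃ f₁ f₂, f = C (constantCoeff f) + X 0 * f₁ + X 1 * f₂ := by
  induction f using MvPolynomial.induction_on with
  | C c => exact ⟨0, 0, by simp⟩
  | add f g hf hg =>
    obtain ⟨f₁, f₂, hf⟩ := hf
    obtain ⟨g₁, g₂, hg⟩ := hg
    refine ⟨f₁ + g₁, f₂ + g₂, ?_⟩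
    rw [map_add, map_add]
    linear_combination hf + hg
  | mul_X f i _ =>
    fin_cases i
    · exact ⟨f, 0, by simp [mul_comm]⟩
    · exact ⟨0, f, by simp [mul_comm]⟩

theorem valuation_aeval_le_one (hk : ∀ c : k, c ≠ 0 → v (algebraMap k F c) = 1) {r s : F}
    (hr : v r < 1) (hs : v s < 1) (f : MvPolynomial (Fin 2) k) : v (aeval ![r, s] f) ≤ 1 := by
  induction f using MvPolynomial.induction_on with
  | C c =>
    rw [algHom_C]
    by_cases hc : c = 0
    · simp [hc]
    · exact (hk c hc).le
  | add f g hf hg =>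
    rw [map_add]
    exact (v.map_add _ _).trans (max_le hf hg)
  | mul_X f i hf =>
    rw [map_mul, aeval_X, map_mul]
    refine mul_le_one' hf ?_
    fin_cases i
    · exact hr.le
    · exact hs.le

theorem valuation_mul_add_mul_lt_one {r s a b : F} (hr : v r < 1) (hs : v s < 1) (ha : v a ≤ 1)
    (hb : v b ≤ 1) : v (r * a + s * b) < 1 := by
  refine (v.map_add _ _).trans_lt (max_lt ?_ ?_) <;> rw [map_mul]
  · exact (mul_le_of_le_one_right' ha).trans_lt hr
  · exact (mul_le_of_le_one_right' hb).trans_lt hs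

theorem valuation_add_eq_one {a b : F} (ha : v a = 1) (hb : v b < 1) : v (a + b) = 1 := by
  rw [v.map_add_eq_of_lt_left (by rwa [ha]), ha]

theorem ne_zero_of_valuation_eq_one {a : F} (ha : v a = 1) : a ≠ 0 := by
  rintro rfl
  simp at ha

theorem valuation_aeval_eq_one (hk : ∀ c : k, c ≠ 0 → v (algebraMap k F c) = 1) {r s : F}
    (hr : v r < 1) (hs : v s < 1) {f : MvPolynomial (Fin 2) k} (hf : constantCoeff f ≠ 0) :
    v (aeval ![r, s] f) = 1 := by
  obtain ⟨f₁, f₂, h⟩ := f.exists_eq_C_add_X_mul_add_X_mul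
  rw [h, add_assoc, map_add, algHom_C]
  refine valuation_add_eq_one (hk _ hf) ?_
  simpa using valuation_mul_add_mul_lt_one hr hs (valuation_aeval_le_one hk hr hs f₁)
    (valuation_aeval_le_one hk hr hs f₂)

/-- The valuation ring of `v` dominates the local ring `T`. -/
def IsCentered (v : Valuation F Γ₀) (T : Subring F) : Prop :=
  ∀ z ∈ T, v z ≤ 1 ∧ (v z = 1 → z⁻¹ ∈ T)

namespace IsCentered

theorem isUnit_iff (hT : IsCentered v T) (z : T) : IsUnit z ↔ v z = 1 := by
  constructor
  · intro h
    obtain ⟨w, hw⟩ := h.exists_right_inv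
    have h1 : v (z : F) * v (w : F) = 1 := by
      rw [← map_mul, ← Subring.coe_mul, hw, Subring.coe_one, map_one]
    exact eq_one_of_one_le_mul_left (hT z z.2).1 (hT w w.2).1 h1.ge
  · intro h
    have h0 : (z : F) ≠ 0 := by
      rintro h0
      simp [h0] at h
    exact IsUnit.of_mul_eq_one ⟨_, (hT z z.2).2 h⟩ (Subtype.ext (mul_inv_cancel₀ h0))

theorem isLocalRing (hT : IsCentered v T) : IsLocalRing T := by
  refine IsLocalRing.of_nonunits_add fun a b ha hb => ?_
  rw [mem_nonunits_iff, hT.isUnit_iff] at *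
  have ha' := lt_of_le_of_ne (hT a a.2).1 ha
  have hb' := lt_of_le_of_ne (hT b b.2).1 hb
  exact ((v.map_add _ _).trans_lt (max_lt ha' hb')).ne

theorem mem_maximalIdeal_iff [IsLocalRing T] (hT : IsCentered v T) (z : T) :
    z ∈ IsLocalRing.maximalIdeal T ↔ v z < 1 := by
  rw [IsLocalRing.mem_maximalIdeal, mem_nonunits_iff, hT.isUnit_iff]
  exact (lt_iff_le_and_ne.trans (and_iff_right (hT z z.2).1)).symm

theorem maximalIdeal_eq_span_pair [IsLocalRing T] (hT : IsCentered v T) {c d : F} (hc : c ∈ T)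
    (hd : d ∈ T) (hvc : v c < 1) (hvd : v d < 1)
    (h : ∀ z ∈ T, v z < 1 → ∃ h₁ ∈ T, ∃ h₂ ∈ T, z = h₁ * c + h₂ * d) :
    IsLocalRing.maximalIdeal T = Ideal.span {⟨c, hc⟩, ⟨d, hd⟩} := by
  apply le_antisymm
  · intro z hz
    obtain ⟨h₁, hh₁, h₂, hh₂, e⟩ := h z z.2 ((hT.mem_maximalIdeal_iff z).1 hz)
    exact Ideal.mem_span_pair.2 ⟨⟨h₁, hh₁⟩, ⟨h₂, hh₂⟩, Subtype.ext e.symm⟩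
  · rw [Ideal.span_le, Set.pair_subset_iff]
    exact ⟨(hT.mem_maximalIdeal_iff _).2 hvc, (hT.mem_maximalIdeal_iff _).2 hvd⟩

theorem div_mem (hT : IsCentered v T) {a b : F} (ha : a ∈ T) (hb : b ∈ T) (h : v b = 1) :
    a / b ∈ T := by
  rw [div_eq_mul_inv]
  exact T.mul_mem ha ((hT b hb).2 h)

theorem pairLocal_le (hT : IsCentered v T) (hk : ∀ c : k, c ≠ 0 → v (algebraMap k F c) = 1)
    (hkT : ∀ c : k, algebraMap k F c ∈ T) {r s : F} (hr : r ∈ T) (hs : s ∈ T) (hvr : v r < 1)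
    (hvs : v s < 1) : pairLocal k r s ≤ T := by
  have hmem : ∀ f : MvPolynomial (Fin 2) k, aeval ![r, s] f ∈ T := by
    intro f
    induction f using MvPolynomial.induction_on with
    | C c => simpa using hkT c
    | add f g hf hg => simpa using T.add_mem hf hg
    | mul_X f i hf =>
      rw [map_mul, aeval_X]
      refine T.mul_mem hf ?_
      fin_cases i
      · exact hr
      · exact hs
  rintro z ⟨f, g, hg, h⟩
  have hg1 := valuation_aeval_eq_one hk hvr hvs hg
  have hg0 := ne_zero_of_valuation_eq_one hg1
  have : z = aeval ![r, s] f / aeval ![r, s] g := (eq_div_iff hg0).2 h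
  rw [this]
  exact hT.div_mem (hmem f) (hmem g) hg1

end IsCentered

theorem isCentered_valuationSubring (V : ValuationSubring F) :
    IsCentered V.valuation V.toSubring := by
  intro z hz
  refine ⟨(V.valuation_le_one_iff z).2 hz, fun h => ?_⟩
  rw [ValuationSubring.mem_toSubring, ← V.valuation_le_one_iff, map_inv₀, h, inv_one]

theorem Dominates.isCentered {V : ValuationSubring F} (h : Dominates V.toSubring T) :
    IsCentered V.valuation T := by
  obtain ⟨hle, h⟩ := h
  intro z hz
  refine ⟨(V.valuation_le_one_iff z).2 (hle hz), fun h1 => ?_⟩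
  have hu : IsUnit (⟨z, hz⟩ : T) := by
    rw [← not_not (a := IsUnit _), ← h z hz (hle hz), not_not,
      (isCentered_valuationSubring V).isUnit_iff]
    exact h1
  obtain ⟨w, hw⟩ := hu.exists_right_inv
  have : z * w = 1 := congrArg Subtype.val hw
  rw [inv_eq_of_mul_eq_one_right this]
  exact w.2

theorem IsCentered.dominates {V : ValuationSubring F} (h : IsCentered V.valuation T) :
    Dominates V.toSubring T := by
  refine ⟨fun z hz => (V.valuation_le_one_iff z).1 (h z hz).1, fun z hz hz' => ?_⟩
  rw [h.isUnit_iff, (isCentered_valuationSubring V).isUnit_iff]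

section Residue

variable {r s : F}

theorem exists_eq_algebraMap_add_of_mem_pairLocal
    (hk : ∀ c : k, c ≠ 0 → v (algebraMap k F c) = 1) (hr : v r < 1) (hs : v s < 1) {z : F}
    (hz : z ∈ pairLocal k r s) : ∃ c : k, ∃ h₁ ∈ pairLocal k r s, ∃ h₂ ∈ pairLocal k r s,
      z = algebraMap k F c + (h₁ * r + h₂ * s) := by
  obtain ⟨f, g, hg, h⟩ := hz
  change z * aeval ![r, s] g = aeval ![r, s] f at h
  have hg1 := valuation_aeval_eq_one hk hr hs hg
  have hg0 := ne_zero_of_valuation_eq_one hg1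
  have hinv := inv_aeval_mem_pairLocal hg hg0
  obtain ⟨f₁, f₂, hf'⟩ := f.exists_eq_C_add_X_mul_add_X_mul
  obtain ⟨g₁, g₂, hg'⟩ := g.exists_eq_C_add_X_mul_add_X_mul
  have hf'' := congrArg (aeval ![r, s]) hf'
  have hg'' := congrArg (aeval ![r, s]) hg'
  simp only [map_add, map_mul, algHom_C, aeval_X, Matrix.cons_val_zero, Matrix.cons_val_one]
    at hf'' hg''
  set f₀ := constantCoeff f
  set g₀ := constantCoeff g
  refine ⟨f₀ / g₀,
    (aeval ![r, s] f₁ - algebraMap k F (f₀ / g₀) * aeval ![r, s] g₁) * (aeval ![r, s] g)⁻¹,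
    Subring.mul_mem _ (Subring.sub_mem _ (aeval_mem_pairLocal _ _ _) (Subring.mul_mem _
      (algebraMap_mem_pairLocal _ _ _) (aeval_mem_pairLocal _ _ _))) hinv,
    (aeval ![r, s] f₂ - algebraMap k F (f₀ / g₀) * aeval ![r, s] g₂) * (aeval ![r, s] g)⁻¹,
    Subring.mul_mem _ (Subring.sub_mem _ (aeval_mem_pairLocal _ _ _) (Subring.mul_mem _
      (algebraMap_mem_pairLocal _ _ _) (aeval_mem_pairLocal _ _ _))) hinv, ?_⟩
  have hc : algebraMap k F (f₀ / g₀) * algebraMap k F g₀ = algebraMap k F f₀ := by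
    rw [← map_mul, div_mul_cancel₀ _ hg]
  have hz : z = aeval ![r, s] f / aeval ![r, s] g := (eq_div_iff hg0).2 h
  rw [hz, div_eq_iff hg0]
  field_simp
  linear_combination hf'' - algebraMap k F (f₀ / g₀) * hg'' - hc

theorem isCentered_pairLocal (hk : ∀ c : k, c ≠ 0 → v (algebraMap k F c) = 1) (hr : v r < 1)
    (hs : v s < 1) : IsCentered v (pairLocal k r s) := by
  rintro z ⟨f, g, hg, h⟩
  change z * aeval ![r, s] g = aeval ![r, s] f at h
  have hg1 := valuation_aeval_eq_one hk hr hs hg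
  have hvz : v z = v (aeval ![r, s] f) := by rw [← h, map_mul, hg1, mul_one]
  refine ⟨hvz ▸ valuation_aeval_le_one hk hr hs f, fun h1 => ?_⟩
  have hz0 := ne_zero_of_valuation_eq_one h1
  refine ⟨g, f, fun hf => ?_, ?_⟩
  · obtain ⟨f₁, f₂, hf'⟩ := f.exists_eq_C_add_X_mul_add_X_mul
    rw [hf, C_0, zero_add] at hf'
    have := valuation_mul_add_mul_lt_one hr hs (valuation_aeval_le_one hk hr hs f₁)
      (valuation_aeval_le_one hk hr hs f₂)
    rw [hvz, hf'] at h1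
    simp only [map_add, map_mul, aeval_X, Matrix.cons_val_zero, Matrix.cons_val_one] at h1 this
    exact this.ne h1
  · change z⁻¹ * aeval ![r, s] f = aeval ![r, s] g
    rw [← h, inv_mul_cancel_left₀ hz0]

theorem exists_eq_mul_add_mul_of_mem_pairLocal
    (hk : ∀ c : k, c ≠ 0 → v (algebraMap k F c) = 1) (hr : v r < 1) (hs : v s < 1) {z : F}
    (hz : z ∈ pairLocal k r s) (hvz : v z < 1) :
    ∃ h₁ ∈ pairLocal k r s, ∃ h₂ ∈ pairLocal k r s, z = h₁ * r + h₂ * s := by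
  obtain ⟨c, h₁, hh₁, h₂, hh₂, rfl⟩ := exists_eq_algebraMap_add_of_mem_pairLocal hk hr hs hz
  have hcen := isCentered_pairLocal hk hr hs
  refine ⟨h₁, hh₁, h₂, hh₂, ?_⟩
  have hc : c = 0 := by
    by_contra hc
    refine hvz.ne (valuation_add_eq_one (hk c hc) ?_)
    rw [mul_comm h₁, mul_comm h₂]
    exact valuation_mul_add_mul_lt_one hr hs (hcen _ hh₁).1 (hcen _ hh₂).1
  rw [hc, map_zero, zero_add]

theorem maximalIdeal_pairLocal_eq (hk : ∀ c : k, c ≠ 0 → v (algebraMap k F c) = 1)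
    (hr : v r < 1) (hs : v s < 1) [IsLocalRing (pairLocal k r s)] :
    IsLocalRing.maximalIdeal (pairLocal k r s) =
      Ideal.span {⟨r, left_mem_pairLocal r s⟩, ⟨s, right_mem_pairLocal r s⟩} :=
  (isCentered_pairLocal hk hr hs).maximalIdeal_eq_span_pair _ _ hr hs fun _ hz hvz =>
    exists_eq_mul_add_mul_of_mem_pairLocal hk hr hs hz hvz

end Residue

theorem exists_derivation_eq_of_mem_pairLocal
    (hk : ∀ c : k, c ≠ 0 → v (algebraMap k F c) = 1) {r s : F} (hr : v r < 1) (hs : v s < 1)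
    {z : F} (hz : z ∈ pairLocal k r s) :
    ∃ z₁ ∈ pairLocal k r s, ∃ z₂ ∈ pairLocal k r s, ∀ D : Derivation k F F,
      D z = z₁ * D r + z₂ * D s := by
  have key : ∀ f : MvPolynomial (Fin 2) k, ∃ f₁ f₂ : MvPolynomial (Fin 2) k,
      ∀ D : Derivation k F F,
        D (aeval ![r, s] f) = aeval ![r, s] f₁ * D r + aeval ![r, s] f₂ * D s := by
    intro f
    induction f using MvPolynomial.induction_on with
    | C c => exact ⟨0, 0, fun D => by simp⟩
    | add f g hf hg =>
      obtain ⟨f₁, f₂, hf⟩ := hf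
      obtain ⟨g₁, g₂, hg⟩ := hg
      refine ⟨f₁ + g₁, f₂ + g₂, fun D => ?_⟩
      simp only [map_add, hf, hg]
      ring
    | mul_X f i hf =>
      obtain ⟨f₁, f₂, hf⟩ := hf
      fin_cases i
      · refine ⟨X 0 * f₁ + f, X 0 * f₂, fun D => ?_⟩
        simp [hf]
        ring
      · refine ⟨X 1 * f₁, X 1 * f₂ + f, fun D => ?_⟩
        simp [hf]
        ring
  have hz' := hz
  obtain ⟨f, g, hg, h⟩ := hz'
  change z * aeval ![r, s] g = aeval ![r, s] f at h
  have hg0 := ne_zero_of_valuation_eq_one (valuation_aeval_eq_one hk hr hs hg)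
  have hinv := inv_aeval_mem_pairLocal hg hg0
  obtain ⟨f₁, f₂, hf'⟩ := key f
  obtain ⟨g₁, g₂, hg'⟩ := key g
  have hmem : ∀ f g : MvPolynomial (Fin 2) k,
      (aeval ![r, s] f - z * aeval ![r, s] g) * (aeval ![r, s] _)⁻¹ ∈ pairLocal k r s :=
    fun f g => Subring.mul_mem _ (Subring.sub_mem _ (aeval_mem_pairLocal _ _ _)
      (Subring.mul_mem _ hz (aeval_mem_pairLocal _ _ _))) hinv
  refine ⟨_, hmem f₁ g₁, _, hmem f₂ g₂, fun D => ?_⟩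
  have hD := congrArg D h
  rw [D.leibniz, hf', hg', smul_eq_mul, smul_eq_mul] at hD
  field_simp
  linear_combination hD

end CenteredSubring

section MonomialPair

variable {k F : Type} [Field k] [Field F] [Algebra k F]
variable {Γ₀ : Type*} [LinearOrderedCommGroupWithZero Γ₀] {v : Valuation F Γ₀} {T : Subring F}

variable (k v T) in
/-- Two independent linear combinations of `r` and `s` over `k[r, s]` localized at the origin are
independent monomials in `c` and `d` up to units of `T`. -/
def IsMonomialPair (c d r s : F) : Prop :=
  ∃ α ∈ pairLocal k r s, ∃ β ∈ pairLocal k r s, ∃ γ ∈ pairLocal k r s, ∃ δ ∈ pairLocal k r s,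
    v (α * δ - β * γ) = 1 ∧ ∃ ε₁ ∈ T, ∃ ε₂ ∈ T, v ε₁ = 1 ∧ v ε₂ = 1 ∧
      ∃ m₁₁ m₁₂ m₂₁ m₂₂ : ℕ, m₁₁ * m₂₂ ≠ m₁₂ * m₂₁ ∧
        α * r + β * s = ε₁ * c ^ m₁₁ * d ^ m₁₂ ∧ γ * r + δ * s = ε₂ * c ^ m₂₁ * d ^ m₂₂

theorem IsMonomialPair.comm {c d r s : F} (h : IsMonomialPair k v T c d r s) :
    IsMonomialPair k v T c d s r := by
  obtain ⟨α, hα, β, hβ, γ, hγ, δ, hδ, hdet, ε₁, hε₁, ε₂, hε₂, hv₁, hv₂, m₁₁, m₁₂, m₂₁, m₂₂, hm,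
    ha, hb⟩ := h
  rw [pairLocal_comm] at hα hβ hγ hδ
  refine ⟨β, hβ, α, hα, δ, hδ, γ, hγ, ?_, ε₁, hε₁, ε₂, hε₂, hv₁, hv₂, m₁₁, m₁₂, m₂₁, m₂₂, hm,
    by rw [← ha]; ring, by rw [← hb]; ring⟩
  rw [← hdet, ← Valuation.map_neg]
  congr 1
  ring

theorem IsMonomialPair.blowup [IsLocalRing T] [IsNoetherianRing T] (hT : IsCentered v T)
    (hdim : ringKrullDim T = 2) {c d : T}
    (hcd : IsLocalRing.maximalIdeal T = Ideal.span {c, d})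
    (hk : ∀ c : k, c ≠ 0 → v (algebraMap k F c) = 1) (hkT : ∀ c : k, algebraMap k F c ∈ T)
    {r s t : F} (hs : s ∈ T) (ht : t ∈ T) (hvs : v s < 1) (hvt : v t < 1) (hs0 : s ≠ 0) (μ : k)
    (hr : r = s * (algebraMap k F μ + t)) (h : IsMonomialPair k v T c d r s) :
    IsMonomialPair k v T c d s t := by
  have hcen := isCentered_pairLocal hk hvs hvt
  set L := pairLocal k s t with hL
  have hsL : s ∈ L := left_mem_pairLocal s t
  have htL : t ∈ L := right_mem_pairLocal s t
  have hkL : ∀ c : k, algebraMap k F c ∈ L := algebraMap_mem_pairLocal s t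
  have hμtL : algebraMap k F μ + t ∈ L := L.add_mem (hkL μ) htL
  have hvr : v r < 1 := by
    rw [hr, map_mul]
    exact (mul_le_of_le_one_right' (hcen _ hμtL).1).trans_lt hvs
  have hrL : r ∈ L := hr ▸ L.mul_mem hsL hμtL
  have hle : pairLocal k r s ≤ L := hcen.pairLocal_le hk hkL hrL hsL hvr hvs
  have hLT : L ≤ T := hT.pairLocal_le hk hkT hs ht hvs hvt
  have hexp : ∀ f ∈ pairLocal k r s, ∃ f₀ : k, ∃ f₁ ∈ L, f = algebraMap k F f₀ + f₁ * s := by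
    intro f hf
    obtain ⟨f₀, h₁, hh₁, h₂, hh₂, e⟩ := exists_eq_algebraMap_add_of_mem_pairLocal hk hvr hvs hf
    exact ⟨f₀, h₁ * (algebraMap k F μ + t) + h₂,
      L.add_mem (L.mul_mem (hle hh₁) hμtL) (hle hh₂), by rw [e, hr]; ring⟩
  -- the case where the first combination is `s` times a unit
  have main : ∀ {α β γ δ ε₁ ε₂ : F} {m₁₁ m₁₂ m₂₁ m₂₂ : ℕ}, α ∈ pairLocal k r s →
      β ∈ pairLocal k r s → γ ∈ pairLocal k r s → δ ∈ pairLocal k r s →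
      v (α * δ - β * γ) = 1 → ε₁ ∈ T → ε₂ ∈ T → v ε₁ = 1 → v ε₂ = 1 →
      m₁₁ * m₂₂ ≠ m₁₂ * m₂₁ → α * r + β * s = ε₁ * c ^ m₁₁ * d ^ m₁₂ →
      γ * r + δ * s = ε₂ * c ^ m₂₁ * d ^ m₂₂ → v (α * (algebraMap k F μ + t) + β) = 1 →
      IsMonomialPair k v T c d s t := by
    intro α β γ δ ε₁ ε₂ m₁₁ m₁₂ m₂₁ m₂₂ hα hβ hγ hδ hdet hε₁ hε₂ hv₁ hv₂ hm ha hb hva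
    set a := α * (algebraMap k F μ + t) + β with hadef
    set b := γ * (algebraMap k F μ + t) + δ with hbdef
    have haL : a ∈ L := L.add_mem (L.mul_mem (hle hα) hμtL) (hle hβ)
    have hbL : b ∈ L := L.add_mem (L.mul_mem (hle hγ) hμtL) (hle hδ)
    have ha0 := ne_zero_of_valuation_eq_one hva
    have ha' : a * s = ε₁ * c ^ m₁₁ * d ^ m₁₂ := by rw [← ha, hr, hadef]; ring
    have hb' : b * s = ε₂ * c ^ m₂₁ * d ^ m₂₂ := by rw [← hb, hr, hbdef]; ring
    have hε₁0 := ne_zero_of_valuation_eq_one hv₁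
    have hε₂0 := ne_zero_of_valuation_eq_one hv₂
    have hu₁ : IsUnit (⟨ε₁, hε₁⟩ : T) := (hT.isUnit_iff _).2 hv₁
    have hu₂ : IsUnit (⟨ε₂, hε₂⟩ : T) := (hT.isUnit_iff _).2 hv₂
    have hbaT : b / a * ε₁ ∈ T := T.mul_mem (hLT (hcen.div_mem hbL haL hva)) hε₁
    have e₁ : (⟨ε₂, hε₂⟩ : T) * c ^ m₂₁ * d ^ m₂₂ =
        ⟨b / a * ε₁, hbaT⟩ * (c ^ m₁₁ * d ^ m₁₂) := by
      apply Subtype.ext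
      push_cast
      rw [← hb', mul_assoc, ← mul_assoc ε₁, ← ha']
      field_simp
    have e₁' : (⟨ε₂, hε₂⟩ : T) * d ^ m₂₂ * c ^ m₂₁ =
        ⟨b / a * ε₁, hbaT⟩ * (d ^ m₁₂ * c ^ m₁₁) := by linear_combination e₁
    have hcd' := maximalIdeal_eq_span_pair_comm hcd
    have hle₁ := exponent_le_of_unit_mul_pow_eq hdim hcd hu₂ e₁
    have hle₂ := exponent_le_of_unit_mul_pow_eq hdim hcd' hu₂ e₁'
    have hvb : v b < 1 := by
      refine lt_of_le_of_ne (hcen _ hbL).1 fun hvb => hm ?_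
      have hb0 := ne_zero_of_valuation_eq_one hvb
      have habT : a / b * ε₂ ∈ T := T.mul_mem (hLT (hcen.div_mem haL hbL hvb)) hε₂
      have e₂ : (⟨ε₁, hε₁⟩ : T) * c ^ m₁₁ * d ^ m₁₂ =
          ⟨a / b * ε₂, habT⟩ * (c ^ m₂₁ * d ^ m₂₂) := by
        apply Subtype.ext
        push_cast
        rw [← ha', mul_assoc, ← mul_assoc ε₂, ← hb']
        field_simp
      have e₂' : (⟨ε₁, hε₁⟩ : T) * d ^ m₁₂ * c ^ m₁₁ =
          ⟨a / b * ε₂, habT⟩ * (d ^ m₂₂ * c ^ m₂₁) := by linear_combination e₂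
      rw [le_antisymm hle₁ (exponent_le_of_unit_mul_pow_eq hdim hcd hu₁ e₂),
        le_antisymm hle₂ (exponent_le_of_unit_mul_pow_eq hdim hcd' hu₁ e₂'), mul_comm]
    obtain ⟨γ₀, γ₁, hγ₁, hγe⟩ := hexp γ hγ
    obtain ⟨δ₀, δ₁, hδ₁, hδe⟩ := hexp δ hδ
    have hbe : b = algebraMap k F (γ₀ * μ + δ₀) +
        (t * algebraMap k F γ₀ + s * (γ₁ * (algebraMap k F μ + t) + δ₁)) := by
      rw [hbdef, hγe, hδe, map_add, map_mul]
      ring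
    have hsmall := valuation_mul_add_mul_lt_one hvt hvs (hcen _ (hkL γ₀)).1
      (hcen _ (L.add_mem (L.mul_mem hγ₁ hμtL) hδ₁)).1
    have hconst : γ₀ * μ + δ₀ = 0 := by
      by_contra hne
      rw [hbe] at hvb
      exact hvb.ne (valuation_add_eq_one (hk _ hne) hsmall)
    rw [hconst, map_zero, zero_add] at hbe
    have hγ₀ : γ₀ ≠ 0 := by
      rintro rfl
      rw [zero_mul, zero_add] at hconst
      rw [hconst, map_zero, zero_add] at hδe
      rw [map_zero, zero_add] at hγe
      have : α * δ - β * γ = s * (α * δ₁) + s * (-(β * γ₁)) := by rw [hγe, hδe]; ring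
      rw [this] at hdet
      exact (valuation_mul_add_mul_lt_one hvs hvs (hcen _ (L.mul_mem (hle hα) hδ₁)).1
        (hcen _ (L.neg_mem (L.mul_mem (hle hβ) hγ₁))).1).ne hdet
    obtain ⟨n₁, rfl⟩ := Nat.exists_eq_add_of_le hle₁
    obtain ⟨n₂, rfl⟩ := Nat.exists_eq_add_of_le hle₂
    refine ⟨a, haL, 0, L.zero_mem, (γ₁ * (algebraMap k F μ + t) + δ₁) / a,
      hcen.div_mem (L.add_mem (L.mul_mem hγ₁ hμtL) hδ₁) haL hva, algebraMap k F γ₀ / a,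
      hcen.div_mem (hkL γ₀) haL hva, ?_, ε₁, hε₁, ε₂ / ε₁, hT.div_mem hε₂ hε₁ hv₁, hv₁, ?_,
      m₁₁, m₁₂, n₁, n₂, ?_, ?_, ?_⟩
    · rw [zero_mul, sub_zero, mul_div_cancel₀ _ ha0, hk _ hγ₀]
    · rw [map_div₀, hv₁, hv₂, div_one]
    · intro e
      apply hm
      rw [mul_add, mul_add, e]
      ring
    · rw [zero_mul, add_zero, ha']
    · have e₃ : b / a = (γ₁ * (algebraMap k F μ + t) + δ₁) / a * s + algebraMap k F γ₀ / a * t := by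
        rw [hbe]
        ring
      rw [← e₃, div_eq_iff ha0]
      apply mul_right_cancel₀ hs0
      rw [hb', mul_assoc _ a s, ha']
      field_simp
      ring
  obtain ⟨α, hα, β, hβ, γ, hγ, δ, hδ, hdet, ε₁, hε₁, ε₂, hε₂, hv₁, hv₂, m₁₁, m₁₂, m₂₁, m₂₂, hm,
    ha, hb⟩ := h
  by_cases hva : v (α * (algebraMap k F μ + t) + β) = 1
  · exact main hα hβ hγ hδ hdet hε₁ hε₂ hv₁ hv₂ hm ha hb hva
  have haL : α * (algebraMap k F μ + t) + β ∈ L := L.add_mem (L.mul_mem (hle hα) hμtL) (hle hβ)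
  have hbL : γ * (algebraMap k F μ + t) + δ ∈ L := L.add_mem (L.mul_mem (hle hγ) hμtL) (hle hδ)
  refine main hγ hδ hα hβ ?_ hε₂ hε₁ hv₂ hv₁ (fun e => hm ?_) hb ha ?_
  · rw [← hdet, ← Valuation.map_neg]
    congr 1
    ring
  · rw [mul_comm m₁₁, ← e, mul_comm]
  · by_contra hvb
    have h1 := lt_of_le_of_ne (hcen _ haL).1 hva
    have h2 := lt_of_le_of_ne (hcen _ hbL).1 hvb
    have e : α * δ - β * γ = (γ * (algebraMap k F μ + t) + δ) * α +
        (α * (algebraMap k F μ + t) + β) * (-γ) := by ring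
    rw [e] at hdet
    exact (valuation_mul_add_mul_lt_one h2 h1 (hcen _ (hle hα)).1
      (hcen _ (L.neg_mem (hle hγ))).1).ne hdet

end MonomialPair

section MonomialPair

variable {k F : Type} [Field k] [Field F] [Algebra k F]
variable {Γ₀ : Type*} [LinearOrderedCommGroupWithZero Γ₀] {v : Valuation F Γ₀} {T : Subring F}

theorem IsCentered.eq_one_of_mul_eq_one (hT : IsCentered v T) {a b : F} (ha : a ∈ T) (hb : b ∈ T)
    (h : v (a * b) = 1) : v b = 1 := by
  rw [map_mul] at h
  exact eq_one_of_one_le_mul_right (hT a ha).1 (hT b hb).1 h.ge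

theorem valuation_lt_one_of_mul_add_mul_eq_zero
    (hk : ∀ c : k, c ≠ 0 → v (algebraMap k F c) = 1) {r s : F} (hr : v r < 1) (hs : v s < 1)
    [IsLocalRing (pairLocal k r s)] [IsNoetherianRing (pairLocal k r s)]
    (hdim : ringKrullDim (pairLocal k r s) = 2) {e f : F} (he : e ∈ pairLocal k r s)
    (hf : f ∈ pairLocal k r s) (h : e * r + f * s = 0) : v e < 1 ∧ v f < 1 := by
  have hcen := isCentered_pairLocal hk hr hs
  have hmax := maximalIdeal_pairLocal_eq hk hr hs
  constructor
  · refine lt_of_le_of_ne (hcen _ he).1 fun hv => ?_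
    have he0 := ne_zero_of_valuation_eq_one hv
    refine not_dvd_of_maximalIdeal_eq_span_pair hdim (maximalIdeal_eq_span_pair_comm hmax)
      ⟨⟨-f / e, hcen.div_mem (neg_mem hf) he hv⟩, Subtype.ext ?_⟩
    push_cast
    field_simp
    linear_combination h
  · refine lt_of_le_of_ne (hcen _ hf).1 fun hv => ?_
    have hf0 := ne_zero_of_valuation_eq_one hv
    refine not_dvd_of_maximalIdeal_eq_span_pair hdim hmax
      ⟨⟨-e / f, hcen.div_mem (neg_mem he) hf hv⟩, Subtype.ext ?_⟩
    push_cast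
    field_simp
    linear_combination h

theorem isMonomialPair_of_maximalIdeal_eq (hk : ∀ c : k, c ≠ 0 → v (algebraMap k F c) = 1)
    {r s : F} (hr : v r < 1) (hs : v s < 1) [IsLocalRing (pairLocal k r s)]
    [IsNoetherianRing (pairLocal k r s)] (hdim : ringKrullDim (pairLocal k r s) = 2)
    {a b : pairLocal k r s}
    (hab : IsLocalRing.maximalIdeal (pairLocal k r s) = Ideal.span {a, b}) {c d ε₁ ε₂ : F}
    (hε₁ : ε₁ ∈ T) (hε₂ : ε₂ ∈ T) (hv₁ : v ε₁ = 1) (hv₂ : v ε₂ = 1) {m₁₁ m₁₂ m₂₁ m₂₂ : ℕ}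
    (hm : m₁₁ * m₂₂ ≠ m₁₂ * m₂₁) (ha : (a : F) = ε₁ * c ^ m₁₁ * d ^ m₁₂)
    (hb : (b : F) = ε₂ * c ^ m₂₁ * d ^ m₂₂) : IsMonomialPair k v T c d r s := by
  have hcen := isCentered_pairLocal hk hr hs
  have hexp : ∀ f : pairLocal k r s, f ∈ IsLocalRing.maximalIdeal (pairLocal k r s) →
      ∃ h₁ ∈ pairLocal k r s, ∃ h₂ ∈ pairLocal k r s, (f : F) = h₁ * r + h₂ * s := fun f hf =>
    exists_eq_mul_add_mul_of_mem_pairLocal hk hr hs f.2 ((hcen.mem_maximalIdeal_iff f).1 hf)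
  have hexp' : ∀ f ∈ pairLocal k r s, v f < 1 →
      ∃ h₁ ∈ pairLocal k r s, ∃ h₂ ∈ pairLocal k r s, f = h₁ * a + h₂ * b := by
    intro f hf hvf
    have := (hcen.mem_maximalIdeal_iff ⟨f, hf⟩).2 hvf
    rw [hab, Ideal.mem_span_pair] at this
    obtain ⟨h₁, h₂, e⟩ := this
    exact ⟨h₁, h₁.2, h₂, h₂.2, congrArg Subtype.val e.symm⟩
  obtain ⟨α, hα, β, hβ, hae⟩ := hexp a (hab ▸ Ideal.subset_span (by simp))
  obtain ⟨γ, hγ, δ, hδ, hbe⟩ := hexp b (hab ▸ Ideal.subset_span (by simp))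
  obtain ⟨n₁₁, hn₁₁, n₁₂, hn₁₂, hre⟩ := hexp' r (left_mem_pairLocal r s) hr
  obtain ⟨n₂₁, hn₂₁, n₂₂, hn₂₂, hse⟩ := hexp' s (right_mem_pairLocal r s) hs
  refine ⟨α, hα, β, hβ, γ, hγ, δ, hδ, ?_, ε₁, hε₁, ε₂, hε₂, hv₁, hv₂, m₁₁, m₁₂, m₂₁, m₂₂, hm,
    hae ▸ ha, hbe ▸ hb⟩
  rw [hae, hbe] at hre hse
  set L := pairLocal k r s
  have h₁ := valuation_lt_one_of_mul_add_mul_eq_zero hk hr hs hdim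
    (e := n₁₁ * α + n₁₂ * γ - 1) (f := n₁₁ * β + n₁₂ * δ)
    (L.sub_mem (L.add_mem (L.mul_mem hn₁₁ hα) (L.mul_mem hn₁₂ hγ)) L.one_mem)
    (L.add_mem (L.mul_mem hn₁₁ hβ) (L.mul_mem hn₁₂ hδ)) (by linear_combination -hre)
  have h₂ := valuation_lt_one_of_mul_add_mul_eq_zero hk hr hs hdim
    (e := n₂₁ * α + n₂₂ * γ) (f := n₂₁ * β + n₂₂ * δ - 1)
    (L.add_mem (L.mul_mem hn₂₁ hα) (L.mul_mem hn₂₂ hγ))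
    (L.sub_mem (L.add_mem (L.mul_mem hn₂₁ hβ) (L.mul_mem hn₂₂ hδ)) L.one_mem)
    (by linear_combination -hse)
  refine hcen.eq_one_of_mul_eq_one (a := n₁₁ * n₂₂ - n₁₂ * n₂₁)
    (L.sub_mem (L.mul_mem hn₁₁ hn₂₂) (L.mul_mem hn₁₂ hn₂₁))
    (L.sub_mem (L.mul_mem hα hδ) (L.mul_mem hβ hγ)) ?_
  have e : (n₁₁ * n₂₂ - n₁₂ * n₂₁) * (α * δ - β * γ) =
      (1 + (n₂₁ * β + n₂₂ * δ - 1)) + ((n₁₁ * α + n₁₂ * γ - 1) * (n₂₁ * β + n₂₂ * δ) +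
        (n₁₁ * β + n₁₂ * δ) * (-(n₂₁ * α + n₂₂ * γ))) := by ring
  rw [e]
  exact valuation_add_eq_one (valuation_add_eq_one (map_one v) h₂.2)
    (valuation_mul_add_mul_lt_one h₁.1 h₁.2
      (hcen _ (L.add_mem (L.mul_mem hn₂₁ hβ) (L.mul_mem hn₂₂ hδ))).1
      (by rw [Valuation.map_neg]; exact h₂.1.le))

/-- The Jacobian determinant of `f` and `g` with respect to two derivations. -/
def jacobian (D₁ D₂ : Derivation k F F) (f g : F) : F := D₁ f * D₂ g - D₂ f * D₁ g

theorem jacobian_eq_mul {D₁ D₂ : Derivation k F F} {f g r s f₁ f₂ g₁ g₂ : F}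
    (hf : ∀ D : Derivation k F F, D f = f₁ * D r + f₂ * D s)
    (hg : ∀ D : Derivation k F F, D g = g₁ * D r + g₂ * D s) :
    jacobian D₁ D₂ f g = (f₁ * g₂ - f₂ * g₁) * jacobian D₁ D₂ r s := by
  simp only [jacobian, hf, hg]
  ring

/-- A linear change of the parameters `r`, `s` multiplies the Jacobian by a unit. -/
theorem exists_jacobian_eq_unit_mul (hk : ∀ c : k, c ≠ 0 → v (algebraMap k F c) = 1) {r s : F}
    (hr : v r < 1) (hs : v s < 1) {α β γ δ : F} (hα : α ∈ pairLocal k r s)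
    (hβ : β ∈ pairLocal k r s) (hγ : γ ∈ pairLocal k r s) (hδ : δ ∈ pairLocal k r s)
    (hdet : v (α * δ - β * γ) = 1) (D₁ D₂ : Derivation k F F) :
    ∃ H ∈ pairLocal k r s, v H = 1 ∧
      jacobian D₁ D₂ (α * r + β * s) (γ * r + δ * s) = H * jacobian D₁ D₂ r s := by
  have hcen := isCentered_pairLocal hk hr hs
  obtain ⟨α₁, hα₁, α₂, hα₂, hDα⟩ := exists_derivation_eq_of_mem_pairLocal hk hr hs hα
  obtain ⟨β₁, hβ₁, β₂, hβ₂, hDβ⟩ := exists_derivation_eq_of_mem_pairLocal hk hr hs hβ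
  obtain ⟨γ₁, hγ₁, γ₂, hγ₂, hDγ⟩ := exists_derivation_eq_of_mem_pairLocal hk hr hs hγ
  obtain ⟨δ₁, hδ₁, δ₂, hδ₂, hDδ⟩ := exists_derivation_eq_of_mem_pairLocal hk hr hs hδ
  have hrL : r ∈ pairLocal k r s := left_mem_pairLocal r s
  have hsL : s ∈ pairLocal k r s := right_mem_pairLocal r s
  set L := pairLocal k r s
  have hC : γ + r * γ₁ + s * δ₁ ∈ L :=
    L.add_mem (L.add_mem hγ (L.mul_mem hrL hγ₁)) (L.mul_mem hsL hδ₁)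
  have hD : δ + r * γ₂ + s * δ₂ ∈ L :=
    L.add_mem (L.add_mem hδ (L.mul_mem hrL hγ₂)) (L.mul_mem hsL hδ₂)
  have hh₁ : α₁ * (δ + r * γ₂ + s * δ₂) + α * γ₂ - α₂ * (γ + r * γ₁ + s * δ₁) - β * γ₁ ∈ L :=
    L.sub_mem (L.sub_mem (L.add_mem (L.mul_mem hα₁ hD) (L.mul_mem hα hγ₂)) (L.mul_mem hα₂ hC))
      (L.mul_mem hβ hγ₁)
  have hh₂ : β₁ * (δ + r * γ₂ + s * δ₂) + α * δ₂ - β₂ * (γ + r * γ₁ + s * δ₁) - β * δ₁ ∈ L :=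
    L.sub_mem (L.sub_mem (L.add_mem (L.mul_mem hβ₁ hD) (L.mul_mem hα hδ₂)) (L.mul_mem hβ₂ hC))
      (L.mul_mem hβ hδ₁)
  refine ⟨_, L.add_mem (L.sub_mem (L.mul_mem hα hδ) (L.mul_mem hβ hγ))
    (L.add_mem (L.mul_mem hrL hh₁) (L.mul_mem hsL hh₂)), valuation_add_eq_one hdet
    (valuation_mul_add_mul_lt_one hr hs (hcen _ hh₁).1 (hcen _ hh₂).1), ?_⟩
  rw [jacobian_eq_mul (r := r) (s := s) (f₁ := α + r * α₁ + s * β₁) (f₂ := β + r * α₂ + s * β₂)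
    (g₁ := γ + r * γ₁ + s * δ₁) (g₂ := δ + r * γ₂ + s * δ₂)
    (fun D => by simp only [map_add, D.leibniz, smul_eq_mul, hDα, hDβ]; ring)
    (fun D => by simp only [map_add, D.leibniz, smul_eq_mul, hDγ, hDδ]; ring)]
  ring

theorem not_isMonomialPair_of_jacobian (hk : ∀ c : k, c ≠ 0 → v (algebraMap k F c) = 1) {z w : F}
    (hz : v z < 1) (hw : v w < 1) [IsLocalRing (pairLocal k z w)]
    [IsNoetherianRing (pairLocal k z w)] (hdim : ringKrullDim (pairLocal k z w) = 2)
    {c d : pairLocal k z w}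
    (hcd : IsLocalRing.maximalIdeal (pairLocal k z w) = Ideal.span {c, d})
    {p : ℕ} [CharP F p] (hp : 1 < p) {j : ℕ} (hj : j < p) {u t G τ σ ε : F}
    (hG : G ∈ pairLocal k z w) (hτ : τ ∈ pairLocal k z w) (hσ : σ ∈ pairLocal k z w)
    (hε : ε ∈ pairLocal k z w) (hvG : v G = 1) (hvτ : v τ = 1) (hvσ : v σ = 1) (hvε : v ε = 1)
    (hu : u = (z * w ^ j) ^ p * G) (ht : t = w ^ p * τ + z * w ^ j * σ)
    {D₁ D₂ : Derivation k F F} (hJ0 : jacobian D₁ D₂ (z * w ^ j) w ≠ 0)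
    (hJ : jacobian D₁ D₂ u t = ε * (z * w ^ j) ^ p * jacobian D₁ D₂ (z * w ^ j) w) :
    ¬ IsMonomialPair k v (pairLocal k z w) c d u t := by
  have hcen := isCentered_pairLocal hk hz hw
  have hmax := maximalIdeal_pairLocal_eq hk hz hw
  have hzL : z ∈ pairLocal k z w := left_mem_pairLocal z w
  have hwL : w ∈ pairLocal k z w := right_mem_pairLocal z w
  have hkL : ∀ c : k, algebraMap k F c ∈ pairLocal k z w := algebraMap_mem_pairLocal z w
  have hDfun := fun f (hf : f ∈ pairLocal k z w) =>
    exists_derivation_eq_of_mem_pairLocal hk hz hw hf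
  have hpow : ∀ {a : F} {n : ℕ}, v a < 1 → n ≠ 0 → v (a ^ n) < 1 := fun {a n} ha hn => by
    rw [map_pow]
    exact pow_lt_one₀ zero_le ha hn
  have hle1 : ∀ f ∈ pairLocal k z w, v f ≤ 1 := fun f hf => (hcen f hf).1
  have huL : u ∈ pairLocal k z w := hu ▸ mul_mem (pow_mem (mul_mem hzL (pow_mem hwL j)) p) hG
  have htL : t ∈ pairLocal k z w := ht ▸ add_mem (mul_mem (pow_mem hwL p) hτ)
    (mul_mem (mul_mem hzL (pow_mem hwL j)) hσ)
  have hvu : v u < 1 := by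
    have e : u = z ^ p * (w ^ (j * p) * G) + z ^ p * 0 := by rw [hu, mul_pow, ← pow_mul]; ring
    rw [e]
    exact valuation_mul_add_mul_lt_one (hpow hz (by omega)) (hpow hz (by omega))
      (hle1 _ (mul_mem (pow_mem hwL _) hG)) (by simp)
  have hvt : v t < 1 := by
    have e : t = w ^ p * τ + z * (w ^ j * σ) := by rw [ht]; ring
    rw [e]
    exact valuation_mul_add_mul_lt_one (hpow hw (by omega)) hz (hle1 _ hτ)
      (hle1 _ (mul_mem (pow_mem hwL _) hσ))
  have hle : pairLocal k u t ≤ pairLocal k z w := hcen.pairLocal_le hk hkL huL htL hvu hvt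
  have main : ∀ {α β γ δ ε₁ ε₂ : F} {m₁₁ m₁₂ m₂₁ m₂₂ : ℕ}, α ∈ pairLocal k u t →
      β ∈ pairLocal k u t → γ ∈ pairLocal k u t → δ ∈ pairLocal k u t →
      v (α * δ - β * γ) = 1 → ε₁ ∈ pairLocal k z w → ε₂ ∈ pairLocal k z w → v ε₁ = 1 → v ε₂ = 1 →
      α * u + β * t = ε₁ * c ^ m₁₁ * d ^ m₁₂ → γ * u + δ * t = ε₂ * c ^ m₂₁ * d ^ m₂₂ →
      v β ≠ 1 := by
    intro α β γ δ ε₁ ε₂ m₁₁ m₁₂ m₂₁ m₂₂ hα hβ hγ hδ hdet hε₁ hε₂ hv₁ hv₂ ha hb hvβ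
    obtain ⟨H, hH, hvH, hJab⟩ := exists_jacobian_eq_unit_mul hk hvu hvt hα hβ hγ hδ hdet D₁ D₂
    replace hα := hle hα
    replace hβ := hle hβ
    replace hγ := hle hγ
    replace hδ := hle hδ
    replace hH := hle hH
    have hβ0 := ne_zero_of_valuation_eq_one hvβ
    have haL : α * u + β * t ∈ pairLocal k z w := add_mem (mul_mem hα huL) (mul_mem hβ htL)
    have hbL : γ * u + δ * t ∈ pairLocal k z w := add_mem (mul_mem hγ huL) (mul_mem hδ htL)
    have he₁L : β * τ ∈ pairLocal k z w := mul_mem hβ hτ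
    have hXL : α * w ^ (j * p - j) * G ∈ pairLocal k z w := mul_mem (mul_mem hα (pow_mem hwL _)) hG
    have he₂L : β * σ + z ^ (p - 1) * (α * w ^ (j * p - j) * G) ∈ pairLocal k z w :=
      add_mem (mul_mem hβ hσ) (mul_mem (pow_mem hzL _) hXL)
    have hη : (γ * β - δ * α) / β * G ∈ pairLocal k z w := mul_mem (hcen.div_mem (sub_mem
      (mul_mem hγ hβ) (mul_mem hδ hα)) hβ hvβ) hG
    have hh : δ / β ∈ pairLocal k z w := hcen.div_mem hδ hβ hvβ
    have hve₁ : v (β * τ) = 1 := by rw [map_mul, hvβ, hvτ, one_mul]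
    have hve₂ : v (β * σ + z ^ (p - 1) * (α * w ^ (j * p - j) * G)) = 1 := by
      refine valuation_add_eq_one (by rw [map_mul, hvβ, hvσ, one_mul]) ?_
      rw [map_mul]
      exact (mul_le_of_le_one_right' (hle1 _ hXL)).trans_lt (hpow hz (by omega))
    have hvη : v ((γ * β - δ * α) / β * G) = 1 := by
      have : γ * β - δ * α = -(α * δ - β * γ) := by ring
      rw [map_mul, map_div₀, hvβ, hvG, this, Valuation.map_neg, hdet, div_one, one_mul]
    have hzp : z ^ p = z * z ^ (p - 1) := by
      rw [← pow_succ', Nat.sub_add_cancel hp.le]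
    have hwjp : w ^ (j * p) = w ^ j * w ^ (j * p - j) := by
      rw [← pow_add, Nat.add_sub_cancel' (Nat.le_mul_of_pos_right j (by omega))]
    have hwp : w ^ p = w ^ j * w ^ (p - j) := by
      rw [← pow_add, Nat.add_sub_cancel' hj.le]
    have hu' : u = z ^ p * w ^ (j * p) * G := by rw [hu, mul_pow, ← pow_mul]
    obtain ⟨d', hd', hndvd⟩ := exists_eq_unit_mul_pow_sq_of_monomial_curve hdim hmax hcd hp hj
      (a := ⟨_, haL⟩) (b := ⟨_, hbL⟩) (e₁ := ⟨_, he₁L⟩) (e₂ := ⟨_, he₂L⟩) (h := ⟨_, hh⟩)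
      (η := ⟨_, hη⟩) (ε₁ := ⟨ε₁, hε₁⟩) (ε₂ := ⟨ε₂, hε₂⟩)
      ((hcen.isUnit_iff _).2 hve₁) ((hcen.isUnit_iff _).2 hve₂) ((hcen.isUnit_iff _).2 hvη)
      ((hcen.isUnit_iff _).2 hv₁) ((hcen.isUnit_iff _).2 hv₂)
      (by
        apply Subtype.ext
        push_cast
        rw [hu', ht, hzp, hwjp, hwp]
        ring)
      (by
        apply Subtype.ext
        push_cast
        have : γ * u + δ * t = δ / β * (α * u + β * t) + (γ * β - δ * α) / β * u := by
          field_simp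
          ring
        rw [this, hu']
        ring) (Subtype.ext ha) (Subtype.ext hb)
    replace hd' := congrArg Subtype.val hd'
    push_cast at hd'
    have hDpow : ∀ D : Derivation k F F, D ((d' : F) ^ p ^ 2) = 0 := by
      intro D
      rw [D.leibniz_pow]
      simp
    obtain ⟨a₁, ha₁, a₂, ha₂, hDa⟩ := hDfun _ haL
    obtain ⟨b₁, hb₁, b₂, hb₂, hDb⟩ := hDfun _ hε₂
    have hJz : jacobian D₁ D₂ (z * w ^ j) w = w ^ j * jacobian D₁ D₂ z w := by
      have hDz : ∀ D : Derivation k F F, D (z * w ^ j) = w ^ j * D z + z * (j * w ^ (j - 1)) * D w := by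
        intro D
        rw [D.leibniz, D.leibniz_pow]
        simp only [smul_eq_mul, nsmul_eq_mul]
        ring
      rw [jacobian_eq_mul hDz (g₁ := 0) (g₂ := 1) (fun D => by ring)]
      ring
    have hJ0' : jacobian D₁ D₂ z w ≠ 0 := by
      intro h0
      rw [hJz, h0, mul_zero] at hJ0
      exact hJ0 rfl
    have h1 := jacobian_eq_mul (D₁ := D₁) (D₂ := D₂) hDa hDb
    have h2 : jacobian D₁ D₂ (α * u + β * t) (γ * u + δ * t) =
        (d' : F) ^ p ^ 2 * jacobian D₁ D₂ (α * u + β * t) ε₂ := by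
      rw [hd']
      simp only [jacobian, Derivation.leibniz, hDpow, smul_eq_mul]
      ring
    rw [hJab, hJ, hJz, h1] at h2
    have hHε : v (H * ε) = 1 := by rw [map_mul, hvH, hvε, one_mul]
    have hHε0 := ne_zero_of_valuation_eq_one hHε
    have h3 : H * ε * (z ^ p * w ^ (j * p + j)) = (d' : F) ^ p ^ 2 * (a₁ * b₂ - a₂ * b₁) := by
      apply mul_right_cancel₀ hJ0'
      rw [← mul_assoc ((d' : F) ^ p ^ 2)] at h2
      rw [← h2, pow_add, mul_pow, pow_mul]
      ring
    refine hndvd ⟨⟨(a₁ * b₂ - a₂ * b₁) / (H * ε), hcen.div_mem (sub_mem (mul_mem ha₁ hb₂)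
      (mul_mem ha₂ hb₁)) (mul_mem hH hε) hHε⟩, Subtype.ext ?_⟩
    push_cast
    rw [mul_div_assoc', eq_div_iff hHε0, ← h3]
    ring
  rintro ⟨α, hα, β, hβ, γ, hγ, δ, hδ, hdet, ε₁, hε₁, ε₂, hε₂, hv₁, hv₂, m₁₁, m₁₂, m₂₁, m₂₂, -,
    ha, hb⟩
  have h1 := lt_of_le_of_ne (hle1 _ (hle hβ)) (main hα hβ hγ hδ hdet hε₁ hε₂ hv₁ hv₂ ha hb)
  have h2 := lt_of_le_of_ne (hle1 _ (hle hδ)) (main hγ hδ hα hβ (by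
    rw [← hdet, ← Valuation.map_neg]
    congr 1
    ring) hε₂ hε₁ hv₂ hv₁ hb ha)
  have e : α * δ - β * γ = δ * α + β * (-γ) := by ring
  rw [e] at hdet
  exact (valuation_mul_add_mul_lt_one h2 h1 (hle1 _ (hle hα))
    (hle1 _ (neg_mem (hle hγ)))).ne hdet

end MonomialPair

section Derivation

open TensorProduct in
/-- Every choice of values on the variables extends to a derivation of the function field. -/
theorem exists_derivation_fractionRing {k σ : Type} [Field k]
    (a : σ → FractionRing (MvPolynomial σ k)) :
    ∃ D : Derivation k (FractionRing (MvPolynomial σ k)) (FractionRing (MvPolynomial σ k)),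
      ∀ i, D (algebraMap (MvPolynomial σ k) _ (X i)) = a i := by
  have := Algebra.FormallyEtale.of_isLocalization (Rₘ := FractionRing (MvPolynomial σ k))
    (nonZeroDivisors (MvPolynomial σ k))
  let l := (LinearMap.liftBaseChange (FractionRing (MvPolynomial σ k))
    (mkDerivation k a).liftKaehlerDifferential) ∘ₗ
      (KaehlerDifferential.tensorKaehlerEquivOfFormallyEtale k (MvPolynomial σ k)
        (FractionRing (MvPolynomial σ k))).symm.toLinearMap
  refine ⟨l.compDer (KaehlerDifferential.D k (FractionRing (MvPolynomial σ k))), fun i => ?_⟩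
  simp [l, KaehlerDifferential.tensorKaehlerEquivOfFormallyEtale_symm_D_algebraMap,
    mkDerivation_X]

end Derivation

section JumpForm

variable {k F : Type} [Field k] [Field F] [Algebra k F]
variable {Γ₀ : Type*} [LinearOrderedCommGroupWithZero Γ₀] {v : Valuation F Γ₀}

/-- The shape of `(u, w)` in terms of the parameters `(x, y)`: up to higher order terms
`u = x ^ p * (g + κ * y)` and `w = t * y ^ p + s * x`, and the Jacobian of `(u, w)` is `x ^ p` times
that of `(x, y)`, up to a unit. -/
def IsJumpForm (v : Valuation F Γ₀) (p : ℕ) (D₁ D₂ : Derivation k F F) (x y u w : F)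
    (g κ t s : k) : Prop :=
  ∃ h ∈ pairLocal k x y, ∃ h' ∈ pairLocal k x y, ∃ τ ∈ pairLocal k x y, ∃ σ ∈ pairLocal k x y,
    ∃ ε ∈ pairLocal k x y,
    u = x ^ p * (algebraMap k F g + algebraMap k F κ * y + x * h + y ^ 2 * h') ∧
    w = y ^ p * τ + x * σ ∧ v (τ - algebraMap k F t) < 1 ∧ v (σ - algebraMap k F s) < 1 ∧
    v ε = 1 ∧ jacobian D₁ D₂ u w = ε * x ^ p * jacobian D₁ D₂ x y

theorem valuation_eq_one_of_sub_algebraMap (hk : ∀ c : k, c ≠ 0 → v (algebraMap k F c) = 1)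
    {f : F} {c : k} (hc : c ≠ 0) (h : v (f - algebraMap k F c) < 1) : v f = 1 := by
  rw [← add_sub_cancel (algebraMap k F c) f]
  exact valuation_add_eq_one (hk c hc) h

theorem jacobian_step {p : ℕ} [CharP F p] {D₁ D₂ : Derivation k F F} {x y z : F} {α : k}
    (hx : x = y ^ p * (algebraMap k F α + z)) :
    jacobian D₁ D₂ x y = -(y ^ p * jacobian D₁ D₂ y z) := by
  have hD : ∀ D : Derivation k F F, D x = y ^ p * D z := by
    intro D
    rw [hx, D.leibniz, D.leibniz_pow]
    simp
  simp only [jacobian, hD]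
  ring

theorem IsJumpForm.step (hk : ∀ c : k, c ≠ 0 → v (algebraMap k F c) = 1) {p : ℕ} (hp : p.Prime)
    [CharP F p] {D₁ D₂ : Derivation k F F} {x y z u w : F} {g κ t s α : k} (hvx : v x < 1)
    (hvy : v y < 1) (hvz : v z < 1) (hy0 : y ≠ 0) (hx : x = y ^ p * (algebraMap k F α + z))
    (hα : α ≠ 0) (hg : t + α * s ≠ 0) (h : IsJumpForm v p D₁ D₂ x y u w g κ t s) :
    w ≠ 0 ∧ IsJumpForm v p D₁ D₂ y z w
      (u / w ^ p - algebraMap k F (g * α ^ p / (t + α * s) ^ p))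
      (t + α * s) s (g * t ^ p / (t + α * s) ^ (2 * p)) (κ * α ^ p / (t + α * s) ^ p) := by
  have : Fact p.Prime := ⟨hp⟩
  have : ExpChar F p := ExpChar.prime hp
  have hp2 := hp.two_le
  obtain ⟨h₀, hh₀, h₁, hh₁, τ, hτ, σ, hσ, ε, hε, hu, hw, hvτ, hvσ, hvε, hJ⟩ := h
  obtain ⟨τ₁, hτ₁, τ₂, hτ₂, hτe⟩ := exists_eq_mul_add_mul_of_mem_pairLocal hk hvx hvy
    (sub_mem hτ (algebraMap_mem_pairLocal x y t)) hvτ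
  obtain ⟨σ₁, hσ₁, σ₂, hσ₂, hσe⟩ := exists_eq_mul_add_mul_of_mem_pairLocal hk hvx hvy
    (sub_mem hσ (algebraMap_mem_pairLocal x y s)) hvσ
  have hcen := isCentered_pairLocal hk hvy hvz
  have hyL : y ∈ pairLocal k y z := left_mem_pairLocal y z
  have hzL : z ∈ pairLocal k y z := right_mem_pairLocal y z
  have hkL : ∀ c : k, algebraMap k F c ∈ pairLocal k y z := algebraMap_mem_pairLocal y z
  have hαz : algebraMap k F α + z ∈ pairLocal k y z := add_mem (hkL α) hzL
  have hxL : x ∈ pairLocal k y z := hx ▸ mul_mem (pow_mem hyL p) hαz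
  have hle : pairLocal k x y ≤ pairLocal k y z := hcen.pairLocal_le hk hkL hxL hyL hvx hvy
  replace hh₀ := hle hh₀
  replace hh₁ := hle hh₁
  replace hε := hle hε
  replace hτ₁ := hle hτ₁
  replace hτ₂ := hle hτ₂
  replace hσ₁ := hle hσ₁
  replace hσ₂ := hle hσ₂
  have hyp : y ^ p = y * y ^ (p - 1) := by rw [← pow_succ', Nat.sub_add_cancel hp.one_le]
  have hyp2 : y ^ p = y ^ 2 * y ^ (p - 2) := by rw [← pow_add, Nat.add_sub_cancel' hp2]
  set a := algebraMap k F α with ha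
  obtain ⟨A, hA, hAe⟩ : ∃ A ∈ pairLocal k y z, τ = algebraMap k F t + y * A :=
    ⟨τ₁ * (y ^ (p - 1) * (a + z)) + τ₂,
      add_mem (mul_mem hτ₁ (mul_mem (pow_mem hyL _) hαz)) hτ₂, by
        rw [hx, hyp] at hτe; linear_combination hτe⟩
  obtain ⟨B, hB, hBe⟩ : ∃ B ∈ pairLocal k y z, σ = algebraMap k F s + y * B :=
    ⟨σ₁ * (y ^ (p - 1) * (a + z)) + σ₂,
      add_mem (mul_mem hσ₁ (mul_mem (pow_mem hyL _) hαz)) hσ₂, by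
        rw [hx, hyp] at hσe; linear_combination hσe⟩
  obtain ⟨c, hc, hce⟩ : ∃ c ∈ pairLocal k y z, u = x ^ p * (algebraMap k F g +
      y * (algebraMap k F κ + y * c)) :=
    ⟨y ^ (p - 2) * (a + z) * h₀ + h₁, add_mem (mul_mem (mul_mem (pow_mem hyL _) hαz) hh₀) hh₁, by
      rw [hu]
      congr 1
      conv_lhs => rw [hx, hyp2]
      ring⟩
  obtain ⟨H, hH, hHe⟩ : ∃ H ∈ pairLocal k y z, H = A + (a + z) * B := ⟨_, add_mem hA (mul_mem hαz hB), rfl⟩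
  obtain ⟨G, hGe⟩ : ∃ G, G = algebraMap k F (t + α * s) := ⟨_, rfl⟩
  have hGL : G ∈ pairLocal k y z := hGe ▸ hkL _
  have hvG : v G = 1 := hGe ▸ hk _ hg
  have hG0 : G ≠ 0 := ne_zero_of_valuation_eq_one hvG
  obtain ⟨θ, hθe⟩ : ∃ θ, θ = G + algebraMap k F s * z + y * H := ⟨_, rfl⟩
  have hθL : θ ∈ pairLocal k y z :=
    hθe ▸ add_mem (add_mem hGL (mul_mem (hkL s) hzL)) (mul_mem hyL hH)
  have hvθ : v θ = 1 := by
    rw [hθe, show G + algebraMap k F s * z + y * H = G + (y * H + z * algebraMap k F s) by ring]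
    exact valuation_add_eq_one hvG
      (valuation_mul_add_mul_lt_one hvy hvz (hcen _ hH).1 (hcen _ (hkL s)).1)
  have hθ0 : θ ≠ 0 := ne_zero_of_valuation_eq_one hvθ
  have hwθ : w = y ^ p * θ := by
    rw [hw, hθe, hHe, hx, hAe, hBe, hGe, map_add, map_mul]
    ring
  have hw0 : w ≠ 0 := hwθ ▸ mul_ne_zero (pow_ne_zero _ hy0) hθ0
  obtain ⟨γ, hγe⟩ : ∃ γ, γ = algebraMap k F g + y * (algebraMap k F κ + y * c) := ⟨_, rfl⟩
  have hκc : algebraMap k F κ + y * c ∈ pairLocal k y z := add_mem (hkL κ) (mul_mem hyL hc)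
  have hγL : γ ∈ pairLocal k y z := hγe ▸ add_mem (hkL g) (mul_mem hyL hκc)
  have hGθ : (G * θ) ^ p ∈ pairLocal k y z := pow_mem (mul_mem hGL hθL) p
  have hvGθ : v ((G * θ) ^ p) = 1 := by simp [hvG, hvθ]
  have hvGp : v (G ^ p) = 1 := by simp [hvG]
  have hyp0 : ∀ f ∈ pairLocal k y z, v (y * f) < 1 := fun f hf => by
    have := valuation_mul_add_mul_lt_one hvy hvz (hcen f hf).1 (b := 0) (by simp)
    simpa using this
  have hGp : G ^ p = algebraMap k F t ^ p + a ^ p * algebraMap k F s ^ p := by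
    rw [hGe, map_add, map_mul, add_pow_char, mul_pow, ha]
  have hθp : θ ^ p = G ^ p + algebraMap k F s ^ p * z ^ p + y ^ p * H ^ p := by
    rw [hθe, add_pow_char, add_pow_char, mul_pow, mul_pow]
  refine ⟨hw0, H, hH, 0, zero_mem _, γ * algebraMap k F t ^ p / (G * θ) ^ p,
    hcen.div_mem (mul_mem hγL (pow_mem (hkL t) p)) hGθ hvGθ,
    (algebraMap k F κ + y * c) * a ^ p / G ^ p -
      y ^ (p - 1) * (γ * a ^ p * H ^ p / (G * θ) ^ p),
    sub_mem (hcen.div_mem (mul_mem hκc (pow_mem (hkL α) p)) (pow_mem hGL p) hvGp)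
      (mul_mem (pow_mem hyL _) (hcen.div_mem (mul_mem (mul_mem hγL (pow_mem (hkL α) p))
        (pow_mem hH p)) hGθ hvGθ)),
    ε * ((a + z) ^ p / θ ^ p), mul_mem hε (hcen.div_mem (pow_mem hαz p) (pow_mem hθL p)
      (by simp [hvθ])), ?_, ?_, ?_, ?_, ?_, ?_⟩
  · rw [hwθ, hθe, hGe]
    ring
  · have hazp : (a + z) ^ p = a ^ p + z ^ p := add_pow_char _ _ _
    have e1 : u / w ^ p = (a + z) ^ p * γ / θ ^ p := by
      rw [hce, ← hγe, hx, hwθ, mul_pow, mul_pow, mul_assoc,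
        mul_div_mul_left _ _ (pow_ne_zero _ (pow_ne_zero _ hy0))]
    have e2 : algebraMap k F (g * α ^ p / (t + α * s) ^ p) =
        algebraMap k F g * a ^ p / G ^ p := by
      rw [map_div₀, map_mul, map_pow, map_pow, ← hGe]
    have e3 : y * (algebraMap k F κ + y * c) = γ - algebraMap k F g := by rw [hγe]; ring
    have e4 : z ^ p * (γ * algebraMap k F t ^ p / (G * θ) ^ p) +
      y * ((algebraMap k F κ + y * c) * a ^ p / G ^ p -
        y ^ (p - 1) * (γ * a ^ p * H ^ p / (G * θ) ^ p)) =
      z ^ p * (γ * algebraMap k F t ^ p / (G * θ) ^ p) + (γ - algebraMap k F g) * a ^ p / G ^ p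
        - y ^ p * (γ * a ^ p * H ^ p / (G * θ) ^ p) := by
      rw [← e3, hyp]
      ring
    rw [e1, e2, e4, hazp, mul_pow]
    have hGp0 : G ^ p ≠ 0 := pow_ne_zero _ hG0
    have hθp0 : θ ^ p ≠ 0 := pow_ne_zero _ hθ0
    generalize G ^ p = Gp at *
    generalize θ ^ p = θp at *
    field_simp
    rw [hθp, hGp]
    ring
  · have e : γ * algebraMap k F t ^ p / (G * θ) ^ p -
        algebraMap k F (g * t ^ p / (t + α * s) ^ (2 * p)) =
        y * ((algebraMap k F κ + y * c) * algebraMap k F t ^ p / (G * θ) ^ p -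
          algebraMap k F g * algebraMap k F t ^ p * y ^ (p - 1) * H ^ p / (G ^ p * (G * θ) ^ p)) +
        z * (-(algebraMap k F g * algebraMap k F t ^ p * algebraMap k F s ^ p * z ^ (p - 1) /
          (G ^ p * (G * θ) ^ p))) := by
      have hzp : z * z ^ (p - 1) = z ^ p := by rw [← pow_succ', Nat.sub_add_cancel hp.one_le]
      rw [map_div₀, map_mul, map_pow, map_pow, ← hGe]
      have hGp0 : G ^ p ≠ 0 := pow_ne_zero _ hG0
      have hθp0 : θ ^ p ≠ 0 := pow_ne_zero _ hθ0
      rw [mul_pow, pow_mul', sq, hγe]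
      field_simp
      rw [hθp]
      linear_combination (-(algebraMap k F t ^ p * algebraMap k F g * H ^ p)) * hyp +
        (algebraMap k F t ^ p * algebraMap k F g * algebraMap k F s ^ p) * hzp
    rw [e]
    have hden : G ^ p * (G * θ) ^ p ∈ pairLocal k y z := mul_mem (pow_mem hGL p) hGθ
    have hvden : v (G ^ p * (G * θ) ^ p) = 1 := by rw [map_mul, hvGp, hvGθ, one_mul]
    have hgt := mul_mem (hkL g) (pow_mem (hkL t) p)
    exact valuation_mul_add_mul_lt_one hvy hvz
      (hcen _ (sub_mem (hcen.div_mem (mul_mem hκc (pow_mem (hkL t) p)) hGθ hvGθ)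
        (hcen.div_mem (mul_mem (mul_mem hgt (pow_mem hyL _)) (pow_mem hH p)) hden hvden))).1
      (hcen _ (neg_mem (hcen.div_mem (mul_mem (mul_mem hgt (pow_mem (hkL s) p))
        (pow_mem hzL _)) hden hvden))).1
  · have hyp1 : y ^ (p - 1) = y * y ^ (p - 2) := by
      rw [← pow_succ', show p - 2 + 1 = p - 1 by omega]
    have e : (algebraMap k F κ + y * c) * a ^ p / G ^ p -
        y ^ (p - 1) * (γ * a ^ p * H ^ p / (G * θ) ^ p) -
        algebraMap k F (κ * α ^ p / (t + α * s) ^ p) =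
        y * (c * a ^ p / G ^ p - y ^ (p - 2) * (γ * a ^ p * H ^ p / (G * θ) ^ p)) := by
      rw [map_div₀, map_mul, map_pow, map_pow, ← hGe, hyp1]
      ring
    rw [e]
    exact hyp0 _ (sub_mem (hcen.div_mem (mul_mem hc (pow_mem (hkL α) p)) (pow_mem hGL p) hvGp)
      (mul_mem (pow_mem hyL _) (hcen.div_mem (mul_mem (mul_mem hγL (pow_mem (hkL α) p))
        (pow_mem hH p)) hGθ hvGθ)))
  · rw [map_mul, map_div₀, map_pow, map_pow, hvε, hvθ, valuation_add_eq_one (hk α hα) hvz]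
    simp
  · have hDv : ∀ D : Derivation k F F,
        D (u / w ^ p - algebraMap k F (g * α ^ p / (t + α * s) ^ p)) = D u / w ^ p := by
      intro D
      have hwp : w ^ p ≠ 0 := pow_ne_zero _ hw0
      have e : D u = w ^ p * D (u / w ^ p) := by
        conv_lhs => rw [← mul_div_cancel₀ u hwp, mul_comm, D.leibniz, D.leibniz_pow]
        simp
      rw [map_sub, D.map_algebraMap, sub_zero, e, mul_div_cancel_left₀ _ hwp]
    have e : jacobian D₁ D₂ w (u / w ^ p - algebraMap k F (g * α ^ p / (t + α * s) ^ p)) =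
        -(jacobian D₁ D₂ u w) / w ^ p := by
      simp only [jacobian, hDv]
      ring
    rw [e, hJ, jacobian_step hx, hx, hwθ, mul_pow, mul_pow (y ^ p)]
    have hθp0 : θ ^ p ≠ 0 := pow_ne_zero _ hθ0
    have hyp0 : (y ^ p) ^ p ≠ 0 := pow_ne_zero _ (pow_ne_zero _ hy0)
    field_simp

end JumpForm

section Centered

variable {k F : Type} [Field k] [Field F] [Algebra k F]
variable {Γ₀ : Type*} [LinearOrderedCommGroupWithZero Γ₀] {v : Valuation F Γ₀} {S : Subring F}

theorem exists_aeval_of_mem_adjoin_pair {r s z : F} (hz : z ∈ IntermediateField.adjoin k {r, s}) :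
    ∃ P Q : MvPolynomial (Fin 2) k, aeval ![r, s] Q ≠ 0 ∧
      z * aeval ![r, s] Q = aeval ![r, s] P := by
  have hr : ({r, s} : Set F) = Set.range ![r, s] := by simp [Matrix.range_cons, Set.pair_comm]
  rw [hr, IntermediateField.mem_adjoin_range_iff] at hz
  obtain ⟨P, Q, rfl⟩ := hz
  by_cases hQ : aeval ![r, s] Q = 0
  · exact ⟨0, 1, by simp [hQ]⟩
  · exact ⟨P, Q, hQ, div_mul_cancel₀ _ hQ⟩

theorem adjoin_pair_le_adjoin_div_pow {r s : F} (hs : s ≠ 0) (j : ℕ) :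
    IntermediateField.adjoin k {r, s} ≤ IntermediateField.adjoin k {r / s ^ j, s} := by
  have h1 := IntermediateField.mem_adjoin_pair_left k (r / s ^ j) s
  have h2 := IntermediateField.mem_adjoin_pair_right k (r / s ^ j) s
  rw [IntermediateField.adjoin_le_iff]
  rintro z (rfl | rfl)
  · have := mul_mem h1 (pow_mem h2 j)
    rwa [div_mul_cancel₀ _ (pow_ne_zero _ hs)] at this
  · exact h2

namespace IsQuadraticChain

variable {p : ℕ} {α : ℕ → k} {Z : ℕ → F}

theorem div_pow_sub (hZ : IsQuadraticChain p α Z) (n : ℕ) :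
    Z n / Z (n + 1) ^ p - algebraMap k F (α n) = Z (n + 2) := by
  have h0 := pow_ne_zero p (hZ.ne_zero (n + 1))
  conv_lhs => rw [hZ.eq_mul n, mul_div_cancel_left₀ _ h0]
  ring

theorem adjoin_le (hZ : IsQuadraticChain p α Z) (n : ℕ) :
    IntermediateField.adjoin k {Z 0, Z 1} ≤ IntermediateField.adjoin k {Z n, Z (n + 1)} := by
  induction n with
  | zero => exact le_rfl
  | succ n ih =>
    refine ih.trans (IntermediateField.adjoin_le_iff.2 ?_)
    have h1 := IntermediateField.mem_adjoin_pair_left k (Z (n + 1)) (Z (n + 2))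
    have h2 := IntermediateField.mem_adjoin_pair_right k (Z (n + 1)) (Z (n + 2))
    rintro z (rfl | rfl)
    · rw [hZ.eq_mul n]
      exact mul_mem (pow_mem h1 p) (add_mem (IntermediateField.algebraMap_mem _ _) h2)
    · exact h1

theorem exists_notMem (hZ : IsQuadraticChain p α Z) (hv : ∀ n, v (Z n) < 1) [IsNoetherianRing S]
    (hS : IsCentered v S) (hkS : ∀ c : k, algebraMap k F c ∈ S) : ∃ n, Z n ∉ S := by
  by_contra! hmem
  have := hS.isLocalRing
  have hpow : ∀ j n, (⟨Z n, hmem n⟩ : S) ∈ IsLocalRing.maximalIdeal S ^ (j + 1) := by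
    intro j
    induction j with
    | zero =>
      intro n
      rw [zero_add, pow_one, hS.mem_maximalIdeal_iff]
      exact hv n
    | succ j ih =>
      intro n
      have e : (⟨Z n, hmem n⟩ : S) = ⟨Z (n + 1), hmem (n + 1)⟩ ^ 2 *
          (⟨Z (n + 1), hmem (n + 1)⟩ ^ (p - 2) *
            (⟨algebraMap k F (α n), hkS _⟩ + ⟨Z (n + 2), hmem (n + 2)⟩)) := by
        apply Subtype.ext
        push_cast
        rw [← mul_assoc, ← pow_add, Nat.add_sub_cancel' hZ.one_lt]
        exact hZ.eq_mul n
      rw [e]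
      refine Ideal.mul_mem_right _ _ (Ideal.pow_le_pow_right (show j + 1 + 1 ≤ (j + 1) * 2 by omega)
        ?_)
      rw [pow_mul]
      exact Ideal.pow_mem_pow (ih (n + 1)) 2
  have h0 : (⟨Z 0, hmem 0⟩ : S) ∈ (⨅ i, IsLocalRing.maximalIdeal S ^ i : Ideal S) := by
    rw [Submodule.mem_iInf]
    rintro (_ | i)
    · simp
    · exact hpow i 0
  rw [Ideal.iInf_pow_eq_bot_of_isLocalRing _ (IsLocalRing.maximalIdeal.isMaximal S).ne_top,
    Submodule.mem_bot] at h0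
  exact hZ.ne_zero 0 (congrArg Subtype.val h0)

theorem valuation_eq_pow (hZ : IsQuadraticChain p α Z) (hv : ∀ n, v (Z n) < 1)
    (hk : ∀ c : k, c ≠ 0 → v (algebraMap k F c) = 1) (n : ℕ) : v (Z n) = v (Z (n + 1)) ^ p := by
  rw [hZ.eq_mul n, map_mul, map_pow,
    valuation_add_eq_one (hk _ (hZ.coeff_ne_zero n)) (hv (n + 2)), mul_one]

/-- The chain leaves every discrete valuation ring, so it is not centered in one. -/
theorem not_isPrincipal_maximalIdeal (hZ : IsQuadraticChain p α Z) (hv : ∀ n, v (Z n) < 1)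
    (hk : ∀ c : k, c ≠ 0 → v (algebraMap k F c) = 1) [IsNoetherianRing S] [IsLocalRing S]
    (hS : IsCentered v S) (hkS : ∀ c : k, algebraMap k F c ∈ S) (h0 : Z 0 ∈ S) (h1 : Z 1 ∈ S) :
    ¬ (IsLocalRing.maximalIdeal S).IsPrincipal := by
  intro hprin
  have hval : ValuationRing S :=
    ((tfae_of_isNoetherianRing_of_isLocalRing_of_isDomain S).out 4 1).1 hprin
  obtain ⟨n, hn⟩ := hZ.exists_notMem hv hS hkS
  suffices ∀ n, Z n ∈ S ∧ Z (n + 1) ∈ S from hn (this n).1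
  intro n
  induction n with
  | zero => exact ⟨h0, h1⟩
  | succ n ih =>
    refine ⟨ih.2, ?_⟩
    rw [show n + 1 + 1 = n + 2 from rfl, ← hZ.div_pow_sub n]
    refine sub_mem ?_ (hkS _)
    have hne := pow_ne_zero p (hZ.ne_zero (n + 1))
    obtain ⟨e, he⟩ | ⟨e, he⟩ := ValuationRing.dvd_total (⟨Z n, ih.1⟩ : S) (⟨Z (n + 1), ih.2⟩ ^ p)
    · replace he : Z (n + 1) ^ p = Z n * e := congrArg Subtype.val he
      have hve : v (e : F) = 1 := by
        have := hZ.valuation_eq_pow hv hk n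
        rw [← map_pow, he, map_mul] at this
        exact (mul_eq_left₀ ((Valuation.ne_zero_iff v).2 (hZ.ne_zero n))).1 this.symm
      rw [he, div_mul_cancel_left₀ (hZ.ne_zero n)]
      exact (hS e e.2).2 hve
    · replace he : Z n = Z (n + 1) ^ p * e := congrArg Subtype.val he
      rw [he, mul_div_cancel_left₀ _ hne]
      exact e.2

/-- A two-dimensional regular local ring centered at the chain is one of the quadratic transforms
along the chain. -/
theorem exists_eq_pairLocal (hZ : IsQuadraticChain p α Z) (hv : ∀ n, v (Z n) < 1)
    (hk : ∀ c : k, c ≠ 0 → v (algebraMap k F c) = 1) [IsNoetherianRing S] [IsLocalRing S]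
    (hS : IsCentered v S) (hkS : ∀ c : k, algebraMap k F c ∈ S) (h0 : Z 0 ∈ S) (h1 : Z 1 ∈ S)
    (hdim : ringKrullDim S = 2) {c d : S}
    (hcd : IsLocalRing.maximalIdeal S = Ideal.span {c, d})
    (hfrac : ∀ z ∈ S, z ∈ IntermediateField.adjoin k {Z 0, Z 1}) :
    ∃ n j, j < p ∧ S = pairLocal k (Z n / Z (n + 1) ^ j) (Z (n + 1)) ∧ Z (n + 2) ∉ S := by
  classical
  have hufd := uniqueFactorizationMonoid_of_maximalIdeal_eq_span_pair hdim hcd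
  have hex := hZ.exists_notMem hv hS hkS
  obtain ⟨n, hn, hn1, hn2⟩ : ∃ n, Z n ∈ S ∧ Z (n + 1) ∈ S ∧ Z (n + 2) ∉ S := by
    have hlt := fun m => Nat.find_min (m := m) hex
    have hspec := Nat.find_spec hex
    rcases hN : Nat.find hex with _ | _ | N
    · exact absurd h0 (hN ▸ hspec)
    · rw [hN] at hspec
      exact absurd h1 hspec
    · rw [hN] at hlt hspec
      exact ⟨N, not_not.1 (hlt N (by omega)), not_not.1 (hlt (N + 1) (by omega)), hspec⟩
  have hs0 := hZ.ne_zero (n + 1)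
  have hp : Z n / Z (n + 1) ^ p ∉ S := fun h => hn2 (by
    rw [← hZ.div_pow_sub n]
    exact sub_mem h (hkS _))
  have hexj : ∃ j, Z n / Z (n + 1) ^ j ∉ S := ⟨p, hp⟩
  obtain ⟨j, hj, hjS, hjS'⟩ : ∃ j < p, Z n / Z (n + 1) ^ j ∈ S ∧ Z n / Z (n + 1) ^ (j + 1) ∉ S := by
    have hspec := Nat.find_spec hexj
    have hle := Nat.find_min' hexj hp
    rcases hN : Nat.find hexj with _ | N
    · rw [hN, pow_zero, div_one] at hspec
      exact absurd hn hspec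
    · exact ⟨N, by omega, not_not.1 (Nat.find_min hexj (show N < _ by omega)), hN ▸ hspec⟩
  refine ⟨n, j, hj, ?_, hn2⟩
  have hve : v (Z n / Z (n + 1) ^ j) = v (Z (n + 1)) ^ (p - j) := by
    have hvs := (Valuation.ne_zero_iff v).2 hs0
    rw [map_div₀, map_pow, hZ.valuation_eq_pow hv hk n, div_eq_iff (pow_ne_zero _ hvs), ← pow_add,
      Nat.sub_add_cancel hj.le]
  have hvr : v (Z n / Z (n + 1) ^ j) < 1 := by
    rw [hve]
    exact pow_lt_one₀ zero_le (hv _) (by omega)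
  refine le_antisymm ?_ (hS.pairLocal_le hk hkS hjS hn1 hvr (hv _))
  have hmem : ∀ f : MvPolynomial (Fin 2) k, aeval ![Z n / Z (n + 1) ^ j, Z (n + 1)] f ∈ S :=
    fun f => hS.pairLocal_le hk hkS hjS hn1 hvr (hv _) (aeval_mem_pairLocal _ _ f)
  obtain h | h | h := dvd_or_dvd_or_exists_constantCoeff_ne_zero (S := S)
    (φ := (aeval ![Z n / Z (n + 1) ^ j, Z (n + 1)] :
      MvPolynomial (Fin 2) k →ₐ[k] F).toRingHom.codRestrict S hmem)
    ((hS.mem_maximalIdeal_iff _).2 (by simpa using hvr))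
    ((hS.mem_maximalIdeal_iff _).2 (by simpa using hv (n + 1)))
    (fun z => by
      obtain ⟨P, Q, hQ, h⟩ := exists_aeval_of_mem_adjoin_pair
        (adjoin_pair_le_adjoin_div_pow hs0 j (hZ.adjoin_le n (hfrac z z.2)))
      exact ⟨P, Q, fun h => hQ (congrArg Subtype.val h), Subtype.ext h⟩)
  · obtain ⟨e, he⟩ := h
    replace he : Z (n + 1) = Z n / Z (n + 1) ^ j * e := by simpa using congrArg Subtype.val he
    have hr0 : Z n / Z (n + 1) ^ j ≠ 0 := div_ne_zero (hZ.ne_zero n) (pow_ne_zero _ hs0)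
    have hve1 : v (e : F) = 1 := by
      refine (hS e e.2).1.antisymm ?_
      by_contra! hlt
      have h1 : v (Z (n + 1)) < v (Z n / Z (n + 1) ^ j) := by
        conv_lhs => rw [he, map_mul]
        exact mul_lt_of_lt_one_right (zero_lt_iff.2 ((Valuation.ne_zero_iff v).2 hr0)) hlt
      rw [hve] at h1
      exact h1.not_ge (pow_le_of_le_one zero_le (hv _).le (by omega))
    refine absurd ((hS e e.2).2 hve1) (fun hinv => hjS' ?_)
    have : Z n / Z (n + 1) ^ (j + 1) = (e : F)⁻¹ := by
      have he0 := ne_zero_of_valuation_eq_one hve1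
      rw [pow_succ, ← div_div, div_eq_iff hs0]
      conv_rhs => rw [he]
      field_simp
    rwa [this]
  · obtain ⟨e, he⟩ := h
    replace he : Z n / Z (n + 1) ^ j = Z (n + 1) * e := by simpa using congrArg Subtype.val he
    refine absurd ?_ hjS'
    rw [pow_succ, ← div_div, he, mul_div_cancel_left₀ _ hs0]
    exact e.2
  · intro z hz
    obtain ⟨P, Q, hQ, h⟩ := h ⟨z, hz⟩
    exact ⟨P, Q, hQ, congrArg Subtype.val h⟩

end IsQuadraticChain

end Centered

section JumpTower

variable {k F : Type} [Field k] [Field F] [Algebra k F]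
variable {Γ₀ : Type*} [LinearOrderedCommGroupWithZero Γ₀] {v : Valuation F Γ₀} {T : Subring F}
variable {p : ℕ} {D₁ D₂ : Derivation k F F} {α β : ℕ → k} {Z U : ℕ → F}

theorem mem_pairLocal_div_pow {x y : F} (hy : y ≠ 0) (j : ℕ) : x ∈ pairLocal k (x / y ^ j) y := by
  have := mul_mem (left_mem_pairLocal (k := k) (x / y ^ j) y)
    (pow_mem (right_mem_pairLocal (k := k) (x / y ^ j) y) j)
  rwa [div_mul_cancel₀ x (pow_ne_zero j hy)] at this

/-- Two quadratic chains along the same valuation such that the parameters of the second have the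
same shape in terms of those of the first at every stage. -/
structure IsJumpTower (v : Valuation F Γ₀) (p : ℕ) (D₁ D₂ : Derivation k F F) (α β : ℕ → k)
    (Z U : ℕ → F) : Prop where
  top : IsQuadraticChain p α Z
  base : IsQuadraticChain p β U
  valuation_algebraMap : ∀ c : k, c ≠ 0 → v (algebraMap k F c) = 1
  valuation_lt_one : ∀ n, v (Z n) < 1
  jacobian_ne_zero : ∀ n, jacobian D₁ D₂ (Z n) (Z (n + 1)) ≠ 0
  isJumpForm : ∀ n, ∃ g κ t s : k, g ≠ 0 ∧ t ≠ 0 ∧ s ≠ 0 ∧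
    IsJumpForm v p D₁ D₂ (Z n) (Z (n + 1)) (U n) (U (n + 1)) g κ t s

namespace IsJumpTower

/-- The shape of `U n`, `U (n + 1)` with the leading coefficients forgotten. -/
theorem exists_units (h : IsJumpTower v p D₁ D₂ α β Z U) (n : ℕ) :
    ∃ G ∈ pairLocal k (Z n) (Z (n + 1)), ∃ τ ∈ pairLocal k (Z n) (Z (n + 1)),
    ∃ σ ∈ pairLocal k (Z n) (Z (n + 1)), ∃ ε ∈ pairLocal k (Z n) (Z (n + 1)),
      v G = 1 ∧ v τ = 1 ∧ v σ = 1 ∧ v ε = 1 ∧ U n = Z n ^ p * G ∧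
      U (n + 1) = Z (n + 1) ^ p * τ + Z n * σ ∧
      jacobian D₁ D₂ (U n) (U (n + 1)) = ε * Z n ^ p * jacobian D₁ D₂ (Z n) (Z (n + 1)) := by
  obtain ⟨g, κ, t, s, hg, ht, hs, h₀, hh₀, h₁, hh₁, τ, hτ, σ, hσ, ε, hε, hu, hw, hvτ, hvσ, hvε,
    hJ⟩ := h.isJumpForm n
  have hk := h.valuation_algebraMap
  have hx := h.valuation_lt_one n
  have hy := h.valuation_lt_one (n + 1)
  have hxL := left_mem_pairLocal (k := k) (Z n) (Z (n + 1))
  have hyL := right_mem_pairLocal (k := k) (Z n) (Z (n + 1))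
  have hkL := algebraMap_mem_pairLocal (k := k) (Z n) (Z (n + 1))
  have hcen := isCentered_pairLocal hk hx hy
  have e : algebraMap k F g + algebraMap k F κ * Z (n + 1) + Z n * h₀ + Z (n + 1) ^ 2 * h₁ =
      algebraMap k F g + (Z n * h₀ + Z (n + 1) * (algebraMap k F κ + Z (n + 1) * h₁)) := by ring
  have hκ := add_mem (hkL κ) (mul_mem hyL hh₁)
  rw [e] at hu
  exact ⟨_, add_mem (hkL g) (add_mem (mul_mem hxL hh₀) (mul_mem hyL hκ)), τ, hτ, σ, hσ, ε, hε,
    valuation_add_eq_one (hk g hg)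
      (valuation_mul_add_mul_lt_one hx hy (hcen _ hh₀).1 (hcen _ hκ).1),
    valuation_eq_one_of_sub_algebraMap hk ht hvτ, valuation_eq_one_of_sub_algebraMap hk hs hvσ, hvε,
    hu, hw, hJ⟩

theorem valuation_base (h : IsJumpTower v p D₁ D₂ α β Z U) (n : ℕ) : v (U n) = v (Z n) ^ p := by
  obtain ⟨G, -, τ, -, σ, -, ε, -, hvG, -, -, -, hu, -⟩ := h.exists_units n
  rw [hu, map_mul, map_pow, hvG, mul_one]

theorem valuation_base_lt_one (h : IsJumpTower v p D₁ D₂ α β Z U) (n : ℕ) : v (U n) < 1 := by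
  rw [h.valuation_base]
  exact pow_lt_one₀ zero_le (h.valuation_lt_one n) (by have := h.top.one_lt; omega)

end IsJumpTower

namespace IsQuadraticChain

theorem mem_of_le (hZ : IsQuadraticChain p α Z) (hkT : ∀ c : k, algebraMap k F c ∈ T) {m : ℕ}
    (h : Z m ∈ T) (h' : Z (m + 1) ∈ T) {n : ℕ} (hn : n ≤ m + 1) : Z n ∈ T := by
  suffices ∀ i ≤ m, Z (m - i) ∈ T ∧ Z (m - i + 1) ∈ T by
    obtain rfl | hn := hn.eq_or_lt
    · exact h'
    · have := (this (m - n) (by omega)).1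
      rwa [show m - (m - n) = n by omega] at this
  intro i
  induction i with
  | zero => exact fun _ => ⟨h, h'⟩
  | succ i ih =>
    intro hi
    obtain ⟨h1, h2⟩ := ih (by omega)
    obtain ⟨j, hj⟩ : ∃ j, m - (i + 1) = j := ⟨_, rfl⟩
    rw [show m - i = j + 1 by omega] at h1 h2
    rw [hj]
    refine ⟨?_, h1⟩
    rw [hZ.eq_mul j]
    exact mul_mem (pow_mem h1 p) (add_mem (hkT _) h2)

theorem div_pow_eq (hZ : IsQuadraticChain p α Z) (n : ℕ) {i : ℕ} (hi : i ≤ p) :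
    Z n / Z (n + 1) ^ i = Z (n + 1) ^ (p - i) * (algebraMap k F (α n) + Z (n + 2)) := by
  rw [div_eq_iff (pow_ne_zero _ (hZ.ne_zero _))]
  conv_lhs => rw [hZ.eq_mul n, ← Nat.sub_add_cancel hi, pow_add]
  ring

theorem div_pow_mem (hZ : IsQuadraticChain p α Z) (hkT : ∀ c : k, algebraMap k F c ∈ T) {n : ℕ}
    (h : Z (n + 1) ∈ T) (h' : Z (n + 2) ∈ T) {i : ℕ} (hi : i ≤ p) : Z n / Z (n + 1) ^ i ∈ T := by
  rw [hZ.div_pow_eq n hi]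
  exact mul_mem (pow_mem h _) (add_mem (hkT _) h')

theorem valuation_div_pow_lt_one (hZ : IsQuadraticChain p α Z) (hv : ∀ n, v (Z n) < 1)
    (hk : ∀ c : k, c ≠ 0 → v (algebraMap k F c) = 1) (n : ℕ) {i : ℕ} (hi : i < p) :
    v (Z n / Z (n + 1) ^ i) < 1 := by
  rw [hZ.div_pow_eq n hi.le, map_mul, map_pow,
    valuation_add_eq_one (hk _ (hZ.coeff_ne_zero n)) (hv (n + 2)), mul_one]
  exact pow_lt_one₀ zero_le (hv _) (by omega)

/-- Monomial pairs are preserved along the chain as long as it stays in the ring. -/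
theorem isMonomialPair_of_le (hZ : IsQuadraticChain p α Z) (hv : ∀ n, v (Z n) < 1)
    (hk : ∀ c : k, c ≠ 0 → v (algebraMap k F c) = 1) [IsLocalRing T] [IsNoetherianRing T]
    (hT : IsCentered v T) (hkT : ∀ c : k, algebraMap k F c ∈ T) (hdim : ringKrullDim T = 2)
    {c d : T} (hcd : IsLocalRing.maximalIdeal T = Ideal.span {c, d}) {n i : ℕ} (hi : i < p)
    (h1 : Z (n + 1) ∈ T) (h2 : Z (n + 2) ∈ T)
    (h : IsMonomialPair k v T c d (Z n / Z (n + 1) ^ i) (Z (n + 1))) :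
    IsMonomialPair k v T c d (Z (n + 1)) (Z (n + 2)) := by
  have hs0 := hZ.ne_zero (n + 1)
  have hmul : ∀ i, Z n / Z (n + 1) ^ i = Z (n + 1) * (Z n / Z (n + 1) ^ (i + 1)) := fun i => by
    rw [pow_succ]
    field_simp
  have key : ∀ e, i + e < p →
      IsMonomialPair k v T c d (Z n / Z (n + 1) ^ (i + e)) (Z (n + 1)) := by
    intro e
    induction e with
    | zero => exact fun _ => h
    | succ e ih =>
      intro he
      refine ((ih (by omega)).blowup hT hdim hcd hk hkT h1 (hZ.div_pow_mem hkT h1 h2 he.le) (hv _)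
        (hZ.valuation_div_pow_lt_one hv hk n he) hs0 0 ?_).comm
      rw [map_zero, zero_add]
      exact hmul _
  have := key (p - 1 - i) (by omega)
  rw [show i + (p - 1 - i) = p - 1 by omega] at this
  refine this.blowup hT hdim hcd hk hkT h1 h2 (hv _) (hv _) hs0 (α n) ?_
  rw [hZ.div_pow_eq n (by omega), show p - (p - 1) = 1 by omega, pow_one]

theorem isMonomialPair_of_le_of_le (hZ : IsQuadraticChain p α Z) (hv : ∀ n, v (Z n) < 1)
    (hk : ∀ c : k, c ≠ 0 → v (algebraMap k F c) = 1) [IsLocalRing T] [IsNoetherianRing T]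
    (hT : IsCentered v T) (hkT : ∀ c : k, algebraMap k F c ∈ T) (hdim : ringKrullDim T = 2)
    {c d : T} (hcd : IsLocalRing.maximalIdeal T = Ideal.span {c, d}) {m n i : ℕ} (hi : i < p)
    (hm : ∀ l ≤ m + 1, Z l ∈ T) (hnm : n < m ∨ n = m ∧ i = 0)
    (h : IsMonomialPair k v T c d (Z n / Z (n + 1) ^ i) (Z (n + 1))) :
    IsMonomialPair k v T c d (Z m) (Z (m + 1)) := by
  obtain hnm | ⟨rfl, rfl⟩ := hnm
  · obtain ⟨e, rfl⟩ := Nat.exists_eq_add_of_lt hnm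
    induction e with
    | zero =>
      exact hZ.isMonomialPair_of_le hv hk hT hkT hdim hcd hi (hm (n + 1) (by omega))
        (hm (n + 2) (by omega)) h
    | succ e ih =>
      have := ih (fun l hl => hm l (by omega)) (by omega)
      rw [← div_one (Z (n + e + 1)), ← pow_zero (Z (n + e + 1 + 1))] at this
      exact hZ.isMonomialPair_of_le hv hk hT hkT hdim hcd (by omega) (hm (n + e + 2) (by omega))
        (hm (n + e + 3) (by omega)) this
  · simpa using h

end IsQuadraticChain

namespace IsJumpTower

theorem pairLocal_le (h : IsJumpTower v p D₁ D₂ α β Z U) {m j : ℕ} (hj : j < p) :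
    pairLocal k (Z m) (Z (m + 1)) ≤ pairLocal k (Z m / Z (m + 1) ^ j) (Z (m + 1)) := by
  have hk := h.valuation_algebraMap
  have hv := h.valuation_lt_one
  refine (isCentered_pairLocal hk (h.top.valuation_div_pow_lt_one hv hk m hj)
    (hv (m + 1))).pairLocal_le hk (algebraMap_mem_pairLocal _ _) ?_ (right_mem_pairLocal _ _) (hv m)
    (hv (m + 1))
  exact mem_pairLocal_div_pow (h.top.ne_zero (m + 1)) j

theorem div_notMem (h : IsJumpTower v p D₁ D₂ α β Z U) {m j : ℕ} (hj : j < p)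
    [IsNoetherianRing (pairLocal k (Z m / Z (m + 1) ^ j) (Z (m + 1)))]
    [IsLocalRing (pairLocal k (Z m / Z (m + 1) ^ j) (Z (m + 1)))]
    (hdim : ringKrullDim (pairLocal k (Z m / Z (m + 1) ^ j) (Z (m + 1))) = 2) :
    U m / U (m + 1) ∉ pairLocal k (Z m / Z (m + 1) ^ j) (Z (m + 1)) := by
  intro hmem
  have hk := h.valuation_algebraMap
  have hv := h.valuation_lt_one
  have hvz := h.top.valuation_div_pow_lt_one hv hk m hj
  have hcen := isCentered_pairLocal hk hvz (hv (m + 1))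
  obtain ⟨G, hG, τ, hτ, σ, hσ, ε, hε, hvG, hvτ, hvσ, hvε, hu, hw, hJ⟩ := h.exists_units m
  replace hG := h.pairLocal_le hj hG
  replace hτ := h.pairLocal_le hj hτ
  replace hσ := h.pairLocal_le hj hσ
  have hx := div_mul_cancel₀ (Z m) (pow_ne_zero j (h.top.ne_zero (m + 1)))
  have hy0 := h.top.ne_zero (m + 1)
  have hU0 := h.base.ne_zero (m + 1)
  have hG0 := ne_zero_of_valuation_eq_one hvG
  refine curve_not_dvd hdim (maximalIdeal_pairLocal_eq hk hvz (hv (m + 1)))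
    (e₁ := ⟨τ, hτ⟩) (e₂ := ⟨σ, hσ⟩) ((hcen.isUnit_iff _).2 hvτ) ((hcen.isUnit_iff _).2 hvσ)
    (n := p - j) (by omega) p (j * p)
    ⟨⟨Z (m + 1) ^ j * (U m / U (m + 1)) / G,
      hcen.div_mem (mul_mem (pow_mem (right_mem_pairLocal _ _) j) hmem) hG hvG⟩, Subtype.ext ?_⟩
  push_cast
  have hwp : Z (m + 1) ^ p = Z (m + 1) ^ j * Z (m + 1) ^ (p - j) := by
    rw [← pow_add, Nat.add_sub_cancel' hj.le]
  have e1 : U (m + 1) = Z (m + 1) ^ j *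
      (Z (m + 1) ^ (p - j) * τ + Z m / Z (m + 1) ^ j * σ) := by
    rw [hw, hwp]
    field_simp
  have e2 : (Z m / Z (m + 1) ^ j) ^ p * Z (m + 1) ^ (j * p) = Z m ^ p := by
    rw [pow_mul, ← mul_pow, hx]
  rw [e2, mul_div_assoc', mul_left_comm, ← mul_assoc, ← e1, mul_div_cancel₀ _ hU0, hu,
    mul_div_cancel_right₀ _ hG0]

theorem not_isMonomialPair (h : IsJumpTower v p D₁ D₂ α β Z U) [CharP F p] {m j : ℕ} (hj : j < p)
    [IsNoetherianRing (pairLocal k (Z m / Z (m + 1) ^ j) (Z (m + 1)))]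
    [IsLocalRing (pairLocal k (Z m / Z (m + 1) ^ j) (Z (m + 1)))]
    (hdim : ringKrullDim (pairLocal k (Z m / Z (m + 1) ^ j) (Z (m + 1))) = 2)
    {c d : pairLocal k (Z m / Z (m + 1) ^ j) (Z (m + 1))}
    (hcd : IsLocalRing.maximalIdeal (pairLocal k (Z m / Z (m + 1) ^ j) (Z (m + 1))) =
      Ideal.span {c, d}) :
    ¬ IsMonomialPair k v (pairLocal k (Z m / Z (m + 1) ^ j) (Z (m + 1))) c d
      (U m) (U (m + 1)) := by
  have hk := h.valuation_algebraMap
  have hv := h.valuation_lt_one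
  have hx := div_mul_cancel₀ (Z m) (pow_ne_zero j (h.top.ne_zero (m + 1)))
  obtain ⟨G, hG, τ, hτ, σ, hσ, ε, hε, hvG, hvτ, hvσ, hvε, hu, hw, hJ⟩ := h.exists_units m
  refine not_isMonomialPair_of_jacobian (G := G) (τ := τ) (σ := σ) (ε := ε) (D₁ := D₁) (D₂ := D₂) hk
    (h.top.valuation_div_pow_lt_one hv hk m hj) (hv (m + 1)) hdim hcd h.top.one_lt hj
    (h.pairLocal_le hj hG) (h.pairLocal_le hj hτ) (h.pairLocal_le hj hσ) (h.pairLocal_le hj hε)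
    hvG hvτ hvσ hvε ?_ ?_ ?_ ?_ <;> rw [hx]
  exacts [hu, hw, h.jacobian_ne_zero m, hJ]

/-- No pair of two-dimensional regular local rings `A ≤ B` centered at the two chains is a monomial
extension. -/
theorem not_monomial (h : IsJumpTower v p D₁ D₂ α β Z U) [CharP F p] {A B : Subring F}
    [IsNoetherianRing A] [IsNoetherianRing B] [IsLocalRing A] [IsLocalRing B]
    (hA : IsCentered v A) (hB : IsCentered v B) (hAB : A ≤ B)
    (hkA : ∀ c : k, algebraMap k F c ∈ A) (hU0 : U 0 ∈ A) (hU1 : U 1 ∈ A) (hZ0 : Z 0 ∈ B)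
    (hZ1 : Z 1 ∈ B) (hdimA : ringKrullDim A = 2) (hdimB : ringKrullDim B = 2)
    (hfracA : ∀ z ∈ A, z ∈ IntermediateField.adjoin k {U 0, U 1})
    (hfracB : ∀ z ∈ B, z ∈ IntermediateField.adjoin k {Z 0, Z 1}) {a b : A} {c d : B}
    (hab : IsLocalRing.maximalIdeal A = Ideal.span {a, b})
    (hcd : IsLocalRing.maximalIdeal B = Ideal.span {c, d}) {ε₁ ε₂ : F} (hε₁ : ε₁ ∈ B)
    (hε₂ : ε₂ ∈ B) (hv₁ : v ε₁ = 1) (hv₂ : v ε₂ = 1) {m₁₁ m₁₂ m₂₁ m₂₂ : ℕ}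
    (hm : m₁₁ * m₂₂ ≠ m₁₂ * m₂₁) (ha : (a : F) = ε₁ * c ^ m₁₁ * d ^ m₁₂) :
    (b : F) ≠ ε₂ * c ^ m₂₁ * d ^ m₂₂ := by
  intro hb
  have hk := h.valuation_algebraMap
  have hv := h.valuation_lt_one
  have hvU := h.valuation_base_lt_one
  have hkB : ∀ c : k, algebraMap k F c ∈ B := fun c => hAB (hkA c)
  have hp := h.top.one_lt
  obtain ⟨m, j, hj, rfl, -⟩ :=
    h.top.exists_eq_pairLocal hv hk hB hkB hZ0 hZ1 hdimB hcd hfracB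
  obtain ⟨n, i, hi, rfl, -⟩ :=
    h.base.exists_eq_pairLocal hvU hk hA hkA hU0 hU1 hdimA hab hfracA
  have hmon := isMonomialPair_of_maximalIdeal_eq hk (h.base.valuation_div_pow_lt_one hvU hk n hi)
    (hvU (n + 1)) hdimA hab hε₁ hε₂ hv₁ hv₂ hm ha hb
  have hUA : ∀ l ≤ n + 1, U l ∈ pairLocal k (U n / U (n + 1) ^ i) (U (n + 1)) := by
    exact fun l hl => h.base.mem_of_le hkA (mem_pairLocal_div_pow (h.base.ne_zero (n + 1)) i)
      (right_mem_pairLocal _ _) hl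
  have hUB : ∀ l ≤ m + 1, U l ∈ pairLocal k (Z m / Z (m + 1) ^ j) (Z (m + 1)) := by
    obtain ⟨G, hG, τ, hτ, σ, hσ, ε, hε, -, -, -, -, hu, hw, -⟩ := h.exists_units m
    have hxL := left_mem_pairLocal (k := k) (Z m) (Z (m + 1))
    have hyL := right_mem_pairLocal (k := k) (Z m) (Z (m + 1))
    exact fun l hl => h.base.mem_of_le hkB
      (h.pairLocal_le hj (hu ▸ mul_mem (pow_mem hxL p) hG))
      (h.pairLocal_le hj (hw ▸ add_mem (mul_mem (pow_mem hyL p) hτ) (mul_mem hxL hσ))) hl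
  have hnot := h.div_notMem hj hdimB
  have hnm : n < m ∨ n = m ∧ i = 0 := by
    by_contra! hcon
    apply hnot
    obtain hlt | rfl := hcon.1.lt_or_eq
    · rw [← pow_one (U (m + 1))]
      exact h.base.div_pow_mem hkB (hAB (hUA _ (by omega))) (hAB (hUA _ (by omega))) hp.le
    · have hi0 : i ≠ 0 := hcon.2 rfl
      have e : U m / U (m + 1) = U m / U (m + 1) ^ i * U (m + 1) ^ (i - 1) := by
        have := h.base.ne_zero (m + 1)
        obtain ⟨i, rfl⟩ := Nat.exists_eq_succ_of_ne_zero hi0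
        rw [Nat.succ_eq_add_one, Nat.add_sub_cancel, pow_succ]
        field_simp
      rw [e]
      exact hAB (mul_mem (left_mem_pairLocal _ _) (pow_mem (right_mem_pairLocal _ _) _))
  exact h.not_isMonomialPair hj hdimB hcd
    (h.base.isMonomialPair_of_le_of_le hvU hk hB hkB hdimB hcd hi hUB hnm hmon)

end IsJumpTower

end JumpTower

section Construction

variable {k F : Type} [Field k] [Field F] [Algebra k F]
variable {Γ₀ : Type*} [LinearOrderedCommGroupWithZero Γ₀] {v : Valuation F Γ₀}
variable {p : ℕ} {D₁ D₂ : Derivation k F F}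

theorem exists_seq_div_pow_sub (p : ℕ) (α : ℕ → k) (r s : F) : ∃ Z : ℕ → F, Z 0 = r ∧ Z 1 = s ∧
    ∀ n, Z (n + 2) = Z n / Z (n + 1) ^ p - algebraMap k F (α n) := by
  let q : ℕ → F × F := fun n =>
    Nat.rec (r, s) (fun n q => (q.2, q.1 / q.2 ^ p - algebraMap k F (α n))) n
  exact ⟨fun n => (q n).1, rfl, rfl, fun _ => rfl⟩

/-- A pair of generators of a field of transcendence degree two starts a quadratic chain. -/
theorem exists_isQuadraticChain (hp : 1 < p) {α : ℕ → k} (hα : ∀ n, α n ≠ 0)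
    (htr : 2 ≤ Algebra.trdeg k F) {r s : F} (h : IntermediateField.adjoin k {r, s} = ⊤) :
    ∃ Z : ℕ → F, Z 0 = r ∧ Z 1 = s ∧ IsQuadraticChain p α Z ∧
      ∀ n, AlgebraicIndependent k ![Z n, Z (n + 1)] := by
  obtain ⟨Z, h0, h1, hZ⟩ := exists_seq_div_pow_sub p α r s
  have hne : ∀ n, IntermediateField.adjoin k {Z n, Z (n + 1)} = ⊤ → Z n ≠ 0 ∧ Z (n + 1) ≠ 0 := by
    intro n hn
    have hind := algebraicIndependent_pair_of_adjoin_eq_top htr hn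
    exact ⟨hind.ne_zero 0, hind.ne_zero 1⟩
  have hgen : ∀ n, IntermediateField.adjoin k {Z n, Z (n + 1)} = ⊤ := by
    intro n
    induction n with
    | zero => rwa [h0, h1]
    | succ n ih =>
      rw [eq_top_iff, ← ih]
      refine (adjoin_pair_le_adjoin_div_pow (hne n ih).2 p).trans ?_
      rw [IntermediateField.adjoin_le_iff]
      have hm1 : Z (n + 1) ∈ IntermediateField.adjoin k {Z (n + 1), Z (n + 1 + 1)} :=
        IntermediateField.subset_adjoin _ _ (by simp)
      have hm2 : Z (n + 2) ∈ IntermediateField.adjoin k {Z (n + 1), Z (n + 1 + 1)} :=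
        IntermediateField.subset_adjoin _ _ (by simp)
      rintro z (rfl | rfl)
      · have := add_mem hm2 (algebraMap_mem _ (α n))
        rwa [show Z (n + 2) + algebraMap k F (α n) = Z n / Z (n + 1) ^ p by
          rw [hZ n, sub_add_cancel]] at this
      · exact hm1
  refine ⟨Z, h0, h1, ⟨hp, hα, fun n => (hne n (hgen n)).1, fun n => ?_⟩,
    fun n => algebraicIndependent_pair_of_adjoin_eq_top htr (hgen n)⟩
  rw [hZ n, add_sub_cancel, mul_div_cancel₀ _ (pow_ne_zero _ (hne n (hgen n)).2)]

/-- The leading coefficients along a tower of jump forms, see `IsJumpForm.step`. -/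
structure IsJumpCoeff (p : ℕ) (α g κ t s : ℕ → k) : Prop where
  left_ne_zero : ∀ n, α n ≠ 0
  g_ne_zero : ∀ n, g n ≠ 0
  t_ne_zero : ∀ n, t n ≠ 0
  s_ne_zero : ∀ n, s n ≠ 0
  add_ne_zero : ∀ n, t n + α n * s n ≠ 0
  g_succ : ∀ n, g (n + 1) = t n + α n * s n
  κ_succ : ∀ n, κ (n + 1) = s n
  t_succ : ∀ n, t (n + 1) = g n * t n ^ p / (t n + α n * s n) ^ (2 * p)
  s_succ : ∀ n, s (n + 1) = κ n * α n ^ p / (t n + α n * s n) ^ p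

theorem exists_ne_zero_add_mul_ne_zero (hcard : 3 ≤ Cardinal.mk k) (t s : k) :
    ∃ α : k, α ≠ 0 ∧ (s ≠ 0 → t + α * s ≠ 0) := by
  by_contra! h
  have hle : Cardinal.mk k ≤ 2 := by
    have hu : (Set.univ : Set k) ⊆ {0, -t / s} := by
      intro a _
      by_cases ha : a = 0
      · simp [ha]
      · obtain ⟨hs, h⟩ := h a ha
        have : a = -t / s := by
          rw [eq_div_iff hs]
          linear_combination h
        simp [this]
    rw [← Cardinal.mk_univ]
    refine (Cardinal.mk_le_mk_of_subset hu).trans (Cardinal.mk_insert_le.trans ?_)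
    rw [Cardinal.mk_singleton, one_add_one_eq_two]
  have := hcard.trans hle
  norm_cast at this

theorem exists_isJumpCoeff (hcard : 3 ≤ Cardinal.mk k) (p : ℕ) :
    ∃ α g κ t s : ℕ → k, IsJumpCoeff p α g κ t s ∧ g 0 = 1 ∧ κ 0 = 1 ∧ t 0 = 1 ∧ s 0 = 1 := by
  choose a ha0 ha using exists_ne_zero_add_mul_ne_zero hcard
  let next : k × k × k × k → k × k × k × k := fun q =>
    (q.2.2.1 + a q.2.2.1 q.2.2.2 * q.2.2.2, q.2.2.2,
      q.1 * q.2.2.1 ^ p / (q.2.2.1 + a q.2.2.1 q.2.2.2 * q.2.2.2) ^ (2 * p),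
      q.2.1 * a q.2.2.1 q.2.2.2 ^ p / (q.2.2.1 + a q.2.2.1 q.2.2.2 * q.2.2.2) ^ p)
  let q : ℕ → k × k × k × k := fun n => Nat.rec (1, 1, 1, 1) (fun _ q => next q) n
  have hq : ∀ n, (q n).1 ≠ 0 ∧ (q n).2.1 ≠ 0 ∧ (q n).2.2.1 ≠ 0 ∧ (q n).2.2.2 ≠ 0 := by
    intro n
    induction n with
    | zero => exact ⟨one_ne_zero, one_ne_zero, one_ne_zero, one_ne_zero⟩
    | succ n ih =>
      obtain ⟨hg, hκ, ht, hs⟩ := ih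
      have h1 := ha (q n).2.2.1 _ hs
      have h2 := ha0 (q n).2.2.1 (q n).2.2.2
      exact ⟨h1, hs, div_ne_zero (mul_ne_zero hg (pow_ne_zero _ ht)) (pow_ne_zero _ h1),
        div_ne_zero (mul_ne_zero hκ (pow_ne_zero _ h2)) (pow_ne_zero _ h1)⟩
  exact ⟨fun n => a (q n).2.2.1 (q n).2.2.2, fun n => (q n).1, fun n => (q n).2.1,
    fun n => (q n).2.2.1, fun n => (q n).2.2.2,
    ⟨fun n => ha0 _ _, fun n => (hq n).1, fun n => (hq n).2.2.1, fun n => (hq n).2.2.2,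
      fun n => ha _ _ (hq n).2.2.2, fun _ => rfl, fun _ => rfl, fun _ => rfl, fun _ => rfl⟩,
    rfl, rfl, rfl, rfl⟩

theorem IsJumpCoeff.exists_isJumpTower {α g κ t s : ℕ → k} (hc : IsJumpCoeff p α g κ t s)
    (hk : ∀ c : k, c ≠ 0 → v (algebraMap k F c) = 1) (hp : p.Prime) [CharP F p] {Z : ℕ → F}
    (hZ : IsQuadraticChain p α Z) (hv : ∀ n, v (Z n) < 1)
    (hJ : jacobian D₁ D₂ (Z 0) (Z 1) ≠ 0) {u w : F} (hu : u ≠ 0)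
    (h0 : IsJumpForm v p D₁ D₂ (Z 0) (Z 1) u w (g 0) (κ 0) (t 0) (s 0)) :
    ∃ (β : ℕ → k) (U : ℕ → F), U 0 = u ∧ U 1 = w ∧ IsJumpTower v p D₁ D₂ α β Z U := by
  obtain ⟨U, hU0, hU1, hU⟩ := exists_seq_div_pow_sub p
    (fun n => g n * α n ^ p / (t n + α n * s n) ^ p) u w
  have hform : ∀ n, IsJumpForm v p D₁ D₂ (Z n) (Z (n + 1)) (U n) (U (n + 1))
      (g n) (κ n) (t n) (s n) := by
    intro n
    induction n with
    | zero => rwa [hU0, hU1]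
    | succ n ih =>
      have := (ih.step hk hp (hv n) (hv (n + 1)) (hv (n + 2)) (hZ.ne_zero _) (hZ.eq_mul n)
        (hZ.coeff_ne_zero n) (hc.add_ne_zero n)).2
      rwa [← hU n, ← hc.g_succ, ← hc.κ_succ, hc.g_succ n, ← hc.t_succ, ← hc.s_succ,
        ← hc.g_succ] at this
  have hne : ∀ n, U n ≠ 0 := by
    rintro (_ | n)
    · rwa [hU0]
    · exact ((hform n).step hk hp (hv n) (hv (n + 1)) (hv (n + 2)) (hZ.ne_zero _) (hZ.eq_mul n)
        (hZ.coeff_ne_zero n) (hc.add_ne_zero n)).1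
  refine ⟨fun n => g n * α n ^ p / (t n + α n * s n) ^ p, U, hU0, hU1, hZ, ⟨hZ.one_lt, fun n => ?_, hne,
    fun n => ?_⟩, hk, hv, fun n => ?_, fun n => ⟨_, _, _, _, hc.g_ne_zero n, hc.t_ne_zero n,
    hc.s_ne_zero n, hform n⟩⟩
  · exact div_ne_zero (mul_ne_zero (hc.g_ne_zero n) (pow_ne_zero _ (hc.left_ne_zero n)))
      (pow_ne_zero _ (hc.add_ne_zero n))
  · rw [hU n, add_sub_cancel, mul_div_cancel₀ _ (pow_ne_zero _ (hne _))]
  · induction n with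
    | zero => exact hJ
    | succ n ih =>
      intro h
      rw [jacobian_step (hZ.eq_mul n), h, mul_zero, neg_zero] at ih
      exact ih rfl

end Construction

section NonMonomialization

variable {k F : Type} [Field k] [Field F] [Algebra k F] {V : ValuationSubring F}
variable {p : ℕ} {D₁ D₂ : Derivation k F F} {α β : ℕ → k} {Z U : ℕ → F}

theorem IsCentered.of_dominates {Γ₀ : Type*} [LinearOrderedCommGroupWithZero Γ₀]
    {v : Valuation F Γ₀} {S T : Subring F} (hS : IsCentered v S) (h : Dominates S T) :
    IsCentered v T := by
  obtain ⟨hle, h⟩ := h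
  refine fun z hz => ⟨(hS z (hle hz)).1, fun h1 => ?_⟩
  obtain ⟨w, hw⟩ := (not_iff_not.1 (h z hz (hle hz))).1 ((hS.isUnit_iff _).2 h1)
    |>.exists_right_inv
  rw [inv_eq_of_mul_eq_one_right (congrArg Subtype.val hw)]
  exact w.2

/-- A quadratic chain and its jump tower have no monomial extension of algebraic regular local
rings along the valuation. -/
theorem IsJumpTower.not_isMonomialExtension (h : IsJumpTower V.valuation p D₁ D₂ α β Z U)
    [CharP F p] (htr : Algebra.trdeg k F = 2) (hgen : IntermediateField.adjoin k {Z 0, Z 1} = ⊤)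
    {A B : Subring F}
    (hA : IsAlgebraicLocalRingOf k (IntermediateField.adjoin k {U 0, U 1}) A)
    (hB : IsAlgebraicLocalRingOf k ⊤ B) (hVB : Dominates V.toSubring B) (hBA : Dominates B A)
    (hUA : pairLocal k (U 0) (U 1) ≤ A) (hZB : pairLocal k (Z 0) (Z 1) ≤ B) :
    ¬ IsMonomialExtension A B := by
  rintro ⟨n, hAB, ⟨hnA, hlA, hdA, -⟩, ⟨hnB, hlB, hdB, -⟩, xs, ys, δ, M, hxs, hys, hδ, hM, heq⟩
  have hcB := hVB.isCentered
  have hcA := hcB.of_dominates hBA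
  have hk := h.valuation_algebraMap
  have hv := h.valuation_lt_one
  have hkA : ∀ c : k, algebraMap k F c ∈ A := fun c => hUA (algebraMap_mem_pairLocal _ _ c)
  have hkB : ∀ c : k, algebraMap k F c ∈ B := fun c => hAB (hkA c)
  have hU0 := hUA (left_mem_pairLocal _ _)
  have hU1 := hUA (right_mem_pairLocal _ _)
  have hZ0 := hZB (left_mem_pairLocal _ _)
  have hZ1 := hZB (right_mem_pairLocal _ _)
  have hnp := h.top.not_isPrincipal_maximalIdeal hv hk hcB hkB hZ0 hZ1
  have hmA : IsLocalRing.maximalIdeal A = Ideal.span (Set.range xs) := by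
    ext z
    rw [hxs, IsLocalRing.mem_maximalIdeal, mem_nonunits_iff]
  have hmB : IsLocalRing.maximalIdeal B = Ideal.span (Set.range ys) := by
    ext z
    rw [hys, IsLocalRing.mem_maximalIdeal, mem_nonunits_iff]
  have hn : n = 2 := by
    obtain ⟨C, hC, hCB, hfr⟩ := hB.2.2.2
    have hle := ringKrullDim_le_of_essFiniteType B C hC hCB hfr (d := 2) (by rw [htr]; norm_cast)
    rw [hdB] at hle
    have hle' : n ≤ 2 := by exact_mod_cast hle
    interval_cases n
    · refine (hnp ?_).elim
      rw [hmB, Set.range_eq_empty, Ideal.span_empty]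
      exact bot_isPrincipal
    · refine (hnp ⟨ys 0, ?_⟩).elim
      rw [hmB, Set.range_unique]
      rfl
    · rfl
  subst hn
  have hrange : ∀ {R : Subring F} (f : Fin 2 → R), Set.range f = {f 0, f 1} := fun f => by
    ext z
    simp [Fin.exists_fin_two, eq_comm]
  rw [hrange] at hmA hmB
  have hM' : M 0 0 * M 1 1 ≠ M 0 1 * M 1 0 := by
    intro h
    apply hM
    rw [Matrix.det_fin_two]
    simp only [Matrix.map_apply]
    rw [sub_eq_zero]
    exact_mod_cast h
  have hmon : ∀ i, (xs i : F) = δ i * ys 0 ^ M i 0 * ys 1 ^ M i 1 := fun i => by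
    have := congrArg Subtype.val (heq i)
    rw [Fin.prod_univ_two] at this
    simpa [mul_assoc] using this
  exact h.not_monomial hcA hcB hAB hkA hU0 hU1 hZ0 hZ1 hdA hdB (fun z hz => hA.1 hz)
    (fun z _ => hgen ▸ IntermediateField.mem_top) hmA hmB (δ 0).2 (δ 1).2
    ((hcB.isUnit_iff _).1 (hδ 0)) ((hcB.isUnit_iff _).1 (hδ 1)) hM' (hmon 0) (hmon 1)

/-- The first stage of the tower. -/
theorem isJumpForm_pow_mul_one_add {Γ₀ : Type*} [LinearOrderedCommGroupWithZero Γ₀]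
    {v : Valuation F Γ₀} [CharP F p] (x y : F) :
    IsJumpForm (k := k) v p D₁ D₂ x y (x ^ p * (1 + y)) (y ^ p + x) 1 1 1 1 := by
  have hD : ∀ (D : Derivation k F F) (a : F), D (a ^ p) = 0 := fun D a => by
    simp [Derivation.leibniz_pow]
  refine ⟨0, zero_mem _, 0, zero_mem _, 1, one_mem _, 1, one_mem _, -1, neg_mem (one_mem _),
    by simp, by simp, by simp, by simp, by simp, ?_⟩
  simp only [jacobian, Derivation.leibniz, map_add, hD, Derivation.map_one_eq_zero, smul_eq_mul]
  ring

end NonMonomialization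

section Main

variable {k F : Type} [Field k] [Field F] [Algebra k F]

theorem IsJumpTower.isPowMulUnit {Γ₀ : Type*} [LinearOrderedCommGroupWithZero Γ₀]
    {v : Valuation F Γ₀} {p : ℕ} {D₁ D₂ : Derivation k F F} {α β : ℕ → k} {Z U : ℕ → F}
    (h : IsJumpTower v p D₁ D₂ α β Z U) (n : ℕ) : IsPowMulUnit k Z (U n) n p := by
  obtain ⟨G, hG, τ, -, σ, -, ε, -, hvG, -, -, -, hu, -⟩ := h.exists_units n
  refine ⟨G, hG, ne_zero_of_valuation_eq_one hvG, ?_, by rw [hu, zpow_natCast]⟩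
  exact (isCentered_pairLocal h.valuation_algebraMap (h.valuation_lt_one n)
    (h.valuation_lt_one (n + 1)) G hG).2 hvG

/-- A field of transcendence degree two with generators `x`, `y` carries a valuation with the
required properties. -/
theorem exists_valuation_not_isMonomialExtension {p : ℕ} (hp : p.Prime) [CharP F p]
    (hcard : 3 ≤ Cardinal.mk k) (htr : Algebra.trdeg k F = 2) {x y : F}
    (hgen : IntermediateField.adjoin k {x, y} = ⊤) {D₁ D₂ : Derivation k F F}
    (hJ : jacobian D₁ D₂ x y ≠ 0) {u w : F} (hu : u = x ^ p * (1 + y)) (hw : w = y ^ p + x) :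
    ∃ (ν : F → ℝ) (V : ValuationSubring F),
      (∀ a b, a ≠ 0 → b ≠ 0 → ν (a * b) = ν a + ν b) ∧
      (∀ a b, a ≠ 0 → b ≠ 0 → a + b ≠ 0 → min (ν a) (ν b) ≤ ν (a + b)) ∧
      (∀ c : k, c ≠ 0 → ν (algebraMap k F c) = 0) ∧ ν x = 1 ∧
      {r : ℝ | ∃ z, z ≠ 0 ∧ ν z = r} = {r | ∃ (m : ℤ) (j : ℕ), r = m / (p : ℝ) ^ j} ∧
      (∀ z, z ∈ V.toSubring ↔ z = 0 ∨ (z ≠ 0 ∧ 0 ≤ ν z)) ∧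
      IsValuationSubring V.toSubring ∧ Dominates V.toSubring (pairLocal k x y) ∧
      (∀ z ∈ V.toSubring, ∃ c : k, z - algebraMap k F c = 0 ∨
        (z - algebraMap k F c ≠ 0 ∧ 0 < ν (z - algebraMap k F c))) ∧
      ν u = p ∧
      {r : ℝ | ∃ z, z ∈ IntermediateField.adjoin k {u, w} ∧ z ≠ 0 ∧ ν z = r} =
        {r | ∃ (m : ℤ) (j : ℕ), r = m / (p : ℝ) ^ j} ∧
      ∀ A B : Subring F, IsAlgebraicLocalRingOf k (IntermediateField.adjoin k {u, w}) A →
        IsAlgebraicLocalRingOf k ⊤ B → Dominates V.toSubring B → Dominates B A →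
        pairLocal k u w ≤ A → pairLocal k x y ≤ B → ¬ IsMonomialExtension A B := by
  obtain ⟨α, g, κ, t, s, hc, hg, hκ, ht, hs⟩ := exists_isJumpCoeff hcard p
  obtain ⟨Z, rfl, rfl, hZ, hind⟩ :=
    exists_isQuadraticChain hp.one_lt hc.left_ne_zero htr.ge hgen
  have hfrac : ∀ f : F, ∃ P Q : MvPolynomial (Fin 2) k, aeval ![Z 0, Z 1] Q ≠ 0 ∧
      f * aeval ![Z 0, Z 1] Q = aeval ![Z 0, Z 1] P := fun f =>
    exists_aeval_of_mem_adjoin_pair (hgen ▸ IntermediateField.mem_top)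
  have hex := hZ.exists_isPowMulUnit hind hfrac
  obtain ⟨ν, hmul, hadd, hν⟩ := hZ.exists_additive_valuation hind hfrac
  have hlt := valuation_valuationSubringOfAdditive_lt_one_iff ν hmul hadd
  have hmem : ∀ z, z ∈ (valuationSubringOfAdditive ν hmul hadd).toSubring ↔
      z = 0 ∨ (z ≠ 0 ∧ 0 ≤ ν z) := fun _ => Iff.rfl
  generalize valuationSubringOfAdditive ν hmul hadd = V at hlt hmem
  have hp0 : (0 : ℝ) < p := by exact_mod_cast hp.pos
  have hνk : ∀ c : k, c ≠ 0 → ν (algebraMap k F c) = 0 := fun c hc0 => by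
    have hc0' : algebraMap k F c ≠ 0 := by simpa using hc0
    have := hν (algebraMap k F c) 0 0 ⟨algebraMap k F c, algebraMap_mem_pairLocal _ _ c, hc0',
      by rw [← map_inv₀]; exact algebraMap_mem_pairLocal _ _ c⁻¹, by simp⟩
    simpa using this
  have hνZ : ∀ n, ν (Z n) = 1 / (p : ℝ) ^ n := fun n => by
    have := hν _ _ _ (IsQuadraticChain.isPowMulUnit_pow (k := k) (Z := Z) n 1)
    simpa using this
  have hvZ : ∀ n, V.valuation (Z n) < 1 := fun n => by
    rw [hlt, hνZ]
    exact Or.inr ⟨hZ.ne_zero n, by positivity⟩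
  have hvk : ∀ c : k, c ≠ 0 → V.valuation (algebraMap k F c) = 1 := fun c hc0 => by
    have hc0' : algebraMap k F c ≠ 0 := by simpa using hc0
    refine le_antisymm ((V.valuation_le_one_iff _).2
      ((hmem _).2 (Or.inr ⟨hc0', (hνk c hc0).ge⟩))) (not_lt.1 fun h => ?_)
    rw [hlt, hνk c hc0] at h
    simp [hc0] at h
  have hu0 : u ≠ 0 := by
    rw [hu]
    exact mul_ne_zero (pow_ne_zero _ (hZ.ne_zero 0))
      (ne_zero_of_valuation_eq_one (valuation_add_eq_one (map_one _) (hvZ 1)))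
  have hform := isJumpForm_pow_mul_one_add (k := k) (p := p) (D₁ := D₁) (D₂ := D₂)
    (v := V.valuation) (Z 0) (Z 1)
  rw [← hu, ← hw] at hform
  obtain ⟨β, U, rfl, rfl, hT⟩ := hc.exists_isJumpTower hvk hp hZ hvZ hJ hu0
    (by rwa [hg, hκ, ht, hs])
  have hνU : ∀ n, ν (U n) = p / (p : ℝ) ^ n := fun n => by simpa using hν _ _ _ (hT.isPowMulUnit n)
  have hsub : ∀ z, z ≠ 0 → ∃ (m : ℤ) (j : ℕ), ν z = m / (p : ℝ) ^ j := fun z hz => by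
    obtain ⟨N, m, h⟩ := hex z hz
    exact ⟨m, N, hν _ _ _ h⟩
  have hzpow : ∀ (a : F) (m : ℤ), a ≠ 0 → ν (a ^ m) = m * ν a := by
    have hpow : ∀ (a : F) (n : ℕ), a ≠ 0 → ν (a ^ n) = n * ν a := by
      intro a n ha
      induction n with
      | zero => simpa using hνk 1 one_ne_zero
      | succ n ih =>
        rw [pow_succ, hmul _ _ (pow_ne_zero n ha) ha, ih]
        push_cast
        ring
    have hinv : ∀ a : F, a ≠ 0 → ν a⁻¹ = -ν a := by
      intro a ha
      have h1 := hνk 1 one_ne_zero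
      rw [map_one, ← mul_inv_cancel₀ ha, hmul _ _ ha (inv_ne_zero ha)] at h1
      linarith
    intro a m ha
    obtain ⟨n, rfl | rfl⟩ := m.eq_nat_or_neg
    · rw [zpow_natCast, hpow a n ha, Int.cast_natCast]
    · rw [zpow_neg, zpow_natCast, hinv _ (pow_ne_zero n ha), hpow a n ha]
      push_cast
      ring
  have hUK : ∀ n, U n ∈ IntermediateField.adjoin k {U 0, U 1} := by
    suffices ∀ n, U n ∈ IntermediateField.adjoin k {U 0, U 1} ∧
      U (n + 1) ∈ IntermediateField.adjoin k {U 0, U 1} from fun n => (this n).1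
    intro n
    induction n with
    | zero =>
      exact ⟨IntermediateField.subset_adjoin _ _ (by simp),
        IntermediateField.subset_adjoin _ _ (by simp)⟩
    | succ n ih =>
      refine ⟨ih.2, ?_⟩
      have := sub_mem (div_mem ih.1 (pow_mem ih.2 p))
        (algebraMap_mem (IntermediateField.adjoin k {U 0, U 1}) (β n))
      rwa [hT.base.div_pow_sub n] at this
  refine ⟨ν, V, hmul, hadd, hνk, by simpa using hνZ 0, ?_, hmem, ?_, ?_, ?_, by simpa using hνU 0,
    ?_, fun A B hA hB hVB hBA hUA hZB =>
      hT.not_isMonomialExtension htr hgen hA hB hVB hBA hUA hZB⟩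
  · ext r
    constructor
    · rintro ⟨z, hz, rfl⟩
      exact hsub z hz
    · rintro ⟨m, j, rfl⟩
      refine ⟨Z j ^ m, zpow_ne_zero _ (hZ.ne_zero j), ?_⟩
      rw [hzpow _ _ (hZ.ne_zero j), hνZ, mul_one_div]
  · refine ⟨fun htop => ?_, fun z _ => V.mem_or_inv_mem z⟩
    have h1 : (Z 0) ^ (-1 : ℤ) ∈ V.toSubring := htop ▸ Subring.mem_top _
    rw [hmem, hzpow _ _ (hZ.ne_zero 0), hνZ] at h1
    obtain h1 | ⟨-, h1⟩ := h1
    · exact zpow_ne_zero _ (hZ.ne_zero 0) h1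
    · norm_num at h1
  · exact (isCentered_pairLocal hvk (hvZ 0) (hvZ 1)).dominates
  · intro z hz
    obtain rfl | ⟨hz0, hνz⟩ := (hmem z).1 hz
    · exact ⟨0, by simp⟩
    obtain ⟨N, m, h⟩ := hex z hz0
    rw [hν _ _ _ h] at hνz
    obtain ⟨ε, hε, -, -, rfl⟩ := h
    have hm : 0 ≤ m := by
      by_contra! hm
      have hm' : (m : ℝ) < 0 := by exact_mod_cast hm
      exact absurd hνz (not_le.2 (div_neg_of_neg_of_pos hm' (by positivity)))
    lift m to ℕ using hm
    rw [zpow_natCast]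
    obtain ⟨c, h₁, hh₁, h₂, hh₂, e⟩ := exists_eq_algebraMap_add_of_mem_pairLocal hvk (hvZ N)
      (hvZ (N + 1)) (mul_mem (pow_mem (left_mem_pairLocal _ _) m) hε)
    have hcen := isCentered_pairLocal hvk (hvZ N) (hvZ (N + 1))
    refine ⟨c, (hlt _).1 ?_⟩
    rw [e, add_sub_cancel_left, mul_comm h₁, mul_comm h₂]
    exact valuation_mul_add_mul_lt_one (hvZ N) (hvZ (N + 1)) (hcen _ hh₁).1 (hcen _ hh₂).1
  · ext r
    constructor
    · rintro ⟨z, -, hz, rfl⟩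
      exact hsub z hz
    · rintro ⟨m, j, rfl⟩
      refine ⟨U (j + 1) ^ m, zpow_mem (hUK _) m, zpow_ne_zero _ (hT.base.ne_zero _), ?_⟩
      rw [hzpow _ _ (hT.base.ne_zero _), hνU, pow_succ]
      field_simp

end Main

/-- Let `k` be a field of characteristic `p > 0` with at
least 3 elements, `K* = k(x,y)`, `u = x^p(1+y)`, `v = y^p + x`,
`K = k(u,v)`, `B = k[x,y]_(x,y)`, `A = k[u,v]_(u,v)`.  Then there exists an
additive valuation `ν* : (K*)ˣ → ℝ`, trivial on `kˣ`, with `ν*(x) = 1`,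
value group `ℤ[1/p]`, whose valuation ring `V*` dominates `B` and has
residue field `k`, such that `ν*(u) = p`, `ν*(Kˣ) = ℤ[1/p]`, and there do
not exist regular algebraic local rings `A'` of `K` over `k` and `B'` of
`K*` over `k` with `V*` dominating `B'`, `B'` dominating `A'`, `A'`
dominating `A`, `B'` dominating `B`, and `A' → B'` a monomial extension. -/
theorem stmt2 (k : Type) [Field k] (p : ℕ) (hp : p.Prime) [CharP k p]
    (hcard : 3 ≤ Cardinal.mk k)
    (x y u v : FractionRing (MvPolynomial (Fin 2) k))
    (hx : x = algebraMap (MvPolynomial (Fin 2) k) _ (X 0))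
    (hy : y = algebraMap (MvPolynomial (Fin 2) k) _ (X 1))
    (huv : u = x ^ p * (1 + y)) (hvv : v = y ^ p + x)
    (K : IntermediateField k (FractionRing (MvPolynomial (Fin 2) k)))
    (hK : K = IntermediateField.adjoin k {u, v})
    (B : Subring (FractionRing (MvPolynomial (Fin 2) k)))
    (hB : B = localSubring
      (algebraMap (MvPolynomial (Fin 2) k) (FractionRing (MvPolynomial (Fin 2) k))))
    (A : Subring (FractionRing (MvPolynomial (Fin 2) k)))
    (hA : A = localSubring
      ((MvPolynomial.aeval ![u, v] :
        MvPolynomial (Fin 2) k →ₐ[k] FractionRing (MvPolynomial (Fin 2) k)).toRingHom)) :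
    ∃ (ν : FractionRing (MvPolynomial (Fin 2) k) → ℝ)
      (V : Subring (FractionRing (MvPolynomial (Fin 2) k))),
      -- `ν` is an additive valuation on `K*`:
      (∀ a b : FractionRing (MvPolynomial (Fin 2) k), a ≠ 0 → b ≠ 0 →
        ν (a * b) = ν a + ν b) ∧
      (∀ a b : FractionRing (MvPolynomial (Fin 2) k), a ≠ 0 → b ≠ 0 → a + b ≠ 0 →
        min (ν a) (ν b) ≤ ν (a + b)) ∧
      -- `ν` is trivial on `kˣ`:
      (∀ c : k, c ≠ 0 → ν (algebraMap k (FractionRing (MvPolynomial (Fin 2) k)) c) = 0) ∧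
      -- `ν(x) = 1`:
      ν x = 1 ∧
      -- the value group of `ν` is `ℤ[1/p]`:
      {r : ℝ | ∃ z : FractionRing (MvPolynomial (Fin 2) k), z ≠ 0 ∧ ν z = r}
        = {r : ℝ | ∃ (m : ℤ) (j : ℕ), r = (m : ℝ) / (p : ℝ) ^ j} ∧
      -- `V` is the valuation ring of `ν`:
      (∀ z : FractionRing (MvPolynomial (Fin 2) k),
        z ∈ V ↔ z = 0 ∨ (z ≠ 0 ∧ 0 ≤ ν z)) ∧
      IsValuationSubring V ∧
      -- `V` dominates `B`:
      Dominates V B ∧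
      -- the residue field of `V` is `k`:
      (∀ z ∈ V, ∃ c : k,
        z - algebraMap k (FractionRing (MvPolynomial (Fin 2) k)) c = 0 ∨
        (z - algebraMap k (FractionRing (MvPolynomial (Fin 2) k)) c ≠ 0 ∧
          0 < ν (z - algebraMap k (FractionRing (MvPolynomial (Fin 2) k)) c))) ∧
      -- the restriction of `ν` to `K` satisfies `ν(u) = p`:
      ν u = (p : ℝ) ∧
      -- the value group of the restriction of `ν` to `K` is `ℤ[1/p]`:
      {r : ℝ | ∃ z : FractionRing (MvPolynomial (Fin 2) k), z ∈ K ∧ z ≠ 0 ∧ ν z = r}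
        = {r : ℝ | ∃ (m : ℤ) (j : ℕ), r = (m : ℝ) / (p : ℝ) ^ j} ∧
      -- no (weak) local monomialization of `A → B` along `V`:
      ¬ ∃ A' B' : Subring (FractionRing (MvPolynomial (Fin 2) k)),
          IsAlgebraicLocalRingOf k K A' ∧
          IsAlgebraicLocalRingOf k
            (⊤ : IntermediateField k (FractionRing (MvPolynomial (Fin 2) k))) B' ∧
          (∃ m, IsRegularLocalOfDim A' m) ∧
          (∃ m, IsRegularLocalOfDim B' m) ∧
          Dominates V B' ∧ Dominates B' A' ∧
          Dominates A' A ∧ Dominates B' B ∧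
          IsMonomialExtension A' B' := by
  have htr := trdeg_fractionRing_mvPolynomial_fin_two (k := k)
  have haeval : (aeval ![x, y] : MvPolynomial (Fin 2) k →ₐ[k] _) =
      Algebra.algHom k (MvPolynomial (Fin 2) k) (FractionRing (MvPolynomial (Fin 2) k)) := by
    ext i
    fin_cases i <;> simp [hx, hy] <;> rfl
  have hgen : IntermediateField.adjoin k {x, y} = ⊤ := by
    have hmem : ∀ f : MvPolynomial (Fin 2) k,
        algebraMap _ _ f ∈ IntermediateField.adjoin k {x, y} := by
      intro f
      have hf : aeval ![x, y] f ∈ Algebra.adjoin k {x, y} := by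
        rw [show ({x, y} : Set _) = Set.range ![x, y] by simp [Matrix.range_cons, Set.pair_comm],
          Algebra.adjoin_range_eq_range_aeval]
        exact ⟨f, rfl⟩
      rw [haeval] at hf
      exact IntermediateField.algebra_adjoin_le_adjoin k _ hf
    refine eq_top_iff.2 fun z _ => ?_
    obtain ⟨a, b, -, rfl⟩ := IsFractionRing.div_surjective (A := MvPolynomial (Fin 2) k) z
    exact div_mem (hmem a) (hmem b)
  have hBxy : B = pairLocal k x y := by
    rw [hB, pairLocal, haeval]
    rfl
  have := charP_of_injective_algebraMap
    (algebraMap k (FractionRing (MvPolynomial (Fin 2) k))).injective p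
  obtain ⟨D₁, hD₁⟩ := exists_derivation_fractionRing (k := k) ![1, 0]
  obtain ⟨D₂, hD₂⟩ := exists_derivation_fractionRing (k := k) ![0, 1]
  have hJ : jacobian D₁ D₂ x y ≠ 0 := by
    simp [jacobian, hx, hy, hD₁, hD₂]
  obtain ⟨ν, V, h1, h2, h3, h4, h5, h6, h7, h8, h9, h10, h11, h12⟩ :=
    exists_valuation_not_isMonomialExtension hp hcard htr hgen hJ huv hvv
  rw [← hK] at h11 h12
  refine ⟨ν, V.toSubring, h1, h2, h3, h4, h5, h6, h7, hBxy ▸ h8, h9, h10, h11, ?_⟩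
  rintro ⟨A', B', hA', hB', -, -, hVB, hBA, hAA, hBB, hmon⟩
  rw [hA] at hAA
  rw [hBxy] at hBB
  exact h12 A' B' hA' hB' hVB hBA hAA.1 hBB.1 hmon
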